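/- There is an absolute constant c > 0 such that the following holds for every prime p. Let P be a finite set of points in F_p^2 with |P| ≤ p^{15/13}, let C be a finite set of irreducible cubic curves in F_p^2, let k ≥ 11 be an integer, and let S ⊆ P be a set of seven points. Then |C_{k,S}| ≤ c·( |P|^{11/4}/k^{15/4} + |P|/k ). -/

import Mathlib

/-!
Fix a set `S` of seven points on an irreducible cubic. Cubics vanishing on `S` form a space `W` of
dimension three (`finrank_cubicsThrough`). A point `x` of the plane gives the functional of evaluation
at `x` on `W`, that is, a point of the projective plane of the dual of `W`, and a cubic through `S`
gives a line of that plane, the incidence relation being preserved. By Bezout, at most two further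
points of an irreducible cubic share the same functional (`fiber_le_two`), since two different cubics
have at most nine points in common. Hence a `k`-rich cubic becomes a line with at least `(k - 6) / 2`
points (`rich_of_rich`), and the theorem follows from a bound for rich lines over `F_p`
(`rich_lines`): if `n` points, `n ^ 13 ≤ p ^ 15`, have `M` lines which are `k`-rich, then
`M k ≪ n` or `M ^ 4 k ^ 15 ≪ n ^ 11`. This is the point-line incidence bound of Stevens and de Zeeuw.

To prove `rich_lines`, points of very high degree are first removed by an induction
(`rich_lines_large`). Then there are two points `q₁`, `q₂` joined by lines of the family to many
points (`exists_projection_centers`). Sending `q₁` and `q₂` to infinity places these points in a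
Cartesian product `A × B` with small sides (`core_bound`), whose incidences with lines
`b = m a + c` are bounded in `cartesian`. There, Cauchy-Schwarz leads to counting coincidences
`m₁ a₂ + c₁ = m₂ a₁ + c₂`. Attaching to `(m, a, c)` the line `s ↦ (s, a - m s, c + m a - m² s)` in
three-space, such a coincidence says that the lines attached to `(m₁, a₁, c₁)` and `(m₂, a₂, c₂)` meet.

The number of meetings of two families of at most `n ^ 2` such lines, `n ≤ p`, is at most a constant
times `n ^ 3`, up to the trivial contribution of many lines with common transversals (`inc_bound`);
this is a form of Rudnev's theorem. Boundedly many surfaces of degree `≈ n` contain all lines of the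
first family (`exists_vanishing`). A line not contained in such a surface meets it in few points, so
it remains to count the meetings on an irreducible surface `f = 0` of degree `δ` (`component`). All
directions `(1, -m, -m²)` lie on one conic. Therefore, at a common point of two lines of the surface,
the second fundamental form is proportional to the quadratic form of this conic, which is expressed
by the vanishing of two polynomials `conf1 f` and `conf2 f`. If these do not vanish on the whole
surface, the meetings lie on a curve, and Bezout (`bezout_lines`) leaves only `O(δ²)` exceptional
lines, handled by induction. Otherwise every point of the surface is umbilic with respect to this
form, and, as for umbilic surfaces in Euclidean space, the osculating sphere (a quadric) is constant
along lines with many meetings (`osc_stationary`, `rich_line`). So, unless meetings are rare, the surface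
is part of a quadric, where meetings are counted directly (`inc_quadric`). The condition that `p` is
large compared with the degrees enters through derivatives and Wronskians.
-/

open scoped Classical

noncomputable section

def zeroSet {p : ℕ} (f : MvPolynomial (Fin 2) (ZMod p)) : Set (Fin 2 → ZMod p) :=
  {x | MvPolynomial.eval x f = 0}

def IsIrredCubic {p : ℕ} (γ : Set (Fin 2 → ZMod p)) : Prop :=
  ∃ f : MvPolynomial (Fin 2) (ZMod p), Irreducible f ∧ f.totalDegree = 3 ∧ γ = zeroSet f

/-- `C_k`: the set of `k`-rich curves of `C`. -/
def richCurves {p : ℕ} (P : Finset (Fin 2 → ZMod p)) (C : Finset (Set (Fin 2 → ZMod p)))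
    (k : ℕ) : Finset (Set (Fin 2 → ZMod p)) :=
  C.filter fun γ => k ≤ (P.filter fun q => q ∈ γ).card ∧ (P.filter fun q => q ∈ γ).card < 2 * k

/-- `C_{k,S}`: the set of `k`-rich curves of `C` passing through every point of `S`. -/
def richCurvesThrough {p : ℕ} (P : Finset (Fin 2 → ZMod p)) (C : Finset (Set (Fin 2 → ZMod p)))
    (k : ℕ) (S : Finset (Fin 2 → ZMod p)) : Finset (Set (Fin 2 → ZMod p)) :=
  (richCurves P C k).filter fun γ => ∀ q ∈ S, q ∈ γ

open MvPolynomial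

/-! ### Dimension of spaces of polynomials, and Bezout bounds -/

theorem finrank_restrictTotalDegree {K : Type*} [Field K] (n D : ℕ) :
    Module.finrank K (restrictTotalDegree (Fin n) K D) = (D + n).choose n := by
  have hb := Module.finrank_eq_nat_card_basis
    (basisRestrictSupport K {m : Fin n →₀ ℕ | (m.sum fun _ e => e) ≤ D})
  have h1 : Module.finrank K (restrictTotalDegree (Fin n) K D)
      = Nat.card {m : Fin n →₀ ℕ | (m.sum fun _ e => e) ≤ D} := hb
  rw [h1]
  -- homogenise: exponents of degree `≤ D` in `n` variables are exponents of degree `D` in `n + 1`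
  have h2 := Finset.card_finsuppAntidiag_nat_eq_choose (s := (Finset.univ : Finset (Fin (n+1)))) D
  have h3 : (D + n).choose n = (Finset.card (Finset.univ : Finset (Fin (n+1))) + D - 1).choose D := by
    rw [Finset.card_univ, Fintype.card_fin, show n + 1 + D - 1 = D + n by omega]
    exact (Nat.choose_symm_add).symm
  rw [h3, ← h2, ← Nat.card_eq_finsetCard]
  refine Nat.card_congr ⟨fun m => ⟨Finsupp.cons (D - m.1.sum fun _ e => e) m.1, ?_⟩,
    fun m => ⟨Finsupp.tail m.1, ?_⟩, ?_, ?_⟩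
  · have := m.2
    rw [Set.mem_ofPred_eq, Finsupp.sum_fintype _ _ (by simp)] at this
    rw [Finset.mem_finsuppAntidiag]
    refine ⟨?_, by simp⟩
    rw [Fin.sum_univ_succ, Finsupp.sum_fintype _ _ (by simp)]
    simp only [Finsupp.cons_zero, Finsupp.cons_succ]
    omega
  · have := m.2
    rw [Finset.mem_finsuppAntidiag, Fin.sum_univ_succ] at this
    rw [Set.mem_ofPred_eq, Finsupp.sum_fintype _ _ (by simp)]
    simp only [Finsupp.tail_apply]
    omega
  · intro m
    simp
  · intro m
    have := m.2
    rw [Finset.mem_finsuppAntidiag, Fin.sum_univ_succ] at this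
    ext i
    change (Finsupp.cons (D - (Finsupp.tail m.1).sum fun _ e => e) (Finsupp.tail m.1)) i = m.1 i
    rw [Finsupp.sum_fintype _ _ (by simp)]
    simp only [Finsupp.tail_apply]
    refine Fin.cases ?_ (fun i => ?_) i
    · simp only [Finsupp.cons_zero]; omega
    · rw [Finsupp.cons_succ]; rfl

/-- The dimension count behind Bezout: the multiples of `f` and of `g` overlap only in the multiples
of `f * g`, so a space `W` of polynomials meeting the ideal `(f, g)` trivially is small. -/
theorem bezout_dimension {K : Type*} [Field K] {n : ℕ} {f g : MvPolynomial (Fin n) K}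
    (hf : Prime f) (hfg : ¬ f ∣ g) {e D : ℕ} (hg : g.totalDegree ≤ e) (hD : f.totalDegree + e ≤ D)
    {ι : Type*} [Fintype ι] (ψ : (ι → K) →ₗ[K] MvPolynomial (Fin n) K)
    (hψD : ∀ c, (ψ c).totalDegree ≤ D)
    (hψ : ∀ c a b, ψ c = a * f + b * g → c = 0) :
    (D - f.totalDegree + n).choose n + (D - e + n).choose n + Fintype.card ι
      ≤ (D + n).choose n + (D - f.totalDegree - e + n).choose n := by
  set δ := f.totalDegree with hδ
  have hg0 : g ≠ 0 := fun h => hfg (h ▸ dvd_zero f)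
  let V : ℕ → Submodule K (MvPolynomial (Fin n) K) := restrictTotalDegree (Fin n) K
  let Φ₀ : (V (D - δ) × V (D - e)) × (ι → K) →ₗ[K] MvPolynomial (Fin n) K :=
    LinearMap.coprod (LinearMap.coprod
      ((LinearMap.mulRight K f).comp (V (D - δ)).subtype)
      ((LinearMap.mulRight K g).comp (V (D - e)).subtype)) ψ
  have hΦ₀ : ∀ z, Φ₀ z = z.1.1.1 * f + z.1.2.1 * g + ψ z.2 := fun z => by
    simp [Φ₀]
  let Φ : (V (D - δ) × V (D - e)) × (ι → K) →ₗ[K] V D := Φ₀.codRestrict (V D) (by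
    intro z
    rw [hΦ₀, mem_restrictTotalDegree]
    have h1 := (mem_restrictTotalDegree _ _ _).1 z.1.1.2
    have h2 := (mem_restrictTotalDegree _ _ _).1 z.1.2.2
    refine (totalDegree_add _ _).trans (max_le ((totalDegree_add _ _).trans (max_le ?_ ?_)) (hψD _))
    · refine (totalDegree_mul _ _).trans ?_
      omega
    · refine (totalDegree_mul _ _).trans ?_
      omega)
  -- the kernel injects into the cofactors `c` of `(−c g, c f)`
  have hker : ∀ z : LinearMap.ker Φ, z.1.2 = 0 ∧ ∃ c : V (D - δ - e), z.1.1.2.1 = f * c.1 := by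
    intro z
    have hz : z.1.1.1.1 * f + z.1.1.2.1 * g + ψ z.1.2 = 0 := by
      rw [← hΦ₀]; exact congrArg Subtype.val (LinearMap.mem_ker.1 z.2)
    have hc : z.1.2 = 0 := hψ _ (-z.1.1.1.1) (-z.1.1.2.1) (by linear_combination hz)
    refine ⟨hc, ?_⟩
    rw [hc, map_zero, add_zero] at hz
    have : f ∣ z.1.1.2.1 * g := ⟨-z.1.1.1.1, by linear_combination hz⟩
    obtain ⟨c, hc⟩ := (hf.dvd_or_dvd this).resolve_right hfg
    refine ⟨⟨c, ?_⟩, hc⟩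
    rw [mem_restrictTotalDegree]
    by_cases h0 : c = 0
    · simp [h0]
    have h2 := (mem_restrictTotalDegree _ _ _).1 z.1.1.2.2
    rw [hc, totalDegree_mul_of_isDomain hf.ne_zero h0] at h2
    omega
  have hkdim : Module.finrank K (LinearMap.ker Φ) ≤ Module.finrank K (V (D - δ - e)) := by
    let m : V (D - δ - e) →ₗ[K] MvPolynomial (Fin n) K :=
      (LinearMap.mulLeft K f).comp (V (D - δ - e)).subtype
    let q : LinearMap.ker Φ →ₗ[K] MvPolynomial (Fin n) K :=
      (V (D - e)).subtype.comp ((LinearMap.snd K _ _).comp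
        ((LinearMap.fst K _ _).comp (LinearMap.ker Φ).subtype))
    have hq : Function.Injective q := by
      intro z z' hzz
      have hz' : z.1.1.2.1 = z'.1.1.2.1 := hzz
      have h1 := (hker z).1
      have h1' := (hker z').1
      have h2 : z.1.1.1.1 * f + z.1.1.2.1 * g + ψ z.1.2 = 0 := by
        rw [← hΦ₀]; exact congrArg Subtype.val (LinearMap.mem_ker.1 z.2)
      have h2' : z'.1.1.1.1 * f + z'.1.1.2.1 * g + ψ z'.1.2 = 0 := by
        rw [← hΦ₀]; exact congrArg Subtype.val (LinearMap.mem_ker.1 z'.2)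
      rw [hz', h1, ← h2', h1'] at h2
      have h3 : z.1.1.1.1 = z'.1.1.1.1 :=
        mul_right_cancel₀ hf.ne_zero (by linear_combination h2)
      apply Subtype.ext
      exact Prod.ext (Prod.ext (Subtype.ext h3) (Subtype.ext hz')) (h1.trans h1'.symm)
    have hle : LinearMap.range q ≤ LinearMap.range m := by
      rintro _ ⟨z, rfl⟩
      obtain ⟨c, hc⟩ := (hker z).2
      exact ⟨c, hc.symm⟩
    calc Module.finrank K (LinearMap.ker Φ) = Module.finrank K (LinearMap.range q) :=
          (LinearMap.finrank_range_of_inj hq).symm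
      _ ≤ Module.finrank K (LinearMap.range m) := Submodule.finrank_mono hle
      _ ≤ _ := LinearMap.finrank_range_le m
  have hrn := LinearMap.finrank_range_add_finrank_ker Φ
  have hr := Submodule.finrank_le (LinearMap.range Φ)
  rw [Module.finrank_prod, Module.finrank_prod, Module.finrank_fintype_fun_eq_card] at hrn
  simp only [V, finrank_restrictTotalDegree] at hrn hr hkdim
  omega

theorem two_mul_choose_add_two (n : ℕ) : 2 * (n + 2).choose 2 = (n + 2) * (n + 1) := by
  induction n with
  | zero => rfl
  | succ n ih =>
    rw [show n + 1 + 2 = (n + 2) + 1 by ring, Nat.choose_succ_succ' (n + 2) 1, Nat.choose_one_right]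
    linarith

theorem six_mul_choose_add_three (n : ℕ) :
    6 * (n + 3).choose 3 = (n + 3) * (n + 2) * (n + 1) := by
  induction n with
  | zero => rfl
  | succ n ih =>
    have h := two_mul_choose_add_two (n + 1)
    rw [show n + 1 + 2 = n + 3 by ring] at h
    rw [show n + 1 + 3 = (n + 3) + 1 by ring, Nat.choose_succ_succ' (n + 3) 2]
    linarith

/-- Bezout's inequality in the plane. -/
theorem bezout_plane {K : Type*} [Field K] {f g : MvPolynomial (Fin 2) K}
    (hf : Prime f) (hfg : ¬ f ∣ g) {e : ℕ} (hg : g.totalDegree ≤ e) (T : Finset (Fin 2 → K))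
    (hTf : ∀ t ∈ T, eval t f = 0) (hTg : ∀ t ∈ T, eval t g = 0) :
    T.card ≤ f.totalDegree * e := by
  have hsep : ∀ s t : T, ∃ i : Fin 2, s ≠ t → s.1 i ≠ t.1 i := by
    intro s t
    by_cases h : s = t
    · exact ⟨0, fun h' => (h' h).elim⟩
    · obtain ⟨i, hi⟩ := Function.ne_iff.1 (fun h' => h (Subtype.ext h'))
      exact ⟨i, fun _ => hi⟩
  choose idx hidx using hsep
  let B : T → MvPolynomial (Fin 2) K := fun t =>
    ∏ s ∈ Finset.univ.erase t, (X (idx s t) - C (s.1 (idx s t)))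
  have hBself : ∀ t, eval t.1 (B t) ≠ 0 := by
    intro t
    simp only [B, map_prod, Finset.prod_ne_zero_iff]
    intro s hs
    have := hidx s t (Finset.ne_of_mem_erase hs)
    simpa [sub_eq_zero] using this.symm
  have hBother : ∀ s t, s ≠ t → eval s.1 (B t) = 0 := by
    intro s t hst
    simp only [B, map_prod]
    refine Finset.prod_eq_zero (i := s) (by simp [hst]) (by simp)
  have hBdeg : ∀ t, (B t).totalDegree ≤ T.card := by
    intro t
    refine (totalDegree_finsetProd _ _).trans ?_
    refine (Finset.sum_le_card_nsmul _ _ 1 fun s _ => ?_).trans ?_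
    · refine (totalDegree_sub_C_le _ _).trans (totalDegree_X _).le
    · simp only [smul_eq_mul, mul_one]
      exact (Finset.card_le_univ _).trans (by simp)
  let ψ : (T → K) →ₗ[K] MvPolynomial (Fin 2) K := Fintype.linearCombination K B
  have hψ0 : ∀ c, ψ c = ∑ t, c t • B t := fun c => rfl
  have key := bezout_dimension hf hfg hg (D := f.totalDegree + e + T.card) (by omega) ψ
    (fun c => by
      rw [hψ0]
      refine totalDegree_finsetSum_le fun t _ => (totalDegree_smul_le _ _).trans ?_
      have := hBdeg t; omega)
    (fun c a b h => by
      funext t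
      have h1 := congrArg (eval t.1) h
      rw [map_add, map_mul, map_mul, hTf _ t.2, hTg _ t.2, mul_zero, mul_zero, add_zero, hψ0,
        map_sum, Finset.sum_eq_single t] at h1
      · rw [smul_eval] at h1
        exact (mul_eq_zero.1 h1).resolve_right (hBself t)
      · intro s _ hst
        rw [smul_eval, hBother _ _ hst.symm, mul_zero]
      · simp)
  set δ := f.totalDegree
  set N := T.card
  rw [show δ + e + N - δ = e + N by omega, show δ + e + N - e = δ + N by omega,
    show e + N - e = N by omega, Fintype.card_coe] at key
  have h1 := two_mul_choose_add_two (e + N)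
  have h2 := two_mul_choose_add_two (δ + N)
  have h3 := two_mul_choose_add_two (δ + e + N)
  have h4 := two_mul_choose_add_two N
  nlinarith

/-! ### A three-parameter family of lines in space -/

/-- Restriction of a polynomial to the line attached to `x = (m, a, c)`, which is parametrised by
`s ↦ (s, a - m s, c + m a - m² s)`. -/
def res {K : Type*} [Field K] (x : K × K × K) : MvPolynomial (Fin 3) K →ₐ[K] Polynomial K :=
  aeval ![Polynomial.X, Polynomial.C x.2.1 - Polynomial.C x.1 * Polynomial.X,
    Polynomial.C (x.2.2 + x.1 * x.2.1) - Polynomial.C (x.1 ^ 2) * Polynomial.X]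

/-- The point with parameter `s` on the line attached to `x`. -/
def pt {K : Type*} [Field K] (x : K × K × K) (s : K) : Fin 3 → K :=
  ![s, x.2.1 - x.1 * s, x.2.2 + x.1 * x.2.1 - x.1 ^ 2 * s]

theorem eval_res {K : Type*} [Field K] (x : K × K × K) (f : MvPolynomial (Fin 3) K) (s : K) :
    (res x f).eval s = eval (pt x s) f := by
  induction f using MvPolynomial.induction_on with
  | C a => simp [res, algHom_C]
  | add f g hf hg => simp [hf, hg]
  | mul_X f i hf =>
    rw [map_mul, Polynomial.eval_mul, hf, map_mul, eval_X]
    congr 1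
    fin_cases i <;> simp [res, pt]

theorem natDegree_res_le {K : Type*} [Field K] (x : K × K × K) (f : MvPolynomial (Fin 3) K) :
    (res x f).natDegree ≤ f.totalDegree := by
  have := MvPolynomial.aeval_natDegree_le (R := K) f (le_refl _)
    (![Polynomial.X, Polynomial.C x.2.1 - Polynomial.C x.1 * Polynomial.X,
    Polynomial.C (x.2.2 + x.1 * x.2.1) - Polynomial.C (x.1 ^ 2) * Polynomial.X]) (n := 1) (by
      intro i
      fin_cases i
      · simp
      · simp only [Fin.mk_one, Matrix.cons_val_one, Matrix.cons_val_zero]; compute_degree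
      · simp only [Fin.reduceFinMk, Matrix.cons_val]; compute_degree)
  simpa [res] using this

/-- Distinct lines are separated by a linear form. -/
theorem exists_linear_separator {K : Type*} [Field K] {x y : K × K × K} (h : x ≠ y) :
    ∃ L : MvPolynomial (Fin 3) K, L.totalDegree ≤ 1 ∧ res x L = 0 ∧ res y L ≠ 0 := by
  have hdeg : ∀ (i : Fin 3) (u v : K),
      (X i - C u + C v * X 0 : MvPolynomial (Fin 3) K).totalDegree ≤ 1 := by
    intro i u v
    refine (totalDegree_add _ _).trans (max_le
      ((totalDegree_sub_C_le _ _).trans (totalDegree_X _).le) ((totalDegree_mul _ _).trans ?_))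
    simp
  obtain ⟨m, a, c⟩ := x
  obtain ⟨m', a', c'⟩ := y
  by_cases h1 : m = m' ∧ a = a'
  · obtain ⟨rfl, rfl⟩ := h1
    refine ⟨X 2 - C (c + m * a) + C (m ^ 2) * X 0, hdeg _ _ _, ?_, fun h0 => h ?_⟩
    · simp [res, algHom_C]
    · have := congrArg (Polynomial.eval 0) h0
      simp [res, algHom_C, sub_eq_zero] at this
      simp [this]
  · refine ⟨X 1 - C a + C m * X 0, hdeg _ _ _, ?_, fun h0 => h1 ?_⟩
    · simp [res, algHom_C]
    · have e0 := congrArg (Polynomial.eval 0) h0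
      have e1 := congrArg (Polynomial.eval 1) h0
      simp [res, algHom_C, sub_eq_zero] at e0 e1
      subst e0
      refine ⟨by linear_combination e1, rfl⟩

/-- Bezout's inequality for the lines common to two surfaces. -/
theorem bezout_lines {K : Type*} [Field K] {f g : MvPolynomial (Fin 3) K}
    (hf : Prime f) (hfg : ¬ f ∣ g) {e : ℕ} (hg : g.totalDegree ≤ e) (T : Finset (K × K × K))
    (hTf : ∀ t ∈ T, res t f = 0) (hTg : ∀ t ∈ T, res t g = 0) :
    T.card ≤ f.totalDegree * e := by
  have hsep : ∀ s t : T, ∃ L : MvPolynomial (Fin 3) K, L.totalDegree ≤ 1 ∧ 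
      (s ≠ t → res s.1 L = 0 ∧ res t.1 L ≠ 0) := by
    intro s t
    by_cases h : s = t
    · exact ⟨0, by simp, fun h' => (h' h).elim⟩
    · obtain ⟨L, h1, h2, h3⟩ := exists_linear_separator (fun h' => h (Subtype.ext h'))
      exact ⟨L, h1, fun _ => ⟨h2, h3⟩⟩
  choose L hL1 hL2 using hsep
  let B : T → MvPolynomial (Fin 3) K := fun t => ∏ s ∈ Finset.univ.erase t, L s t
  have hBself : ∀ t, res t.1 (B t) ≠ 0 := by
    intro t
    simp only [B, map_prod, Finset.prod_ne_zero_iff]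
    intro s hs
    exact (hL2 s t (Finset.ne_of_mem_erase hs)).2
  have hBother : ∀ s t, s ≠ t → res s.1 (B t) = 0 := by
    intro s t hst
    simp only [B, map_prod]
    exact Finset.prod_eq_zero (i := s) (by simp [hst]) (hL2 s t hst).1
  set N := T.card with hN
  set δ := f.totalDegree with hδ
  have hBdeg : ∀ t, (B t).totalDegree ≤ N - 1 := by
    intro t
    refine (totalDegree_finsetProd _ _).trans ?_
    refine (Finset.sum_le_card_nsmul _ _ 1 fun s _ => hL1 s t).trans ?_
    simp [hN]
  by_contra hlt
  push Not at hlt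
  set R := N * N + δ + e with hR
  let ψ : (T × Fin (R + 1) → K) →ₗ[K] MvPolynomial (Fin 3) K :=
    Fintype.linearCombination K (fun i : T × Fin (R + 1) => X 0 ^ (i.2 : ℕ) * B i.1)
  have hψ0 : ∀ c, ψ c = ∑ t, ∑ k, c (t, k) • (X 0 ^ (k : ℕ) * B t) := fun c => by
    rw [← Fintype.sum_prod_type']; rfl
  have key := bezout_dimension hf hfg hg (D := R + N - 1) (by omega) ψ
    (fun c => by
      rw [hψ0]
      refine totalDegree_finsetSum_le fun t _ => totalDegree_finsetSum_le fun k _ =>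
        (totalDegree_smul_le _ _).trans ((totalDegree_mul _ _).trans ?_)
      have := hBdeg t
      have hk := k.2
      rw [totalDegree_X_pow]
      omega)
    (fun c a b h => by
      funext ⟨t, k⟩
      have h1 := congrArg (res t.1) h
      rw [map_add, map_mul, map_mul, hTf _ t.2, hTg _ t.2, mul_zero, mul_zero, add_zero, hψ0,
        map_sum, Finset.sum_eq_single t] at h1
      · have h2 : res t.1 (∑ k, c (t, k) • (X 0 ^ (k : ℕ) * B t))
            = (∑ k, Polynomial.C (c (t, k)) * Polynomial.X ^ (k : ℕ)) * res t.1 (B t) := by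
          rw [map_sum, Finset.sum_mul]
          refine Finset.sum_congr rfl fun j _ => ?_
          rw [map_smul, map_mul, map_pow, Polynomial.smul_eq_C_mul, mul_assoc]
          simp [res]
        rw [h2] at h1
        have h3 := (mul_eq_zero.1 h1).resolve_right (hBself t)
        have h4 := congrArg (fun q => Polynomial.coeff q (k : ℕ)) h3
        simpa [Polynomial.finsetSum_coeff, Polynomial.coeff_X_pow, Fin.val_inj] using h4
      · intro s _ hst
        rw [map_sum]
        refine Finset.sum_eq_zero fun k _ => ?_
        rw [map_smul, map_mul, hBother _ _ hst.symm, mul_zero, smul_zero]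
      · simp)
  obtain ⟨y, hy⟩ : ∃ y, R + N - 1 = δ + e + y := ⟨R + N - 1 - δ - e, by omega⟩
  rw [Fintype.card_prod, Fintype.card_coe, Fintype.card_fin, hy] at key
  rw [show δ + e + y - δ = e + y by omega, show δ + e + y - e = δ + y by omega,
    show e + y - e = y by omega] at key
  have h1 := six_mul_choose_add_three (e + y)
  have h2 := six_mul_choose_add_three (δ + y)
  have h3 := six_mul_choose_add_three (δ + e + y)
  have h4 := six_mul_choose_add_three y
  have hN1 : 1 ≤ N := by omega
  have hRy : δ + e + y + 1 = R + N := by omega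
  have h5 : 2 * (N * (R + 1)) ≤ δ * e * (2 * y + δ + e + 4) := by nlinarith
  have h6 : δ * e * (2 * y + δ + e + 4) ≤ δ * e * (2 * (R + N + 1)) :=
    Nat.mul_le_mul_left _ (by omega)
  have h7 : (δ * e + 1) * (R + 1) ≤ N * (R + 1) := Nat.mul_le_mul_right _ hlt
  have h8 : δ * e * N ≤ N * N := Nat.mul_le_mul_right _ hlt.le
  nlinarith

/-- A small set of lines lies on a surface of small degree. -/
theorem exists_vanishing {K : Type*} [Field K] (T : Finset (K × K × K)) (d : ℕ)
    (h : T.card * 6 < (d + 1) ^ 2) :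
    ∃ f : MvPolynomial (Fin 3) K, f ≠ 0 ∧ f.totalDegree ≤ d ∧ ∀ t ∈ T, res t f = 0 := by
  let Φ₀ : MvPolynomial (Fin 3) K →ₗ[K] (T × Fin (d + 1) → K) :=
    LinearMap.pi fun i => (Polynomial.lcoeff K (i.2 : ℕ)).comp (res i.1.1).toLinearMap
  let Φ := Φ₀.comp (restrictTotalDegree (Fin 3) K d).subtype
  have hker : LinearMap.ker Φ ≠ ⊥ := by
    have hfin : Module.finrank K (restrictTotalDegree (Fin 3) K d) = (d + 3).choose 3 :=
      finrank_restrictTotalDegree 3 d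
    have h6 := six_mul_choose_add_three d
    have : FiniteDimensional K (restrictTotalDegree (Fin 3) K d) :=
      Module.finite_of_finrank_pos (by
        rw [hfin]; exact Nat.choose_pos (by omega))
    apply LinearMap.ker_ne_bot_of_finrank_lt
    rw [hfin, Module.finrank_fintype_fun_eq_card, Fintype.card_prod, Fintype.card_coe,
      Fintype.card_fin]
    nlinarith
  obtain ⟨z, hz, hz0⟩ := (Submodule.ne_bot_iff _).1 hker
  refine ⟨z.1, fun h => hz0 (Subtype.ext h), (mem_restrictTotalDegree _ _ _).1 z.2, ?_⟩
  intro t ht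
  ext k
  rw [Polynomial.coeff_zero]
  by_cases hk : k < d + 1
  · exact congrFun (LinearMap.mem_ker.1 hz) (⟨t, ht⟩, ⟨k, hk⟩)
  · apply Polynomial.coeff_eq_zero_of_natDegree_lt
    have := natDegree_res_le t z.1
    have := (mem_restrictTotalDegree _ _ _).1 z.2
    omega

/-! ### Partial derivatives -/

theorem pderiv_comm' {K : Type*} [Field K] {n : ℕ} (i j : Fin n) (f : MvPolynomial (Fin n) K) :
    pderiv i (pderiv j f) = pderiv j (pderiv i f) := by
  ext m
  rw [coeff_pderiv, coeff_pderiv, coeff_pderiv, coeff_pderiv, add_right_comm]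
  by_cases h : i = j
  · subst h; rfl
  · simp [h, Ne.symm h]
    ring

theorem totalDegree_pderiv_le' {K : Type*} [Field K] {n : ℕ} (i : Fin n)
    (f : MvPolynomial (Fin n) K) : (pderiv i f).totalDegree ≤ f.totalDegree - 1 := by
  refine Finset.sup_le fun m hm => ?_
  rw [mem_support_iff, coeff_pderiv] at hm
  have h1 : m + Finsupp.single i 1 ∈ f.support := mem_support_iff.2 (left_ne_zero_of_mul hm)
  have h2 := le_totalDegree h1
  rw [Finsupp.sum_add_index' (by simp) (by simp), Finsupp.sum_single_index rfl] at h2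
  omega

theorem exists_pderiv_ne_zero {K : Type*} [Field K] {n p : ℕ} [CharP K p]
    (f : MvPolynomial (Fin n) K) (h0 : 0 < f.totalDegree) (hp : f.totalDegree < p) :
    ∃ i, pderiv i f ≠ 0 := by
  have hf : f.support.Nonempty := by
    rw [support_nonempty]; rintro rfl; simp at h0
  obtain ⟨m, hm, hmd⟩ := Finset.exists_mem_eq_sup f.support hf (fun s => s.sum fun _ e => e)
  change f.totalDegree = _ at hmd
  rw [Finsupp.sum_fintype _ _ (by simp)] at hmd
  obtain ⟨i, hi⟩ : ∃ i, m i ≠ 0 := by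
    by_contra h
    push Not at h
    simp [h] at hmd
    omega
  refine ⟨i, fun h => ?_⟩
  have h1 := congrArg (coeff (m - Finsupp.single i 1)) h
  have hle : Finsupp.single i 1 ≤ m := by
    rw [Finsupp.single_le_iff]; omega
  rw [coeff_pderiv, tsub_add_cancel_of_le hle, coeff_zero] at h1
  have h2 := (mul_eq_zero.1 h1).resolve_left (mem_support_iff.1 hm)
  have h3 : ((m i : ℕ) : K) = 0 := by
    have : m i = (m i - 1) + 1 := by omega
    rw [this]; simpa using h2
  rw [CharP.cast_eq_zero_iff K p] at h3
  have h4 := Nat.le_of_dvd (by omega) h3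
  have h5 : m i ≤ ∑ i, m i := Finset.single_le_sum (f := fun i => m i) (by simp) (Finset.mem_univ i)
  omega

/-- The directional derivative along `(1, -m, -m²)`. -/
def dirD {K : Type*} [Field K] (m : K) :
    Derivation K (MvPolynomial (Fin 3) K) (MvPolynomial (Fin 3) K) :=
  pderiv 0 - m • pderiv 1 - m ^ 2 • pderiv 2

theorem dirD_apply {K : Type*} [Field K] (m : K) (f : MvPolynomial (Fin 3) K) :
    dirD m f = pderiv 0 f - m • pderiv 1 f - m ^ 2 • pderiv 2 f := rfl

theorem derivative_res {K : Type*} [Field K] (x : K × K × K) (f : MvPolynomial (Fin 3) K) :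
    Polynomial.derivative (res x f) = res x (dirD x.1 f) := by
  induction f using MvPolynomial.induction_on with
  | C a => simp [res, algHom_C]
  | add f g hf hg => simp [hf, hg]
  | mul_X f i hf =>
    rw [map_mul, Polynomial.derivative_mul, hf, Derivation.leibniz, map_add, smul_eq_mul,
      smul_eq_mul, map_mul, map_mul, mul_comm (res x (X i)), add_comm]
    congr 2
    fin_cases i
    · simp [res, dirD_apply, pderiv_X]
    · simp [res, dirD_apply, pderiv_X, Polynomial.smul_eq_C_mul]
    · simp [res, dirD_apply, pderiv_X, Polynomial.smul_eq_C_mul]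
      rw [← Polynomial.C_pow, Polynomial.derivative_C]

theorem natDegree_eq_of_wronskian {K : Type*} [Field K] {p : ℕ} [CharP K p] {A B : Polynomial K}
    (hA : A.natDegree < p) (hB : B.natDegree < p) (hA0 : A ≠ 0) (hB0 : B ≠ 0)
    (h : A * Polynomial.derivative B = Polynomial.derivative A * B) :
    A.natDegree = B.natDegree := by
  have hX : ∀ Q : Polynomial K, (Polynomial.X * Polynomial.derivative Q).natDegree ≤ Q.natDegree ∧
      (Polynomial.X * Polynomial.derivative Q).coeff Q.natDegree
        = Q.natDegree * Q.leadingCoeff := by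
    intro Q
    rcases Nat.eq_zero_or_pos Q.natDegree with h0 | h0
    · rw [Polynomial.natDegree_eq_zero] at h0
      obtain ⟨c, rfl⟩ := h0
      simp
    · constructor
      · refine Polynomial.natDegree_mul_le.trans ?_
        have := Polynomial.natDegree_derivative_le Q
        have := Polynomial.natDegree_X_le (R := K)
        omega
      · obtain ⟨k, hk⟩ := Nat.exists_eq_succ_of_ne_zero h0.ne'
        rw [Polynomial.leadingCoeff, hk, Nat.succ_eq_add_one, Polynomial.coeff_X_mul,
          Polynomial.coeff_derivative]
        push_cast; ring
  have h1 : A * (Polynomial.X * Polynomial.derivative B)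
      = (Polynomial.X * Polynomial.derivative A) * B := by linear_combination Polynomial.X * h
  have h2 := congrArg (fun Q => Polynomial.coeff Q (A.natDegree + B.natDegree)) h1
  rw [Polynomial.coeff_mul_add_eq_of_natDegree_le le_rfl (hX B).1,
    Polynomial.coeff_mul_add_eq_of_natDegree_le (hX A).1 le_rfl, (hX A).2, (hX B).2] at h2
  have hla : A.leadingCoeff ≠ 0 := Polynomial.leadingCoeff_ne_zero.2 hA0
  have hlb : B.leadingCoeff ≠ 0 := Polynomial.leadingCoeff_ne_zero.2 hB0
  have h3 : (A.natDegree : K) = B.natDegree := by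
    have : A.leadingCoeff * B.leadingCoeff * ((A.natDegree : K) - B.natDegree) = 0 := by
      simp only [Polynomial.coeff_natDegree] at h2
      linear_combination -h2
    rcases mul_eq_zero.1 this with h | h
    · exact (mul_ne_zero hla hlb h).elim
    · exact sub_eq_zero.1 h
  exact Nat.ModEq.eq_of_lt_of_lt ((CharP.natCast_eq_natCast K p).1 h3) hA hB

/-- Polynomials with vanishing Wronskian are proportional when the characteristic exceeds the
degrees. -/
theorem proportional_of_wronskian {K : Type*} [Field K] {p : ℕ} [CharP K p] {A B : Polynomial K}
    (hA : A.natDegree < p) (hB : B.natDegree < p) (hB0 : B ≠ 0)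
    (h : A * Polynomial.derivative B = Polynomial.derivative A * B) :
    ∃ c : K, A = Polynomial.C c * B := by
  by_cases hA0 : A = 0
  · exact ⟨0, by simp [hA0]⟩
  have hab := natDegree_eq_of_wronskian hA hB hA0 hB0 h
  set c := A.leadingCoeff / B.leadingCoeff with hc
  have hlb : B.leadingCoeff ≠ 0 := Polynomial.leadingCoeff_ne_zero.2 hB0
  refine ⟨c, ?_⟩
  by_contra hne
  have hcoeff : (A - Polynomial.C c * B).coeff B.natDegree = 0 := by
    rw [Polynomial.coeff_sub, Polynomial.coeff_C_mul, ← hab, hc]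
    conv_lhs => rw [hab, ← hab]
    rw [Polynomial.coeff_natDegree, hab, Polynomial.coeff_natDegree]
    field_simp
    ring
  have hne' := sub_ne_zero.2 hne
  have hdeg : (A - Polynomial.C c * B).natDegree < p := by
    refine (Polynomial.natDegree_sub_le _ _).trans_lt (max_lt hA ?_)
    exact (Polynomial.natDegree_C_mul_le _ _).trans_lt hB
  have := natDegree_eq_of_wronskian hdeg hB hne' hB0 (by
    rw [Polynomial.derivative_sub, Polynomial.derivative_C_mul]
    linear_combination h)
  rw [← this, Polynomial.coeff_natDegree, Polynomial.leadingCoeff_eq_zero] at hcoeff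
  exact hne' hcoeff

/-! ### Lines on surfaces and osculating quadrics -/

section LinesOnSurfaces

variable {K : Type*} [Field K]

/-- The second fundamental form of `f = 0` (up to scaling) on the tangent vector
`(0, ∂₂f, -∂₁f)`. -/
def hForm (f : MvPolynomial (Fin 3) K) : MvPolynomial (Fin 3) K :=
  pderiv 2 f ^ 2 * pderiv 1 (pderiv 1 f) - (2 : K) • (pderiv 1 f * pderiv 2 f * pderiv 1 (pderiv 2 f))
    + pderiv 1 f ^ 2 * pderiv 2 (pderiv 2 f)

/-- Together with `conf2`, the obstruction to the Hessian of `f` being proportional, on tangent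
planes of `f = 0`, to the quadratic form `2 (v₀ v₂ + v₁²)`. -/
def conf1 (f : MvPolynomial (Fin 3) K) : MvPolynomial (Fin 3) K :=
  pderiv 2 f * (pderiv 2 f ^ 2 * pderiv 0 (pderiv 0 f)
    - (2 : K) • (pderiv 0 f * pderiv 2 f * pderiv 0 (pderiv 2 f))
    + pderiv 0 f ^ 2 * pderiv 2 (pderiv 2 f)) + pderiv 0 f * hForm f

/-- See `conf1`. -/
def conf2 (f : MvPolynomial (Fin 3) K) : MvPolynomial (Fin 3) K :=
  (2 : K) • (pderiv 2 f * (pderiv 2 f ^ 2 * pderiv 0 (pderiv 1 f)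
    - pderiv 1 f * pderiv 2 f * pderiv 0 (pderiv 2 f)
    - pderiv 0 f * pderiv 2 f * pderiv 1 (pderiv 2 f)
    + pderiv 0 f * pderiv 1 f * pderiv 2 (pderiv 2 f))) + pderiv 1 f * hForm f

/-- Homogeneous coordinates of the quadric
`σ₀ (q₀ q₂ + q₁²) + σ₁ q₀ + σ₂ q₁ + σ₃ q₂ + σ₄ = 0` osculating `f = 0` at a point. -/
def osc (f : MvPolynomial (Fin 3) K) : Fin 5 → MvPolynomial (Fin 3) K :=
  ![hForm f,
    (2 : K) • (pderiv 2 f ^ 2 * pderiv 0 f) - hForm f * X 2,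
    (2 : K) • (pderiv 2 f ^ 2 * pderiv 1 f) - (2 : K) • (hForm f * X 1),
    (2 : K) • (pderiv 2 f ^ 2 * pderiv 2 f) - hForm f * X 0,
    hForm f * (X 0 * X 2 + X 1 ^ 2) - (2 : K) • (pderiv 2 f ^ 2 *
      (pderiv 0 f * X 0 + pderiv 1 f * X 1 + pderiv 2 f * X 2))]

/-- The quadric with coefficient vector `σ`. -/
def quadric (σ : Fin 5 → K) : MvPolynomial (Fin 3) K :=
  C (σ 0) * (X 0 * X 2 + X 1 ^ 2) + C (σ 1) * X 0 + C (σ 2) * X 1 + C (σ 3) * X 2 + C (σ 4)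

theorem normal_form {m μ n0 n1 n2 : K} (h : m ≠ μ) (h1 : n0 - m * n1 - m ^ 2 * n2 = 0)
    (h2 : n0 - μ * n1 - μ ^ 2 * n2 = 0) : n0 = -(m * μ) * n2 ∧ n1 = -(m + μ) * n2 := by
  have h3 : m - μ ≠ 0 := sub_ne_zero.2 h
  have e1 : n1 = -(m + μ) * n2 := by
    apply mul_left_cancel₀ h3
    linear_combination h2 - h1
  exact ⟨by rw [e1] at h1; linear_combination h1, e1⟩

/-- A symmetric matrix isotropic on `(1, -m, -m²)` and `(1, -μ, -μ²)`, in coordinates adapted to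
these two vectors. -/
theorem hessian_form {m μ H00 H01 H02 H11 H12 H22 : K} (h : m ≠ μ) (h2 : (2 : K) ≠ 0)
    (h1 : H00 - 2 * m * H01 - 2 * m ^ 2 * H02 + m ^ 2 * H11 + 2 * m ^ 3 * H12 + m ^ 4 * H22 = 0)
    (h1' : H00 - 2 * μ * H01 - 2 * μ ^ 2 * H02 + μ ^ 2 * H11 + 2 * μ ^ 3 * H12 + μ ^ 4 * H22 = 0) :
    ∃ L Q G : K, H11 = 2 * L - 2 * (μ + m) * G + (μ + m) ^ 2 * H22 ∧
      H12 = G - (μ + m) * H22 ∧ H02 = Q + m * G - m * μ * H22 ∧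
      H01 = (μ - m) * L - (μ + m) * Q + m * (2 * L - 2 * (μ + m) * G + (μ + m) ^ 2 * H22)
        + m ^ 2 * (G - (μ + m) * H22) ∧
      H00 = m ^ 2 * (2 * L - 2 * (μ + m) * G + (μ + m) ^ 2 * H22) + m ^ 4 * H22
        + 2 * m * ((μ - m) * L - (μ + m) * Q) + 2 * m ^ 2 * Q
        + 2 * m ^ 3 * (G - (μ + m) * H22) := by
  have h3 : m - μ ≠ 0 := sub_ne_zero.2 h
  set G := H12 + (μ + m) * H22 with hG
  set L := (H11 + 2 * (μ + m) * G - (μ + m) ^ 2 * H22) / 2 with hL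
  have hL2 : 2 * L = H11 + 2 * (μ + m) * G - (μ + m) ^ 2 * H22 := by
    rw [hL]; field_simp
  set Q := H02 - m * G + m * μ * H22 with hQ
  have e11 : H11 = 2 * L - 2 * (μ + m) * G + (μ + m) ^ 2 * H22 := by linear_combination -hL2
  have e12 : H12 = G - (μ + m) * H22 := by rw [hG]; ring
  have e02 : H02 = Q + m * G - m * μ * H22 := by rw [hQ]; ring
  clear_value L Q G
  subst e11 e12 e02
  have e01 : H01 = (μ - m) * L - (μ + m) * Q + m * (2 * L - 2 * (μ + m) * G + (μ + m) ^ 2 * H22)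
        + m ^ 2 * (G - (μ + m) * H22) := by
    apply mul_left_cancel₀ (mul_ne_zero h2 h3)
    linear_combination h1' - h1
  refine ⟨L, Q, G, rfl, rfl, rfl, e01, ?_⟩
  subst e01
  linear_combination h1

theorem quadric_osc (f : MvPolynomial (Fin 3) K) (q : Fin 3 → K) :
    eval q (quadric fun i => eval q (osc f i)) = 0 := by
  simp [quadric, osc, smul_eval]
  ring

/-- All derivatives along a line contained in `P = 0` vanish. -/
theorem eval_dirD_of_res {x : K × K × K} {P : MvPolynomial (Fin 3) K} (h : res x P = 0) :
    res x (dirD x.1 P) = 0 := by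
  rw [← derivative_res, h, Polynomial.derivative_zero]

theorem eval_of_res {x : K × K × K} {P : MvPolynomial (Fin 3) K} (h : res x P = 0) (s : K) :
    eval (pt x s) P = 0 := by
  rw [← eval_res, h, Polynomial.eval_zero]

/-- The jet of `f` at a common point of two lines contained in `f = 0`. -/
theorem jet_at_meeting {f : MvPolynomial (Fin 3) K} {m μ : K} {q : Fin 3 → K} (hm : m ≠ μ)
    (h2 : (2 : K) ≠ 0)
    (h11 : eval q (dirD m f) = 0) (h12 : eval q (dirD m (dirD m f)) = 0)
    (h21 : eval q (dirD μ f) = 0) (h22 : eval q (dirD μ (dirD μ f)) = 0) :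
    eval q (pderiv 0 f) = -(m * μ) * eval q (pderiv 2 f) ∧
    eval q (pderiv 1 f) = -(m + μ) * eval q (pderiv 2 f) ∧
    ∃ L Q G : K,
      eval q (pderiv 1 (pderiv 1 f)) = 2 * L - 2 * (μ + m) * G
        + (μ + m) ^ 2 * eval q (pderiv 2 (pderiv 2 f)) ∧
      eval q (pderiv 1 (pderiv 2 f)) = G - (μ + m) * eval q (pderiv 2 (pderiv 2 f)) ∧
      eval q (pderiv 0 (pderiv 2 f)) = Q + m * G - m * μ * eval q (pderiv 2 (pderiv 2 f)) ∧
      eval q (pderiv 0 (pderiv 1 f)) = (μ - m) * L - (μ + m) * Q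
        + m * (2 * L - 2 * (μ + m) * G + (μ + m) ^ 2 * eval q (pderiv 2 (pderiv 2 f)))
        + m ^ 2 * (G - (μ + m) * eval q (pderiv 2 (pderiv 2 f))) ∧
      eval q (pderiv 0 (pderiv 0 f))
        = m ^ 2 * (2 * L - 2 * (μ + m) * G + (μ + m) ^ 2 * eval q (pderiv 2 (pderiv 2 f)))
        + m ^ 4 * eval q (pderiv 2 (pderiv 2 f))
        + 2 * m * ((μ - m) * L - (μ + m) * Q) + 2 * m ^ 2 * Q
        + 2 * m ^ 3 * (G - (μ + m) * eval q (pderiv 2 (pderiv 2 f))) := by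
  simp only [dirD_apply, map_sub, smul_eval, Derivation.map_smul, pderiv_comm' 1 0,
    pderiv_comm' 2 0, pderiv_comm' 2 1] at h11 h12 h21 h22
  obtain ⟨a, b⟩ := normal_form (n0 := eval q (pderiv 0 f)) (n1 := eval q (pderiv 1 f))
    (n2 := eval q (pderiv 2 f)) hm (by linear_combination h11) (by linear_combination h21)
  refine ⟨a, b, ?_⟩
  exact hessian_form hm h2 (by linear_combination h12) (by linear_combination h22)

theorem conf_eq_zero_of_meeting {f : MvPolynomial (Fin 3) K} {m μ : K} {q : Fin 3 → K} (hm : m ≠ μ)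
    (h2 : (2 : K) ≠ 0)
    (h11 : eval q (dirD m f) = 0) (h12 : eval q (dirD m (dirD m f)) = 0)
    (h21 : eval q (dirD μ f) = 0) (h22 : eval q (dirD μ (dirD μ f)) = 0) :
    eval q (conf1 f) = 0 ∧ eval q (conf2 f) = 0 := by
  obtain ⟨a, b, L, Q, G, e1, e2, e3, e4, e5⟩ := jet_at_meeting hm h2 h11 h12 h21 h22
  constructor
  · simp only [conf1, hForm, map_sub, map_add, smul_eval, map_mul, map_pow, a, b, e1, e2, e3, e5]
    ring
  · simp only [conf2, hForm, map_sub, map_add, smul_eval, map_mul, map_pow, a, b, e1, e2, e3, e4]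
    ring

set_option maxHeartbeats 1000000 in
/-- Along a line of a surface whose Hessian is conformal on tangent planes, the osculating quadric
is stationary at each point where a second line crosses: this is the computation behind the
classical theorem that umbilic surfaces are spheres. -/
theorem osc_stationary {f : MvPolynomial (Fin 3) K} {m μ : K} {q : Fin 3 → K} (hm : m ≠ μ)
    (h2 : (2 : K) ≠ 0)
    (h11 : eval q (dirD m f) = 0) (h12 : eval q (dirD m (dirD m f)) = 0)
    (h13 : eval q (dirD m (dirD m (dirD m f))) = 0)
    (h21 : eval q (dirD μ f) = 0) (h22 : eval q (dirD μ (dirD μ f)) = 0)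
    (hN : eval q (pderiv 2 f) ≠ 0)
    (hv1 : eval q (dirD m (conf1 f)) = 0) (hv2 : eval q (dirD m (conf2 f)) = 0)
    (hw1 : eval q (dirD μ (conf1 f)) = 0) (hw2 : eval q (dirD μ (conf2 f)) = 0) (i j : Fin 5) :
    eval q (osc f i) * eval q (dirD m (osc f j)) = eval q (osc f j) * eval q (dirD m (osc f i)) := by
  obtain ⟨a, b, L, Q, G, e1, e2, e3, e4, e5⟩ := jet_at_meeting hm h2 h11 h12 h21 h22
  -- the mixed third derivatives are determined by the Hessian
  have hT1 : eval q (pderiv 2 f) * eval q (dirD μ (dirD m (dirD m f)))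
      = -2 * (m - μ) ^ 2 * L * (Q - L) := by
    apply mul_left_cancel₀ (pow_ne_zero 2 hN)
    simp only [conf1, conf2, hForm, map_sub, map_add, Derivation.leibniz, Derivation.leibniz_pow,
      Derivation.map_smul, smul_eq_mul] at hw1 hw2
    simp only [dirD_apply, map_sub, map_add, map_mul, map_pow, smul_eval, Derivation.map_smul,
      pderiv_comm' 1 0, pderiv_comm' 2 0, pderiv_comm' 2 1, a, b, e1, e2, e3, e4, e5,
      nsmul_eq_mul, Nat.cast_ofNat, map_ofNat] at hw1 hw2 ⊢
    linear_combination hw1 - m * hw2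
  have hT2 : eval q (pderiv 2 f) * eval q (dirD m (dirD μ (dirD μ f)))
      = -2 * (m - μ) ^ 2 * L * (Q - (μ - m) * G - L) := by
    apply mul_left_cancel₀ (pow_ne_zero 2 hN)
    simp only [conf1, conf2, hForm, map_sub, map_add, Derivation.leibniz, Derivation.leibniz_pow,
      Derivation.map_smul, smul_eq_mul] at hv1 hv2
    simp only [dirD_apply, map_sub, map_add, map_mul, map_pow, smul_eval, Derivation.map_smul,
      pderiv_comm' 1 0, pderiv_comm' 2 0, pderiv_comm' 2 1, a, b, e1, e2, e3, e4, e5,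
      nsmul_eq_mul, Nat.cast_ofNat, map_ofNat] at hv1 hv2 ⊢
    linear_combination hv1 - μ * hv2
  have hh : eval q (dirD m (hForm f)) = eval q (pderiv 2 f) * (6 * L * Q - 2 * L ^ 2) := by
    simp only [hForm, map_sub, map_add, Derivation.leibniz, Derivation.leibniz_pow,
      Derivation.map_smul, smul_eq_mul]
    simp only [dirD_apply, map_sub, map_add, map_mul, map_pow, smul_eval, Derivation.map_smul,
      pderiv_comm' 1 0, pderiv_comm' 2 0, pderiv_comm' 2 1, b, e1, e2, e3, e4,
      nsmul_eq_mul, Nat.cast_ofNat, map_ofNat] at hT1 hT2 h13 ⊢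
    apply mul_left_cancel₀ (pow_ne_zero 2 (sub_ne_zero.2 hm))
    linear_combination eval q (pderiv 2 f) * (-2 * hT1 + hT2) + eval q (pderiv 2 f) ^ 2 * h13
  have hh0 : eval q (hForm f) = 2 * L * eval q (pderiv 2 f) ^ 2 := by
    simp only [hForm, map_sub, map_add, map_mul, map_pow, smul_eval, b, e1, e2]
    ring
  have hX : dirD m (X 0) = 1 ∧ dirD m (X 1) = C (-m) ∧ dirD m (X 2) = C (-m ^ 2) := by
    refine ⟨?_, ?_, ?_⟩ <;> simp [dirD_apply, pderiv_X, smul_eq_C_mul]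
  have hn0 : eval q (dirD m (pderiv 0 f)) = L * -m ^ 2 + (Q - L) * -(m * μ) := by
    simp only [dirD_apply, map_sub, smul_eval, pderiv_comm' 1 0, pderiv_comm' 2 0, e3, e4, e5]
    ring
  have hn1 : eval q (dirD m (pderiv 1 f)) = L * (-2 * m) + (Q - L) * -(m + μ) := by
    simp only [dirD_apply, map_sub, smul_eval, pderiv_comm' 2 1, e1, e2, e4]
    ring
  have hn2 : eval q (dirD m (pderiv 2 f)) = Q := by
    simp only [dirD_apply, map_sub, smul_eval, e2, e3]
    ring
  have key : ∀ j, eval q (pderiv 2 f) * eval q (dirD m (osc f j))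
      = (3 * Q - L) * eval q (osc f j) := by
    intro j
    fin_cases j
    · simp only [osc, Fin.zero_eta, Matrix.cons_val_zero, hh, hh0]
      ring
    all_goals
      simp only [osc, Fin.mk_one, Fin.reduceFinMk, Matrix.cons_val, map_sub, map_add,
        Derivation.leibniz, Derivation.leibniz_pow, Derivation.map_smul, smul_eq_mul, hX.1, hX.2.1,
        hX.2.2, map_mul, map_pow, smul_eval, hh, hh0, hn0, hn1, hn2, a, b, eval_X, eval_C, map_one,
        nsmul_eq_mul, Nat.cast_ofNat, map_ofNat]
      ring
  apply mul_left_cancel₀ hN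
  linear_combination eval q (osc f i) * key j - eval q (osc f j) * key i

end LinesOnSurfaces

/-! ### Meetings of two families of lines -/

section Meeting

variable {K : Type*} [Field K]

/-- The lines attached to `x` and `y` have a common point. (Points on different lines are compared
through their first coordinate, which is the parameter on both.) -/
def meets (x y : K × K × K) : Prop := ∃ s, pt x s = pt y s

theorem meets_comm {x y : K × K × K} : meets x y ↔ meets y x :=
  ⟨fun ⟨s, h⟩ => ⟨s, h.symm⟩, fun ⟨s, h⟩ => ⟨s, h.symm⟩⟩

theorem meets_iff {x y : K × K × K} (h : x.1 ≠ y.1) :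
    meets x y ↔ x.1 * y.2.1 - y.1 * x.2.1 + x.2.2 - y.2.2 = 0 := by
  obtain ⟨m, a, c⟩ := x
  obtain ⟨μ, b, d⟩ := y
  have h' : m - μ ≠ 0 := sub_ne_zero.2 h
  constructor
  · rintro ⟨s, hs⟩
    have h1 := congrFun hs 1
    have h2 := congrFun hs 2
    simp [pt] at h1 h2 ⊢
    linear_combination h2 - (m + μ) * h1
  · intro hω
    simp only at hω
    have hs : (m - μ) * ((a - b) / (m - μ)) = a - b := by field_simp
    refine ⟨(a - b) / (m - μ), ?_⟩
    set s := (a - b) / (m - μ)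
    funext i
    fin_cases i
    · rfl
    · simp [pt]
      linear_combination -hs
    · simp [pt]
      linear_combination hω - (m + μ) * hs

/-- Incidences between two families of lines. -/
def inc (X Y : Finset (K × K × K)) : ℕ := ((X ×ˢ Y).filter fun z => meets z.1 z.2).card

/-- Two families of pairwise skew or parallel lines, with lines of different families never
parallel, such that two lines of `X` are never met by more than `κ` common lines of `Y`. -/
structure Cfg (κ : ℕ) (X Y : Finset (K × K × K)) : Prop where
  hX : ∀ x ∈ X, ∀ x' ∈ X, x ≠ x' → ¬ meets x x'
  hY : ∀ y ∈ Y, ∀ y' ∈ Y, y ≠ y' → ¬ meets y y'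
  hne : ∀ x ∈ X, ∀ y ∈ Y, x.1 ≠ y.1
  hκ : ∀ x ∈ X, ∀ x' ∈ X, x ≠ x' → (Y.filter fun y => meets x y ∧ meets x' y).card ≤ κ

theorem Cfg.mono {κ : ℕ} {X Y X' Y' : Finset (K × K × K)} (h : Cfg κ X Y) (hX : X' ⊆ X)
    (hY : Y' ⊆ Y) : Cfg κ X' Y' where
  hX x hx x' hx' := h.hX x (hX hx) x' (hX hx')
  hY x hx x' hx' := h.hY x (hY hx) x' (hY hx')
  hne x hx y hy := h.hne x (hX hx) y (hY hy)
  hκ x hx x' hx' hne :=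
    (Finset.card_le_card (Finset.filter_subset_filter _ hY)).trans (h.hκ x (hX hx) x' (hX hx') hne)

theorem inc_eq_sum (X Y : Finset (K × K × K)) :
    inc X Y = ∑ x ∈ X, (Y.filter fun y => meets x y).card := by
  rw [inc, Finset.card_filter, Finset.sum_product]
  simp only [Finset.card_filter]

/-- Restricted pair counting: if every first coordinate has at most `d` partners. -/
theorem card_pairs_le {α β : Type*} (X : Finset α) (Y : Finset β) (r : α → β → Prop) (d : ℕ)
    (h : ∀ x ∈ X, (Y.filter fun y => r x y).card ≤ d) :
    ((X ×ˢ Y).filter fun z => r z.1 z.2).card ≤ d * X.card := by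
  rw [Finset.card_filter, Finset.sum_product, mul_comm, ← smul_eq_mul]
  simp only [← Finset.card_filter]
  exact Finset.sum_le_card_nsmul _ _ _ h

theorem card_pairs_le' {α β : Type*} (X : Finset α) (Y : Finset β) (r : α → β → Prop) (d : ℕ)
    (h : ∀ y ∈ Y, (X.filter fun x => r x y).card ≤ d) :
    ((X ×ˢ Y).filter fun z => r z.1 z.2).card ≤ d * Y.card := by
  rw [Finset.card_filter, Finset.sum_product_right, mul_comm, ← smul_eq_mul]
  simp only [← Finset.card_filter]
  exact Finset.sum_le_card_nsmul _ _ _ h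

/-- A line not contained in `g = 0` meets few pairwise disjoint lines inside `g = 0`. -/
theorem meet_count {x : K × K × K} {Y : Finset (K × K × K)} {g : MvPolynomial (Fin 3) K}
    (hY : ∀ y ∈ Y, ∀ y' ∈ Y, y ≠ y' → ¬ meets y y') (hg : res x g ≠ 0) :
    (Y.filter fun y => ∃ s, pt x s = pt y s ∧ eval (pt x s) g = 0).card ≤ g.totalDegree := by
  set Z := Y.filter fun y => ∃ s, pt x s = pt y s ∧ eval (pt x s) g = 0 with hZ
  have hex : ∀ y ∈ Z, ∃ s, pt x s = pt y s ∧ eval (pt x s) g = 0 := fun y hy =>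
    (Finset.mem_filter.1 hy).2
  choose! s hs using hex
  have h1 : Z.card ≤ (res x g).roots.toFinset.card := by
    refine Finset.card_le_card_of_injOn s (fun y hy => ?_) (fun y hy y' hy' hyy => ?_)
    · rw [Finset.mem_coe, Multiset.mem_toFinset, Polynomial.mem_roots hg, Polynomial.IsRoot,
        eval_res]
      exact (hs y hy).2
    · by_contra hne
      refine hY y (Finset.mem_filter.1 hy).1 y' (Finset.mem_filter.1 hy').1 hne ⟨s y, ?_⟩
      rw [← (hs y hy).1, hyy, (hs y' hy').1]
  exact h1.trans ((Multiset.toFinset_card_le _).trans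
    ((Polynomial.card_roots' _).trans (natDegree_res_le _ _)))

theorem res_quadric {x : K × K × K} {σ : Fin 5 → K} (h : res x (quadric σ) = 0) :
    σ 0 * (x.2.2 - x.1 * x.2.1) + σ 1 - x.1 * σ 2 - x.1 ^ 2 * σ 3 = 0 ∧
    σ 0 * x.2.1 ^ 2 + σ 2 * x.2.1 + σ 3 * (x.2.2 + x.1 * x.2.1) + σ 4 = 0 := by
  have h0 := eval_of_res h 0
  have h1 := eval_of_res h 1
  simp [quadric, pt] at h0 h1
  constructor
  · linear_combination h1 - h0
  · linear_combination h0

/-- On a common quadric, a line of `Y` that meets `x` but not `x'` forces `x` and `x'` to be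
parallel. -/
theorem quadric_skew {σ : Fin 5 → K} (hσ : σ ≠ 0) (h2 : (2 : K) ≠ 0) {x x' y : K × K × K}
    (hx : res x (quadric σ) = 0) (hx' : res x' (quadric σ) = 0) (hy : res y (quadric σ) = 0)
    (hxy : x.1 ≠ y.1) (hxy' : x'.1 ≠ y.1) (hm : meets x y) (hm' : ¬ meets x' y)
    (hxx : ¬ meets x x') : σ 0 ≠ 0 ∧ x.1 = x'.1 := by
  rw [meets_iff hxy] at hm
  rw [meets_iff hxy'] at hm'
  obtain ⟨i1, j1⟩ := res_quadric hx
  obtain ⟨i2, j2⟩ := res_quadric hx'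
  obtain ⟨i3, j3⟩ := res_quadric hy
  by_cases h0 : σ 0 = 0
  · exfalso
    rw [h0] at i1 i2 i3 j1 j2 j3
    have e2 : σ 2 = -(x.1 + y.1) * σ 3 := by
      apply mul_left_cancel₀ (sub_ne_zero.2 hxy)
      linear_combination i3 - i1
    have e1 : σ 1 = -(x.1 * y.1) * σ 3 := by
      rw [e2] at i1; linear_combination i1
    have e3 : σ 3 ≠ 0 := by
      intro e3
      apply hσ
      have e4 : σ 4 = 0 := by rw [e2, e3] at j1; linear_combination j1
      rw [e3, mul_zero] at e1 e2
      funext i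
      fin_cases i <;> simp [h0, e1, e2, e3, e4]
    rw [e1, e2] at i2
    have e5 : x'.1 = x.1 := by
      have : σ 3 * ((x'.1 - x.1) * (x'.1 - y.1)) = 0 := by linear_combination -i2
      have := (mul_eq_zero.1 this).resolve_left e3
      exact sub_eq_zero.1 ((mul_eq_zero.1 this).resolve_right (sub_ne_zero.2 hxy'))
    apply hm'
    apply mul_left_cancel₀ e3
    rw [e2] at j2 j3
    rw [e5] at j2 ⊢
    linear_combination j2 - j3
  · refine ⟨h0, ?_⟩
    by_contra hne
    rw [meets_iff hne] at hxx
    set t : K × K × K → K := fun z => 2 * (σ 0 * z.2.1 + σ 3 * z.1) + σ 2 with ht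
    have hω : ∀ {u v : K × K × K}, (σ 0 * (u.2.2 - u.1 * u.2.1) + σ 1 - u.1 * σ 2 - u.1 ^ 2 * σ 3 = 0)
        → (σ 0 * (v.2.2 - v.1 * v.2.1) + σ 1 - v.1 * σ 2 - v.1 ^ 2 * σ 3 = 0) →
        2 * σ 0 * (u.1 * v.2.1 - v.1 * u.2.1 + u.2.2 - v.2.2) = (u.1 - v.1) * (t u + t v) := by
      intro u v hu hv
      simp only [ht]
      linear_combination 2 * hu - 2 * hv
    have hsq : t x ^ 2 = t x' ^ 2 := by
      simp only [ht]
      linear_combination 4 * σ 0 * (j1 - j2) - 4 * σ 3 * (i1 - i2)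
    have h20 : 2 * σ 0 ≠ 0 := mul_ne_zero h2 h0
    rcases sq_eq_sq_iff_eq_or_eq_neg.1 hsq with he | he
    · apply hm'
      apply mul_left_cancel₀ h20
      have hxy0 := hω i1 i3
      rw [hm, mul_zero] at hxy0
      have := (mul_eq_zero.1 hxy0.symm).resolve_left (sub_ne_zero.2 hxy)
      rw [hω i2 i3, ← he, this, mul_zero, mul_zero]
    · apply hxx
      apply mul_left_cancel₀ h20
      rw [hω i1 i2, he]
      ring

theorem quadric_parallel {σ : Fin 5 → K} (h0 : σ 0 ≠ 0) {x x' y : K × K × K}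
    (hx : res x (quadric σ) = 0) (hx' : res x' (quadric σ) = 0) (hy : res y (quadric σ) = 0)
    (hxy : x.1 ≠ y.1) (hxx : x.1 = x'.1) (hm : meets x y) (hm' : meets x' y) : x = x' := by
  rw [meets_iff hxy] at hm
  rw [meets_iff (hxx ▸ hxy)] at hm'
  obtain ⟨i1, -⟩ := res_quadric hx
  obtain ⟨i2, -⟩ := res_quadric hx'
  obtain ⟨i3, -⟩ := res_quadric hy
  obtain ⟨m, a, c⟩ := x
  obtain ⟨m', a', c'⟩ := x'
  obtain ⟨μ, b, d⟩ := y
  simp only at *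
  subst hxx
  have ha : a = a' := by
    apply mul_left_cancel₀ (mul_ne_zero h0 (sub_ne_zero.2 hxy))
    linear_combination -(i1 - i2) + σ 0 * (hm - hm')
  subst ha
  have hc : c = c' := by linear_combination hm - hm'
  rw [hc]

theorem inc_quadric {κ : ℕ} {X Y : Finset (K × K × K)} (hC : Cfg κ X Y) {σ : Fin 5 → K}
    (hσ : σ ≠ 0) (h2 : (2 : K) ≠ 0) (hX : ∀ x ∈ X, res x (quadric σ) = 0)
    (hY : ∀ y ∈ Y, res y (quadric σ) = 0) : inc X Y ≤ κ * X.card + Y.card := by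
  by_cases h : ∀ x ∈ X, (Y.filter fun y => meets x y).card ≤ κ
  · exact (card_pairs_le X Y _ κ h).trans (Nat.le_add_right _ _)
  push Not at h
  obtain ⟨x0, hx0, hk⟩ := h
  have hall : ∀ x ∈ X, x ≠ x0 → σ 0 ≠ 0 ∧ x0.1 = x.1 := by
    intro x hx hne
    by_contra hcon
    have := hC.hκ x0 hx0 x hx hne.symm
    have h3 : (Y.filter fun y => meets x0 y) ⊆ Y.filter fun y => meets x0 y ∧ meets x y := by
      intro y hy
      rw [Finset.mem_filter] at hy ⊢
      refine ⟨hy.1, hy.2, ?_⟩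
      by_contra hn
      exact hcon (quadric_skew hσ h2 (hX x0 hx0) (hX x hx) (hY y hy.1) (hC.hne x0 hx0 y hy.1)
        (hC.hne x hx y hy.1) hy.2 hn (hC.hX x0 hx0 x hx hne.symm))
    have := Finset.card_le_card h3
    omega
  have hpar : ∀ x ∈ X, x0.1 = x.1 := fun x hx => by
    by_cases hne : x = x0
    · rw [hne]
    · exact (hall x hx hne).2
  have h1 : inc X Y ≤ 1 * Y.card := by
    refine card_pairs_le' X Y _ 1 fun y hy => Finset.card_le_one.2 fun x hx x' hx' => ?_
    rw [Finset.mem_filter] at hx hx'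
    by_contra hne
    have h0 : σ 0 ≠ 0 := by
      by_cases hn : x = x0
      · exact (hall x' hx'.1 (fun h => hne (hn.trans h.symm))).1
      · exact (hall x hx.1 hn).1
    exact hne (quadric_parallel h0 (hX x hx.1) (hX x' hx'.1) (hY y hy) (hC.hne x hx.1 y hy)
      ((hpar x hx.1).symm.trans (hpar x' hx'.1)) hx.2 hx'.2)
  omega

end Meeting

/-! ### Meetings of lines on an irreducible surface -/

section Component

variable {K : Type*} [Field K]

theorem deg_mul {a b : MvPolynomial (Fin 3) K} {m n : ℕ} (ha : a.totalDegree ≤ m)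
    (hb : b.totalDegree ≤ n) : (a * b).totalDegree ≤ m + n :=
  (totalDegree_mul _ _).trans (add_le_add ha hb)

theorem deg_add {a b : MvPolynomial (Fin 3) K} {m : ℕ} (ha : a.totalDegree ≤ m)
    (hb : b.totalDegree ≤ m) : (a + b).totalDegree ≤ m :=
  (totalDegree_add _ _).trans (max_le ha hb)

theorem deg_sub {a b : MvPolynomial (Fin 3) K} {m : ℕ} (ha : a.totalDegree ≤ m)
    (hb : b.totalDegree ≤ m) : (a - b).totalDegree ≤ m :=
  (totalDegree_sub _ _).trans (max_le ha hb)

theorem deg_smul {a : MvPolynomial (Fin 3) K} {m : ℕ} (c : K) (ha : a.totalDegree ≤ m) :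
    (c • a).totalDegree ≤ m :=
  (totalDegree_smul_le _ _).trans ha

theorem deg_sq {a : MvPolynomial (Fin 3) K} {m : ℕ} (ha : a.totalDegree ≤ m) :
    (a ^ 2).totalDegree ≤ m + m := by
  rw [sq]; exact deg_mul ha ha

theorem deg_X (i : Fin 3) : (X i : MvPolynomial (Fin 3) K).totalDegree ≤ 1 :=
  (totalDegree_X i).le

theorem deg_pderiv {a : MvPolynomial (Fin 3) K} {m : ℕ} (i : Fin 3) (ha : a.totalDegree ≤ m) :
    (pderiv i a).totalDegree ≤ m :=
  (totalDegree_pderiv_le' i a).trans ((Nat.sub_le _ _).trans ha)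

theorem deg_dirD {a : MvPolynomial (Fin 3) K} {n : ℕ} (m : K) (ha : a.totalDegree ≤ n) :
    (dirD m a).totalDegree ≤ n := by
  rw [dirD_apply]
  exact deg_sub (deg_sub (deg_pderiv 0 ha) (deg_smul _ (deg_pderiv 1 ha)))
    (deg_smul _ (deg_pderiv 2 ha))

theorem deg_hForm (f : MvPolynomial (Fin 3) K) : (hForm f).totalDegree ≤ 3 * f.totalDegree := by
  have h1 : ∀ i, (pderiv i f).totalDegree ≤ f.totalDegree := fun i => deg_pderiv i le_rfl
  have h2 : ∀ i j, (pderiv i (pderiv j f)).totalDegree ≤ f.totalDegree := fun i j =>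
    deg_pderiv i (h1 j)
  refine deg_add (deg_sub ?_ (deg_smul _ ?_)) ?_
  · exact (deg_mul (deg_sq (h1 2)) (h2 1 1)).trans (by omega)
  · exact (deg_mul (deg_mul (h1 1) (h1 2)) (h2 1 2)).trans (by omega)
  · exact (deg_mul (deg_sq (h1 1)) (h2 2 2)).trans (by omega)

theorem deg_conf1 (f : MvPolynomial (Fin 3) K) : (conf1 f).totalDegree ≤ 4 * f.totalDegree := by
  have h1 : ∀ i, (pderiv i f).totalDegree ≤ f.totalDegree := fun i => deg_pderiv i le_rfl
  have h2 : ∀ i j, (pderiv i (pderiv j f)).totalDegree ≤ f.totalDegree := fun i j =>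
    deg_pderiv i (h1 j)
  refine deg_add ((deg_mul (h1 2) (deg_add (deg_sub (deg_mul (deg_sq (h1 2)) (h2 0 0))
    (deg_smul _ (deg_mul (deg_mul (h1 0) (h1 2)) (h2 0 2)))) (deg_mul (deg_sq (h1 0)) (h2 2 2)))).trans
    (by omega)) ((deg_mul (h1 0) (deg_hForm f)).trans (by omega))

theorem deg_conf2 (f : MvPolynomial (Fin 3) K) : (conf2 f).totalDegree ≤ 4 * f.totalDegree := by
  have h1 : ∀ i, (pderiv i f).totalDegree ≤ f.totalDegree := fun i => deg_pderiv i le_rfl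
  have h2 : ∀ i j, (pderiv i (pderiv j f)).totalDegree ≤ f.totalDegree := fun i j =>
    deg_pderiv i (h1 j)
  refine deg_add (deg_smul _ ((deg_mul (h1 2) (deg_add (deg_sub (deg_sub (deg_mul (deg_sq (h1 2)) (h2 0 1))
    (deg_mul (deg_mul (h1 1) (h1 2)) (h2 0 2))) (deg_mul (deg_mul (h1 0) (h1 2)) (h2 1 2)))
      (deg_mul (deg_mul (h1 0) (h1 1)) (h2 2 2)))).trans
    (by omega))) ((deg_mul (h1 1) (deg_hForm f)).trans (by omega))

theorem deg_osc (f : MvPolynomial (Fin 3) K) (hf : 1 ≤ f.totalDegree) (i : Fin 5) :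
    (osc f i).totalDegree ≤ 5 * f.totalDegree := by
  have h1 : ∀ i, (pderiv i f).totalDegree ≤ f.totalDegree := fun i => deg_pderiv i le_rfl
  have hh := deg_hForm f
  have hX := fun i => deg_X (K := K) i
  fin_cases i
  · exact hh.trans (by omega)
  · exact deg_sub (deg_smul _ ((deg_mul (deg_sq (h1 2)) (h1 0)).trans (by omega)))
      ((deg_mul hh (hX 2)).trans (by omega))
  · exact deg_sub (deg_smul _ ((deg_mul (deg_sq (h1 2)) (h1 1)).trans (by omega)))
      (deg_smul _ ((deg_mul hh (hX 1)).trans (by omega)))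
  · exact deg_sub (deg_smul _ ((deg_mul (deg_sq (h1 2)) (h1 2)).trans (by omega)))
      ((deg_mul hh (hX 0)).trans (by omega))
  · exact deg_sub ((deg_mul hh (deg_add (deg_mul (hX 0) (hX 2)) (deg_sq (hX 1)))).trans (by omega))
      (deg_smul _ ((deg_mul (deg_sq (h1 2)) (deg_add (deg_add (deg_mul (h1 0) (hX 0))
        (deg_mul (h1 1) (hX 1))) (deg_mul (h1 2) (hX 2)))).trans (by omega)))

/-- Derivatives of `f` along a line of `f = 0`. -/
theorem jets_of_res {x : K × K × K} {f : MvPolynomial (Fin 3) K} (h : res x f = 0) (s : K) :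
    eval (pt x s) (dirD x.1 f) = 0 ∧ eval (pt x s) (dirD x.1 (dirD x.1 f)) = 0 ∧
      eval (pt x s) (dirD x.1 (dirD x.1 (dirD x.1 f))) = 0 := by
  have h1 := eval_dirD_of_res h
  have h2 := eval_dirD_of_res h1
  have h3 := eval_dirD_of_res h2
  exact ⟨eval_of_res h1 s, eval_of_res h2 s, eval_of_res h3 s⟩

/-- Pairs of lines meeting in a point of `G = 0`, for lines contained in the irreducible surface
`f = 0`: apart from the few lines contained in `G = 0`, every line takes part in at most `D` such
pairs. -/
theorem pairs_on_curve {f G : MvPolynomial (Fin 3) K} (hf : Prime f) (hfG : ¬ f ∣ G) {D κ : ℕ}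
    (hG : G.totalDegree ≤ D) {X Y : Finset (K × K × K)} (hC : Cfg κ X Y)
    (hX : ∀ x ∈ X, res x f = 0) (hY : ∀ y ∈ Y, res y f = 0) :
    ∃ Xb ⊆ X, ∃ Yb ⊆ Y, Xb.card ≤ f.totalDegree * D ∧ Yb.card ≤ f.totalDegree * D ∧
      ((X ×ˢ Y).filter fun z => ∃ s, pt z.1 s = pt z.2 s ∧ eval (pt z.1 s) G = 0).card
        ≤ D * (X.card + Y.card) + inc Xb Yb := by
  set Xb := X.filter fun x => res x G = 0 with hXb
  set Yb := Y.filter fun x => res x G = 0 with hYb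
  refine ⟨Xb, Finset.filter_subset _ _, Yb, Finset.filter_subset _ _, ?_, ?_, ?_⟩
  · exact bezout_lines hf hfG hG Xb (fun t ht => hX t (Finset.mem_filter.1 ht).1)
      (fun t ht => (Finset.mem_filter.1 ht).2)
  · exact bezout_lines hf hfG hG Yb (fun t ht => hY t (Finset.mem_filter.1 ht).1)
      (fun t ht => (Finset.mem_filter.1 ht).2)
  have h1 : (((X.filter fun x => res x G ≠ 0) ×ˢ Y).filter fun z => ∃ s, pt z.1 s = pt z.2 s ∧
      eval (pt z.1 s) G = 0).card ≤ D * (X.filter fun x => res x G ≠ 0).card :=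
    card_pairs_le _ Y (fun x y => ∃ s, pt x s = pt y s ∧ eval (pt x s) G = 0) D fun x hx =>
      (meet_count hC.hY (Finset.mem_filter.1 hx).2).trans hG
  have h2 : ((X ×ˢ (Y.filter fun y => res y G ≠ 0)).filter fun z => ∃ s, pt z.1 s = pt z.2 s ∧
      eval (pt z.1 s) G = 0).card ≤ D * (Y.filter fun x => res x G ≠ 0).card := by
    refine card_pairs_le' X _ (fun x y => ∃ s, pt x s = pt y s ∧ eval (pt x s) G = 0) D fun y hy => ?_
    refine le_trans (Finset.card_le_card fun x hx => ?_)
      ((meet_count hC.hX (Finset.mem_filter.1 hy).2).trans hG)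
    rw [Finset.mem_filter] at hx ⊢
    obtain ⟨hx, s, hs, hs'⟩ := hx
    exact ⟨hx, s, hs.symm, hs ▸ hs'⟩
  have h3 := Finset.card_filter_le X fun x => res x G ≠ 0
  have h4 := Finset.card_filter_le Y fun x => res x G ≠ 0
  have h5 : ((X ×ˢ Y).filter fun z => ∃ s, pt z.1 s = pt z.2 s ∧ eval (pt z.1 s) G = 0) ⊆
      ((((X.filter fun x => res x G ≠ 0) ×ˢ Y).filter fun z => ∃ s, pt z.1 s = pt z.2 s ∧
      eval (pt z.1 s) G = 0) ∪ ((X ×ˢ (Y.filter fun y => res y G ≠ 0)).filter fun z =>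
      ∃ s, pt z.1 s = pt z.2 s ∧ eval (pt z.1 s) G = 0)) ∪
      ((Xb ×ˢ Yb).filter fun z => meets z.1 z.2) := by
    rintro ⟨x, y⟩ hz
    simp only [Finset.mem_union, Finset.mem_filter, Finset.mem_product, hXb, hYb] at hz ⊢
    obtain ⟨⟨hx, hy⟩, s, hs, hs'⟩ := hz
    have hm : meets x y := ⟨s, hs⟩
    by_cases a : res x G = 0 <;> by_cases b : res y G = 0
    · exact Or.inr ⟨⟨⟨hx, a⟩, hy, b⟩, hm⟩
    · exact Or.inl (Or.inr ⟨⟨hx, hy, b⟩, s, hs, hs'⟩)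
    · exact Or.inl (Or.inl ⟨⟨⟨hx, a⟩, hy⟩, s, hs, hs'⟩)
    · exact Or.inl (Or.inl ⟨⟨⟨hx, a⟩, hy⟩, s, hs, hs'⟩)
  have h6 := (Finset.card_le_card h5).trans ((Finset.card_union_le _ _).trans
    (Nat.add_le_add_right (Finset.card_union_le _ _) _))
  rw [inc]
  have := Nat.mul_le_mul_left D h3
  have := Nat.mul_le_mul_left D h4
  rw [mul_add]
  omega

theorem osc_ne_zero {f : MvPolynomial (Fin 3) K} {q : Fin 3 → K} (h2 : (2 : K) ≠ 0)
    (hN : eval q (pderiv 2 f) ≠ 0) : ∃ i, eval q (osc f i) ≠ 0 := by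
  by_contra h
  push Not at h
  have h0 := h 0
  have h3 := h 3
  simp [osc, smul_eval] at h0 h3
  rw [h0] at h3
  simp [h2, hN] at h3

theorem res_osc_identity (f : MvPolynomial (Fin 3) K) (x : K × K × K) :
    res x (osc f 0) * res x (X 0 * X 2 + X 1 ^ 2) + res x (osc f 1) * res x (X 0)
      + res x (osc f 2) * res x (X 1) + res x (osc f 3) * res x (X 2) + res x (osc f 4) = 0 := by
  simp only [← map_mul, ← map_add]
  convert map_zero (res x)
  have hC2 : (C 2 : MvPolynomial (Fin 3) K) = 2 := map_ofNat C 2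
  simp only [osc, smul_eq_C_mul, Matrix.cons_val, hC2]
  ring

/-- A pair of lines meeting in a point where `g ≠ 0`. -/
def goodPair (g : MvPolynomial (Fin 3) K) (x y : K × K × K) : Prop :=
  ∃ s, pt x s = pt y s ∧ eval (pt x s) g ≠ 0

theorem goodPair_comm {g : MvPolynomial (Fin 3) K} {x y : K × K × K} :
    goodPair g x y ↔ goodPair g y x :=
  ⟨fun ⟨s, h, h'⟩ => ⟨s, h.symm, h ▸ h'⟩, fun ⟨s, h, h'⟩ => ⟨s, h.symm, h ▸ h'⟩⟩

theorem normal_ne_zero {f : MvPolynomial (Fin 3) K} {j : Fin 3} (h2 : (2 : K) ≠ 0)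
    {x y : K × K × K} (hx : res x f = 0) (hy : res y f = 0) (hne : x.1 ≠ y.1) {s : K}
    (hs : pt x s = pt y s) (hj : eval (pt x s) (pderiv j f) ≠ 0) :
    eval (pt x s) (pderiv 2 f) ≠ 0 := by
  obtain ⟨a1, a2, -⟩ := jets_of_res hx s
  obtain ⟨b1, b2, -⟩ := jets_of_res hy s
  rw [← hs] at b1 b2
  obtain ⟨e0, e1, -⟩ := jet_at_meeting hne h2 a1 a2 b1 b2
  intro h
  rw [h, mul_zero] at e0 e1
  fin_cases j
  · exact hj e0
  · exact hj e1
  · exact hj h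

/-- Along a line that meets many others in good points, the osculating quadric is constant. -/
theorem rich_line {p : ℕ} [CharP K p] {f : MvPolynomial (Fin 3) K} {j : Fin 3}
    (hd : 1 ≤ f.totalDegree) (hp : 5 * f.totalDegree < p) (h2 : (2 : K) ≠ 0)
    (hc1 : f ∣ conf1 f) (hc2 : f ∣ conf2 f) {x : K × K × K} {Y : Finset (K × K × K)}
    (hx : res x f = 0) (hY : ∀ y ∈ Y, res y f = 0) (hne : ∀ y ∈ Y, x.1 ≠ y.1)
    (hYY : ∀ y ∈ Y, ∀ y' ∈ Y, y ≠ y' → ¬ meets y y')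
    (hrich : 10 * f.totalDegree < (Y.filter fun y => goodPair (pderiv j f) x y).card) :
    ∃ (σ : Fin 5 → K) (φ : Polynomial K), σ ≠ 0 ∧ (∀ i, res x (osc f i) = Polynomial.C (σ i) * φ) ∧
      res x (quadric σ) = 0 := by
  have hdvd : ∀ {g : MvPolynomial (Fin 3) K} {z : K × K × K}, f ∣ g → res z f = 0 → res z g = 0 := by
    rintro g z ⟨h, rfl⟩ hz
    rw [map_mul, hz, zero_mul]
  have hW : ∀ i k, res x (osc f i * dirD x.1 (osc f k) - osc f k * dirD x.1 (osc f i)) = 0 := by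
    intro i k
    by_contra hcon
    have hdeg : (osc f i * dirD x.1 (osc f k) - osc f k * dirD x.1 (osc f i)).totalDegree
        ≤ 10 * f.totalDegree :=
      deg_sub ((deg_mul (deg_osc f hd i) (deg_dirD _ (deg_osc f hd k))).trans (by omega))
        ((deg_mul (deg_osc f hd k) (deg_dirD _ (deg_osc f hd i))).trans (by omega))
    have hm := meet_count hYY hcon
    refine absurd (hrich.trans_le ((Finset.card_le_card fun y hy => ?_).trans (hm.trans hdeg)))
      (lt_irrefl _)
    rw [Finset.mem_filter] at hy ⊢
    obtain ⟨hyY, s, hs, hs'⟩ := hy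
    refine ⟨hyY, s, hs, ?_⟩
    obtain ⟨a1, a2, a3⟩ := jets_of_res hx s
    obtain ⟨b1, b2, -⟩ := jets_of_res (hY y hyY) s
    have hv1 := eval_of_res (eval_dirD_of_res (hdvd hc1 hx)) s
    have hv2 := eval_of_res (eval_dirD_of_res (hdvd hc2 hx)) s
    have hw1 := eval_of_res (eval_dirD_of_res (hdvd hc1 (hY y hyY))) s
    have hw2 := eval_of_res (eval_dirD_of_res (hdvd hc2 (hY y hyY))) s
    rw [← hs] at b1 b2 hw1 hw2
    have := osc_stationary (hne y hyY) h2 a1 a2 a3 b1 b2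
      (normal_ne_zero h2 hx (hY y hyY) (hne y hyY) hs hs') hv1 hv2 hw1 hw2 i k
    rw [map_sub, map_mul, map_mul, this, sub_self]
  obtain ⟨y, hy⟩ := Finset.card_pos.1 ((Nat.zero_le _).trans_lt hrich)
  rw [Finset.mem_filter] at hy
  obtain ⟨hyY, s, hs, hs'⟩ := hy
  obtain ⟨k, hk⟩ := osc_ne_zero h2 (normal_ne_zero h2 hx (hY y hyY) (hne y hyY) hs hs')
  have hk0 : res x (osc f k) ≠ 0 := fun h => hk (eval_of_res h s)
  have hprop : ∀ i, ∃ c, res x (osc f i) = Polynomial.C c * res x (osc f k) := by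
    intro i
    have hdeg : ∀ i, (res x (osc f i)).natDegree < p := fun i =>
      ((natDegree_res_le _ _).trans (deg_osc f hd i)).trans_lt hp
    refine proportional_of_wronskian (p := p) (hdeg i) (hdeg k) hk0 ?_
    have := hW i k
    rw [map_sub, map_mul, map_mul, ← derivative_res, ← derivative_res, sub_eq_zero] at this
    rw [this, mul_comm]
  choose σ hσ using hprop
  refine ⟨σ, res x (osc f k), fun h => ?_, hσ, ?_⟩
  · have := hσ k
    rw [h] at this
    simp at this
    exact hk0 this
  · have hid := res_osc_identity f x
    rw [hσ 0, hσ 1, hσ 2, hσ 3, hσ 4] at hid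
    have hC : ∀ a : K, res x (C a) = Polynomial.C a := fun a => (res x).commutes a
    have : res x (osc f k) * res x (quadric σ) = 0 := by
      simp only [quadric, map_add, map_mul, hC, map_pow] at hid ⊢
      linear_combination hid
    exact (mul_eq_zero.1 this).resolve_left hk0

/-- Lines on an irreducible surface of degree `δ` form few incidences, apart from those inside a
subfamily of `O(δ²)` lines, and those coming from a quadric. -/
theorem component {p : ℕ} [CharP K p] {f : MvPolynomial (Fin 3) K} (hf : Prime f)
    (hp : 100 * f.totalDegree < p) (hd : 1 ≤ f.totalDegree) {κ : ℕ} {X Y : Finset (K × K × K)}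
    (hC : Cfg κ X Y)
    (hX : ∀ x ∈ X, res x f = 0) (hY : ∀ y ∈ Y, res y f = 0) :
    ∃ Xb ⊆ X, ∃ Yb ⊆ Y, Xb.card ≤ 4 * f.totalDegree ^ 2 ∧ Yb.card ≤ 4 * f.totalDegree ^ 2 ∧
      inc X Y ≤ 13 * f.totalDegree * (X.card + Y.card) + κ * (X \ Xb).card + inc Xb Yb := by
  have h2 : (2 : K) ≠ 0 := by
    have : ((2 : ℕ) : K) ≠ 0 := by
      rw [Ne, CharP.cast_eq_zero_iff K p]
      exact fun h => absurd (Nat.le_of_dvd (by norm_num) h) (by omega)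
    exact_mod_cast this
  set δ := f.totalDegree with hδ
  -- `conf1` and `conf2` vanish at the common points of two lines of the surface
  have hmeet : ∀ x ∈ X, ∀ y ∈ Y, ∀ s, pt x s = pt y s →
      eval (pt x s) (conf1 f) = 0 ∧ eval (pt x s) (conf2 f) = 0 := by
    intro x hx y hy s hs
    obtain ⟨a1, a2, -⟩ := jets_of_res (hX x hx) s
    obtain ⟨b1, b2, -⟩ := jets_of_res (hY y hy) s
    rw [← hs] at b1 b2
    exact conf_eq_zero_of_meeting (hC.hne x hx y hy) h2 a1 a2 b1 b2
  -- if some `G` vanishes at all common points but not on the surface, then all meetings take place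
  -- on the curve `f = G = 0`
  have hcase1 : ∀ G : MvPolynomial (Fin 3) K, ¬ f ∣ G → G.totalDegree ≤ 4 * δ →
      (∀ x ∈ X, ∀ y ∈ Y, ∀ s, pt x s = pt y s → eval (pt x s) G = 0) →
      ∃ Xb ⊆ X, ∃ Yb ⊆ Y, Xb.card ≤ 4 * δ ^ 2 ∧ Yb.card ≤ 4 * δ ^ 2 ∧
      inc X Y ≤ 13 * δ * (X.card + Y.card) + κ * (X \ Xb).card + inc Xb Yb := by
    intro G hfG hG hall
    obtain ⟨Xb, hXb, Yb, hYb, c1, c2, c3⟩ := pairs_on_curve hf hfG hG hC hX hY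
    refine ⟨Xb, hXb, Yb, hYb, c1.trans (by rw [← hδ]; apply le_of_eq; ring),
      c2.trans (by rw [← hδ]; apply le_of_eq; ring), ?_⟩
    have h5 : inc X Y ≤
        ((X ×ˢ Y).filter fun z => ∃ s, pt z.1 s = pt z.2 s ∧ eval (pt z.1 s) G = 0).card := by
      refine Finset.card_le_card fun z hz => ?_
      rw [Finset.mem_filter] at hz ⊢
      obtain ⟨hz, s, hs⟩ := hz
      rw [Finset.mem_product] at hz
      exact ⟨Finset.mem_product.2 hz, s, hs, hall _ hz.1 _ hz.2 s hs⟩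
    have h6 : 4 * δ * (X.card + Y.card) ≤ 13 * δ * (X.card + Y.card) := by gcongr; norm_num
    omega
  by_cases hc1 : f ∣ conf1 f
  swap
  · exact hcase1 _ hc1 (deg_conf1 f) fun x hx y hy s hs => (hmeet x hx y hy s hs).1
  by_cases hc2 : f ∣ conf2 f
  swap
  · exact hcase1 _ hc2 (deg_conf2 f) fun x hx y hy s hs => (hmeet x hx y hy s hs).2
  -- From here on the Hessian of `f` is conformal on all tangent planes. Meetings at singular points
  -- lie on the curve `f = g = 0`, for a non-zero partial derivative `g`.
  obtain ⟨j, hj⟩ := exists_pderiv_ne_zero (p := p) f (by omega) (by omega)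
  set g := pderiv j f with hg
  have hgdeg : g.totalDegree ≤ δ := deg_pderiv j le_rfl
  have hfg : ¬ f ∣ g := by
    rintro ⟨u, hu⟩
    have h1 : g.totalDegree ≤ δ - 1 := totalDegree_pderiv_le' j f
    have hu0 : u ≠ 0 := fun h => hj (by rw [hu, h, mul_zero])
    rw [hu, totalDegree_mul_of_isDomain hf.ne_zero hu0] at h1
    omega
  -- the rich lines of both families, along which the osculating quadric is constant by `rich_line`
  set R := X.filter fun x => 10 * δ < (Y.filter fun y => goodPair g x y).card with hR
  set B := Y.filter fun y => 10 * δ < (X.filter fun x => goodPair g y x).card with hB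
  have hRS : ∀ x ∈ R, ∃ (σ : Fin 5 → K) (φ : Polynomial K), σ ≠ 0 ∧
      (∀ i, res x (osc f i) = Polynomial.C (σ i) * φ) ∧ res x (quadric σ) = 0 := by
    intro x hx
    rw [hR, Finset.mem_filter] at hx
    exact rich_line (p := p) hd (by omega) h2 hc1 hc2 (hX x hx.1) hY (hC.hne x hx.1) hC.hY hx.2
  have hBS : ∀ x ∈ B, ∃ (σ : Fin 5 → K) (φ : Polynomial K), σ ≠ 0 ∧
      (∀ i, res x (osc f i) = Polynomial.C (σ i) * φ) ∧ res x (quadric σ) = 0 := by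
    intro x hx
    rw [hB, Finset.mem_filter] at hx
    exact rich_line (p := p) hd (by omega) h2 hc1 hc2 (hY x hx.1) hX
      (fun z hz => (hC.hne z hz x hx.1).symm) hC.hX hx.2
  -- either meetings of two rich lines are rare, or the surface is part of one osculating quadric
  by_cases hmany : ∀ x ∈ R, (B.filter fun y => goodPair g x y).card ≤ 2 * δ
  · obtain ⟨Xb, hXb, Yb, hYb, c1, c2, c3⟩ := pairs_on_curve hf hfg hgdeg hC hX hY
    refine ⟨Xb, hXb, Yb, hYb, c1.trans (by rw [← hδ]; nlinarith), c2.trans (by rw [← hδ]; nlinarith), ?_⟩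
    have h1 := card_pairs_le (X \ R) Y (goodPair g) (10 * δ) fun x hx => by
      rw [Finset.mem_sdiff, hR, Finset.mem_filter, not_and] at hx
      exact not_lt.1 (hx.2 hx.1)
    have h2 := card_pairs_le' X (Y \ B) (goodPair g) (10 * δ) fun y hy => by
      rw [Finset.mem_sdiff, hB, Finset.mem_filter, not_and] at hy
      simpa only [goodPair_comm (y := y)] using not_lt.1 (hy.2 hy.1)
    have h3 := card_pairs_le R B (goodPair g) (2 * δ) hmany
    have hsub : ((X ×ˢ Y).filter fun z => meets z.1 z.2) ⊆
        ((((X ×ˢ Y).filter fun z => ∃ s, pt z.1 s = pt z.2 s ∧ eval (pt z.1 s) g = 0) ∪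
        (((X \ R) ×ˢ Y).filter fun z => goodPair g z.1 z.2)) ∪
        ((X ×ˢ (Y \ B)).filter fun z => goodPair g z.1 z.2)) ∪
        ((R ×ˢ B).filter fun z => goodPair g z.1 z.2) := by
      rintro ⟨x, y⟩ hz
      simp only [Finset.mem_union, Finset.mem_filter, Finset.mem_product, Finset.mem_sdiff] at hz ⊢
      obtain ⟨⟨hx, hy⟩, s, hs⟩ := hz
      by_cases h0 : eval (pt x s) g = 0
      · exact Or.inl (Or.inl (Or.inl ⟨⟨hx, hy⟩, s, hs, h0⟩))
      have hgp : goodPair g x y := ⟨s, hs, h0⟩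
      by_cases a : x ∈ R <;> by_cases b : y ∈ B
      · exact Or.inr ⟨⟨a, b⟩, hgp⟩
      · exact Or.inl (Or.inr ⟨⟨hx, hy, b⟩, hgp⟩)
      · exact Or.inl (Or.inl (Or.inr ⟨⟨⟨hx, a⟩, hy⟩, hgp⟩))
      · exact Or.inl (Or.inl (Or.inr ⟨⟨⟨hx, a⟩, hy⟩, hgp⟩))
    have h4 := (Finset.card_le_card hsub).trans ((Finset.card_union_le _ _).trans
      (Nat.add_le_add_right ((Finset.card_union_le _ _).trans
        (Nat.add_le_add_right (Finset.card_union_le _ _) _)) _))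
    have k1 : 10 * δ * (X \ R).card ≤ 10 * δ * X.card := by gcongr; exact Finset.sdiff_subset
    have k2 : 10 * δ * (Y \ B).card ≤ 10 * δ * Y.card := by gcongr; exact Finset.sdiff_subset
    have k3 : 2 * δ * R.card ≤ 2 * δ * X.card := by gcongr; exact Finset.filter_subset _ _
    change inc X Y ≤ _ at h4
    have k4 : 13 * δ * (X.card + Y.card) = δ * (X.card + Y.card) + 10 * δ * X.card
      + 2 * δ * X.card + 10 * δ * Y.card + 2 * δ * Y.card := by ring
    omega
  · -- The rich line `x` meets more than `2 * δ` rich lines of `B` at good points, so all of them lie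
    -- on the osculating quadric of `x`. By Bezout this quadric contains the surface.
    push Not at hmany
    obtain ⟨x, hx, hxm⟩ := hmany
    obtain ⟨σ, φ, hσ, hφ, hq⟩ := hRS x hx
    have hxX : x ∈ X := (Finset.mem_filter.1 hx).1
    have hdvd : f ∣ quadric σ := by
      by_contra hnd
      have hqd : (quadric σ).totalDegree ≤ 2 := by
        have hCd : ∀ a : K, (C a : MvPolynomial (Fin 3) K).totalDegree ≤ 0 := fun a =>
          (totalDegree_C a).le
        have hX := fun i => deg_X (K := K) i
        refine deg_add (deg_add (deg_add (deg_add ?_ ?_) ?_) ?_) ((hCd _).trans (by omega))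
        · exact deg_mul (hCd _) (deg_add (deg_mul (hX 0) (hX 2)) (deg_sq (hX 1)))
        all_goals exact (deg_mul (hCd _) (hX _)).trans (by omega)
      have := bezout_lines hf hnd hqd (B.filter fun y => goodPair g x y)
        (fun y hy => hY y (Finset.mem_filter.1 (Finset.mem_filter.1 hy).1).1) fun y hy => by
          rw [Finset.mem_filter] at hy
          obtain ⟨hyB, s, hs, hs'⟩ := hy
          have hyY := (Finset.mem_filter.1 hyB).1
          obtain ⟨σ', φ', hσ', hφ', hq'⟩ := hBS y hyB
          obtain ⟨k, hk⟩ := osc_ne_zero h2 (normal_ne_zero h2 (hX x hxX) (hY y hyY)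
            (hC.hne x hxX y hyY) hs hs')
          have e1 : ∀ i, eval (pt x s) (osc f i) = σ i * φ.eval s := fun i => by
            rw [← eval_res, hφ, Polynomial.eval_mul, Polynomial.eval_C]
          have e2 : ∀ i, eval (pt x s) (osc f i) = σ' i * φ'.eval s := fun i => by
            rw [hs, ← eval_res, hφ', Polynomial.eval_mul, Polynomial.eval_C]
          have n1 : φ.eval s ≠ 0 := fun h => hk (by rw [e1, h, mul_zero])
          have e3 : ∀ i, σ i = φ'.eval s / φ.eval s * σ' i := fun i => by
            have := (e1 i).symm.trans (e2 i)
            field_simp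
            linear_combination this
          have e4 : quadric σ = C (φ'.eval s / φ.eval s) * quadric σ' := by
            simp only [quadric, e3, map_mul]
            ring
          rw [e4, map_mul, hq', mul_zero]
      rw [← hδ] at this
      omega
    obtain ⟨u, hu⟩ := hdvd
    refine ⟨∅, Finset.empty_subset _, ∅, Finset.empty_subset _, by simp, by simp, ?_⟩
    have := inc_quadric hC hσ h2 (fun x hx => by rw [hu, map_mul, hX x hx, zero_mul])
      (fun x hx => by rw [hu, map_mul, hY x hx, zero_mul])
    rw [Finset.sdiff_empty]
    have k : Y.card ≤ 13 * δ * (X.card + Y.card) := by nlinarith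
    omega

end Component

/-! ### The incidence bound for lines in space -/

section Recursion

variable {K : Type*} [Field K]

theorem inc_union_left {X X' Y : Finset (K × K × K)} (h : Disjoint X X') :
    inc (X ∪ X') Y = inc X Y + inc X' Y := by
  simp only [inc_eq_sum, Finset.sum_union h]

theorem inc_union_right {X Y Y' : Finset (K × K × K)} (h : Disjoint Y Y') :
    inc X (Y ∪ Y') = inc X Y + inc X Y' := by
  simp only [inc_eq_sum, ← Finset.sum_add_distrib]
  refine Finset.sum_congr rfl fun x _ => ?_
  rw [Finset.filter_union, Finset.card_union_of_disjoint (Finset.disjoint_filter_filter h)]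

theorem inc_le_of_not_res {κ : ℕ} {X Y : Finset (K × K × K)} (hC : Cfg κ X Y)
    {f : MvPolynomial (Fin 3) K} (hX : ∀ x ∈ X, res x f = 0) (hY : ∀ y ∈ Y, res y f ≠ 0) :
    inc X Y ≤ f.totalDegree * Y.card := by
  refine card_pairs_le' X Y meets _ fun y hy => ?_
  refine le_trans (Finset.card_le_card fun x hx => ?_) (meet_count hC.hX (hY y hy))
  rw [Finset.mem_filter] at hx ⊢
  obtain ⟨hx, s, hs⟩ := hx
  exact ⟨hx, s, hs.symm, by rw [← hs]; exact eval_of_res (hX x hx) s⟩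

theorem inc_le_of_not_res' {κ : ℕ} {X Y : Finset (K × K × K)} (hC : Cfg κ X Y)
    {f : MvPolynomial (Fin 3) K} (hX : ∀ x ∈ X, res x f ≠ 0) (hY : ∀ y ∈ Y, res y f = 0) :
    inc X Y ≤ f.totalDegree * X.card := by
  refine card_pairs_le X Y meets _ fun x hx => ?_
  refine le_trans (Finset.card_le_card fun y hy => ?_) (meet_count hC.hY (hX x hx))
  rw [Finset.mem_filter] at hy ⊢
  obtain ⟨hy, s, hs⟩ := hy
  exact ⟨hy, s, hs, by rw [hs]; exact eval_of_res (hY y hy) s⟩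

/-- The estimate of `component` for arbitrary surfaces, by induction on the irreducible factors: a line
that is not contained in a component meets it in few points. -/
theorem surface {p : ℕ} [CharP K p] {κ : ℕ} (f : MvPolynomial (Fin 3) K) :
    f ≠ 0 → 100 * f.totalDegree < p → ∀ X Y : Finset (K × K × K), Cfg κ X Y →
    (∀ x ∈ X, res x f = 0) → (∀ y ∈ Y, res y f = 0) →
    ∃ Xb ⊆ X, ∃ Yb ⊆ Y, Xb.card ≤ 4 * f.totalDegree ^ 2 ∧ Yb.card ≤ 4 * f.totalDegree ^ 2 ∧
      inc X Y ≤ 14 * f.totalDegree * (X.card + Y.card) + κ * (X \ Xb).card + inc Xb Yb := by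
  refine WfDvdMonoid.induction_on_irreducible f (fun h => absurd rfl h) ?_ ?_
  · intro u hu _ _ X Y _ hX _
    have : X = ∅ := Finset.eq_empty_of_forall_notMem fun x hx =>
      (hu.map (res x)).ne_zero (hX x hx)
    subst this
    exact ⟨∅, le_rfl, ∅, Finset.empty_subset _, by simp, by simp, by simp [inc]⟩
  · intro g π hg hπ ih _ hp X Y hC hX hY
    have hdeg : (π * g).totalDegree = π.totalDegree + g.totalDegree :=
      totalDegree_mul_of_isDomain hπ.ne_zero hg
    rw [hdeg] at hp ⊢
    have hπd : 1 ≤ π.totalDegree := by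
      by_contra h
      have h0 : π.totalDegree = 0 := by omega
      rw [totalDegree_eq_zero_iff_eq_C] at h0
      apply hπ.not_isUnit
      rw [h0]
      refine IsUnit.map C (isUnit_iff_ne_zero.2 fun hc => hπ.ne_zero ?_)
      rw [h0, hc, C_0]
    set a := π.totalDegree
    set d := g.totalDegree
    set X1 := X.filter fun x => res x π = 0
    set X2 := X.filter fun x => ¬ res x π = 0
    set Y1 := Y.filter fun x => res x π = 0
    set Y2 := Y.filter fun x => ¬ res x π = 0
    have hXu : X1 ∪ X2 = X := Finset.filter_union_filter_not_eq _ _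
    have hYu : Y1 ∪ Y2 = Y := Finset.filter_union_filter_not_eq _ _
    have hXd : Disjoint X1 X2 := Finset.disjoint_filter_filter_not _ _ _
    have hYd : Disjoint Y1 Y2 := Finset.disjoint_filter_filter_not _ _ _
    have sX1 : X1 ⊆ X := Finset.filter_subset _ _
    have sX2 : X2 ⊆ X := Finset.filter_subset _ _
    have sY1 : Y1 ⊆ Y := Finset.filter_subset _ _
    have sY2 : Y2 ⊆ Y := Finset.filter_subset _ _
    obtain ⟨Xb, hXb, Yb, hYb, c1, c2, c3⟩ := component (p := p) hπ.prime
      (by change 100 * a < p; omega) hπd (hC.mono sX1 sY1)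
      (fun x hx => (Finset.mem_filter.1 hx).2) (fun x hx => (Finset.mem_filter.1 hx).2)
    have hr : ∀ z, res z (π * g) = 0 → ¬ res z π = 0 → res z g = 0 := fun z h h' => by
      rw [map_mul] at h
      exact (mul_eq_zero.1 h).resolve_left h'
    obtain ⟨Xb', hXb', Yb', hYb', c1', c2', c3'⟩ := ih hg (by omega) X2 Y2 (hC.mono sX2 sY2)
      (fun x hx => hr x (hX x (sX2 hx)) (Finset.mem_filter.1 hx).2)
      (fun x hx => hr x (hY x (sY2 hx)) (Finset.mem_filter.1 hx).2)
    have k1 := inc_le_of_not_res (hC.mono sX1 sY2) (f := π)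
      (fun x hx => (Finset.mem_filter.1 hx).2) (fun x hx => (Finset.mem_filter.1 hx).2)
    have k2 := inc_le_of_not_res' (hC.mono sX2 sY1) (f := π)
      (fun x hx => (Finset.mem_filter.1 hx).2) (fun x hx => (Finset.mem_filter.1 hx).2)
    have hdb : Disjoint Xb Xb' := Finset.disjoint_of_subset_left hXb
      (Finset.disjoint_of_subset_right hXb' hXd)
    have hdb' : Disjoint Yb Yb' := Finset.disjoint_of_subset_left hYb
      (Finset.disjoint_of_subset_right hYb' hYd)
    have e1 : inc X Y = inc X1 Y1 + inc X1 Y2 + (inc X2 Y1 + inc X2 Y2) := by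
      conv_lhs => rw [← hXu, ← hYu, inc_union_left hXd, inc_union_right hYd, inc_union_right hYd]
    have e2 : inc Xb Yb + inc Xb' Yb' ≤ inc (Xb ∪ Xb') (Yb ∪ Yb') := by
      rw [inc_union_left hdb, inc_union_right hdb', inc_union_right hdb']
      omega
    have e3 : (X1 \ Xb).card + (X2 \ Xb').card = (X \ (Xb ∪ Xb')).card := by
      rw [Finset.card_sdiff_of_subset hXb, Finset.card_sdiff_of_subset hXb',
        Finset.card_sdiff_of_subset (Finset.union_subset (hXb.trans sX1) (hXb'.trans sX2)),
        Finset.card_union_of_disjoint hdb, ← hXu, Finset.card_union_of_disjoint hXd]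
      have := Finset.card_le_card hXb
      have := Finset.card_le_card hXb'
      omega
    have e4 : X1.card + X2.card = X.card := by rw [← Finset.card_union_of_disjoint hXd, hXu]
    have e5 : Y1.card + Y2.card = Y.card := by rw [← Finset.card_union_of_disjoint hYd, hYu]
    refine ⟨Xb ∪ Xb', Finset.union_subset (hXb.trans sX1) (hXb'.trans sX2), Yb ∪ Yb',
      Finset.union_subset (hYb.trans sY1) (hYb'.trans sY2),
      (Finset.card_union_le _ _).trans (by nlinarith), (Finset.card_union_le _ _).trans (by nlinarith), ?_⟩
    rw [e1, ← e3, ← e4, ← e5]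
    change inc X1 Y2 ≤ a * _ at k1
    change inc X2 Y1 ≤ a * _ at k2
    change inc X1 Y1 ≤ 13 * a * _ + _ + _ at c3
    have key : ∀ x1 x2 y1 y2 : ℕ, 13 * a * (x1 + y1) + 14 * d * (x2 + y2) + a * y2 + a * x2 ≤
        14 * (a + d) * (x1 + x2 + (y1 + y2)) := fun x1 x2 y1 y2 => by
      clear_value a d
      have : 14 * (a + d) * (x1 + x2 + (y1 + y2)) = 13 * a * (x1 + y1) + 14 * d * (x2 + y2)
        + a * y2 + a * x2 + (a * x1 + a * y1 + 13 * a * x2 + 13 * a * y2 + 14 * d * x1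
          + 14 * d * y1) := by ring
      omega
    have := key X1.card X2.card Y1.card Y2.card
    rw [mul_add κ]
    omega

/-- Incidences between lines of two families of at most `n²` lines, `n ≤ p`. The family `X` is cut into
`12 * 192 ^ 2` pieces of at most `s` lines, each of which lies on a surface of degree at most
`d = n / 192`. On such a surface all but `(2 * d) ^ 2` lines of each family are controlled by
`surface`, and the remaining ones by induction. The recursion closes since
`12 * 192 ^ 2 * 2 ^ 3 / 192 ^ 3 = 1 / 2` and `12 * 192 * 29 ≤ 500000`. -/
theorem inc_bound {p : ℕ} [CharP K p] {κ : ℕ} (n : ℕ) : n ≤ p → 0 < p →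
    ∀ X Y : Finset (K × K × K), Cfg κ X Y → X.card ≤ n ^ 2 → Y.card ≤ n ^ 2 →
      inc X Y ≤ 1000000 * n ^ 3 + κ * X.card := by
  induction n using Nat.strong_induction_on with
  | _ n ih =>
  intro hnp hp0 X Y hC hX hY
  by_cases hn : n < 768
  · have h1 : inc X Y ≤ (X ×ˢ Y).card := Finset.card_filter_le _ _
    rw [Finset.card_product] at h1
    have h2 : X.card * Y.card ≤ n ^ 2 * n ^ 2 := Nat.mul_le_mul hX hY
    have h3 : n ^ 2 * n ^ 2 = n * n ^ 3 := by ring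
    have h4 : n * n ^ 3 ≤ 1000000 * n ^ 3 := Nat.mul_le_mul_right _ (by omega)
    omega
  push Not at hn
  set d := n / 192 with hd
  have hd1 : 192 * d ≤ n := Nat.mul_div_le n 192
  have hd2 : n < 192 * (d + 1) := by omega
  have hd3 : 4 ≤ d := by omega
  set s := ((d + 1) ^ 2 - 1) / 6 with hs
  have hs1 : s * 6 < (d + 1) ^ 2 := by
    have : 0 < (d + 1) ^ 2 := by positivity
    omega
  have hs2 : (d + 1) ^ 2 ≤ 12 * s := by
    have : 25 ≤ (d + 1) ^ 2 := by nlinarith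
    omega
  -- a piece of `X` with at most `s` lines
  have hpiece : ∀ X' ⊆ X, X'.card ≤ s →
      inc X' Y ≤ 29 * d * n ^ 2 + 1000000 * (2 * d) ^ 3 + κ * X'.card := by
    intro X' hX' hcard
    have hC' := hC.mono hX' (Finset.Subset.refl Y)
    obtain ⟨f, hf0, hfd, hf⟩ := exists_vanishing X' d (by omega)
    set Y1 := Y.filter fun x => res x f = 0
    set Y2 := Y.filter fun x => ¬ res x f = 0
    have hYu : Y1 ∪ Y2 = Y := Finset.filter_union_filter_not_eq _ _
    have hYd : Disjoint Y1 Y2 := Finset.disjoint_filter_filter_not _ _ _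
    have sY1 : Y1 ⊆ Y := Finset.filter_subset _ _
    have sY2 : Y2 ⊆ Y := Finset.filter_subset _ _
    have k1 := inc_le_of_not_res (hC'.mono (Finset.Subset.refl X') sY2) (f := f) hf
      (fun x hx => (Finset.mem_filter.1 hx).2)
    obtain ⟨Xb, hXb, Yb, hYb, c1, c2, c3⟩ := surface (p := p) f hf0 (by omega) X' Y1
      (hC'.mono (Finset.Subset.refl X') sY1) hf (fun x hx => (Finset.mem_filter.1 hx).2)
    have hb : 4 * f.totalDegree ^ 2 ≤ (2 * d) ^ 2 := by
      have := Nat.pow_le_pow_left hfd 2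
      rw [mul_pow]
      omega
    have k2 := ih (2 * d) (by omega) (by omega) hp0 Xb Yb (hC'.mono hXb (hYb.trans sY1))
      (c1.trans hb) (c2.trans hb)
    have e1 : inc X' Y = inc X' Y1 + inc X' Y2 := by
      conv_lhs => rw [← hYu, inc_union_right hYd]
    have e2 : X'.card = (X' \ Xb).card + Xb.card := by
      rw [Finset.card_sdiff_add_card_eq_card hXb]
    have e3 : X'.card ≤ n ^ 2 := (Finset.card_le_card hX').trans hX
    have e4 : Y1.card ≤ n ^ 2 := (Finset.card_le_card sY1).trans hY
    have e5 : Y2.card ≤ n ^ 2 := (Finset.card_le_card sY2).trans hY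
    have k3 : 14 * f.totalDegree * (X'.card + Y1.card) ≤ 14 * d * (n ^ 2 + n ^ 2) :=
      Nat.mul_le_mul (by omega) (by omega)
    have k4 : f.totalDegree * Y2.card ≤ d * n ^ 2 := Nat.mul_le_mul hfd e5
    have k5 : κ * X'.card = κ * (X' \ Xb).card + κ * Xb.card := by rw [← mul_add, ← e2]
    have k6 : 29 * d * n ^ 2 = 14 * d * (n ^ 2 + n ^ 2) + d * n ^ 2 := by ring
    omega
  have hall : ∀ j : ℕ, ∀ X' ⊆ X, X'.card ≤ j * s →
      inc X' Y ≤ j * (29 * d * n ^ 2 + 1000000 * (2 * d) ^ 3) + κ * X'.card := by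
    intro j
    induction j with
    | zero =>
      intro X' _ h
      have : X' = ∅ := Finset.card_eq_zero.1 (by omega)
      subst this
      simp [inc]
    | succ j ihj =>
      intro X' hX' h
      by_cases hsm : X'.card ≤ s
      · have := hpiece X' hX' hsm
        have h5 : 29 * d * n ^ 2 + 1000000 * (2 * d) ^ 3 ≤
          (j + 1) * (29 * d * n ^ 2 + 1000000 * (2 * d) ^ 3) := Nat.le_mul_of_pos_left _ (by omega)
        omega
      · push Not at hsm
        obtain ⟨Z, hZ, hZc⟩ := Finset.exists_subset_card_eq hsm.le
        have k1 := hpiece Z (hZ.trans hX') hZc.le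
        have hc : (X' \ Z).card + Z.card = X'.card := Finset.card_sdiff_add_card_eq_card hZ
        have k2 := ihj (X' \ Z) (Finset.sdiff_subset.trans hX') (by rw [add_mul] at h; omega)
        have e1 : inc X' Y = inc (X' \ Z) Y + inc Z Y := by
          conv_lhs => rw [← Finset.sdiff_union_of_subset hZ]
          exact inc_union_left Finset.sdiff_disjoint
        rw [e1, ← hc, mul_add κ, add_mul j 1, one_mul]
        omega
  have hfin := hall (12 * 192 ^ 2) X (Finset.Subset.refl X) (by
    calc X.card ≤ n ^ 2 := hX
      _ ≤ (192 * (d + 1)) ^ 2 := Nat.pow_le_pow_left hd2.le 2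
      _ = 192 ^ 2 * (d + 1) ^ 2 := by ring
      _ ≤ 192 ^ 2 * (12 * s) := Nat.mul_le_mul_left _ hs2
      _ = 12 * 192 ^ 2 * s := by ring)
  have h1 : 192 * d * n ^ 2 ≤ n ^ 3 := by
    calc 192 * d * n ^ 2 ≤ n * n ^ 2 := Nat.mul_le_mul_right _ hd1
      _ = n ^ 3 := by ring
  have h2 : (192 * d) ^ 3 ≤ n ^ 3 := Nat.pow_le_pow_left hd1 3
  have h3 : 12 * 192 ^ 2 * (29 * d * n ^ 2 + 1000000 * (2 * d) ^ 3) ≤ 1000000 * n ^ 3 := by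
    have e1 : 12 * 192 ^ 2 * (29 * d * n ^ 2 + 1000000 * (2 * d) ^ 3)
      = 12 * 192 * 29 * (192 * d * n ^ 2) + 500000 * (192 * d) ^ 3 := by ring
    rw [e1]
    omega
  omega

end Recursion

/-! ### Lines and Cartesian products -/

section Cartesian

theorem omega_of_meets {K : Type*} [Field K] {x y : K × K × K} (h : meets x y) :
    x.1 * y.2.1 - y.1 * x.2.1 + x.2.2 - y.2.2 = 0 := by
  obtain ⟨s, hs⟩ := h
  have h1 := congrFun hs 1
  have h2 := congrFun hs 2
  simp [pt] at h1 h2 ⊢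
  linear_combination h2 - (x.1 + y.1) * h1

/-- Cauchy–Schwarz for the fibres of a map over a set `B`. -/
theorem sq_card_fibers_le {α β : Type*} (T : Finset α) (g : α → β) (B : Finset β) :
    (T.filter fun t => g t ∈ B).card ^ 2 ≤
      B.card * ((T ×ˢ T).filter fun z => g z.1 = g z.2).card := by
  have h1 : (T.filter fun t => g t ∈ B).card = ∑ b ∈ B, (T.filter fun t => g t = b).card := by
    have hmaps : Set.MapsTo g (T.filter fun t => g t ∈ B) B := fun t ht =>
      (Finset.mem_filter.1 ht).2
    rw [Finset.card_eq_sum_card_fiberwise hmaps]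
    refine Finset.sum_congr rfl fun b hb => congrArg Finset.card ?_
    ext t
    simp only [Finset.mem_filter]
    constructor
    · rintro ⟨⟨a, -⟩, c⟩; exact ⟨a, c⟩
    · rintro ⟨a, c⟩; exact ⟨⟨a, c ▸ hb⟩, c⟩
  have h2 : ∑ b ∈ B, (T.filter fun t => g t = b).card ^ 2 ≤
      ((T ×ˢ T).filter fun z => g z.1 = g z.2).card := by
    calc ∑ b ∈ B, (T.filter fun t => g t = b).card ^ 2
        = ∑ b ∈ B, ((((T ×ˢ T).filter fun z => g z.1 = g z.2).filter fun z => g z.1 ∈ B).filter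
            fun z => g z.1 = b).card := by
          refine Finset.sum_congr rfl fun b hb => ?_
          rw [sq, ← Finset.card_product]
          congr 1
          ext ⟨t, t'⟩
          simp only [Finset.mem_filter, Finset.mem_product]
          constructor
          · rintro ⟨⟨a, c⟩, d, e⟩
            exact ⟨⟨⟨⟨a, d⟩, c.trans e.symm⟩, c ▸ hb⟩, c⟩
          · rintro ⟨⟨⟨⟨a, d⟩, e⟩, -⟩, c⟩
            exact ⟨⟨a, c⟩, d, e ▸ c⟩
      _ = (((T ×ˢ T).filter fun z => g z.1 = g z.2).filter fun z => g z.1 ∈ B).card :=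
          (Finset.card_eq_sum_card_fiberwise fun z hz => (Finset.mem_filter.1 hz).2).symm
      _ ≤ _ := Finset.card_filter_le _ _
  rw [h1]
  exact sq_sum_le_card_mul_sum_sq.trans (Nat.mul_le_mul_left _ h2)

variable {p : ℕ} [Fact p.Prime]

/-- `cartesian`, with an auxiliary infinite extension field. -/
theorem cartesian_aux {K : Type*} [Field K] [Infinite K] (i : ZMod p →+* K)
    (L : Finset (ZMod p × ZMod p)) (A B : Finset (ZMod p)) (hL : ∀ l ∈ L, l.1 ≠ 0)
    (κ n : ℕ) (hA : A.card ≤ κ) (hκ : ∀ u v, (L.filter fun l => l.1 * u + l.2 = v).card ≤ κ)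
    (hnp : n ≤ p) (hn : L.card * A.card ≤ n ^ 2) :
    ((L ×ˢ A).filter fun t => t.1.1 * t.2 + t.1.2 ∈ B).card ^ 2 ≤
      B.card * (1000000 * n ^ 3 + κ * (L.card * A.card)) := by
  have hcs : ((L ×ˢ A).filter fun t => t.1.1 * t.2 + t.1.2 ∈ B).card ^ 2 ≤
      B.card * (((L ×ˢ A) ×ˢ (L ×ˢ A)).filter fun z =>
        z.1.1.1 * z.1.2 + z.1.1.2 = z.2.1.1 * z.2.2 + z.2.1.2).card := by
    convert sq_card_fibers_le (L ×ˢ A) (fun t => t.1.1 * t.2 + t.1.2) B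
  refine hcs.trans (Nat.mul_le_mul_left _ ?_)
  have ii : Function.Injective i := i.injective
  have : CharP K p := charP_of_injective_ringHom ii p
  -- The shift by `a0 ∉ ZMod p` and the scaling by a generic `τ` preserve the coincidences
  -- `m₁ a₂ + c₁ = m₂ a₁ + c₂`. They ensure that lines of one family do not meet and that lines of
  -- different families are not parallel.
  obtain ⟨a0, ha0⟩ := Infinite.exists_notMem_finset (Finset.univ.image i)
  have ha0' : ∀ z : ZMod p, a0 ≠ i z := fun z h => ha0 (by simp [h])
  set u : (ZMod p × ZMod p) × ZMod p → (ZMod p × ZMod p) × ZMod p → K :=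
    fun s t => i s.1.1 * (i t.2 + a0) - i t.1.1 * (i s.2 + a0) with hu
  set v : (ZMod p × ZMod p) × ZMod p → (ZMod p × ZMod p) × ZMod p → K :=
    fun s t => i s.1.2 - i t.1.2 - (i s.1.1 - i t.1.1) * a0 with hv
  set T := L ×ˢ A with hT
  obtain ⟨τ, hτ⟩ := Infinite.exists_notMem_finset (insert 0
    ((T ×ˢ T).image (fun z => -v z.1 z.2 / u z.1 z.2) ∪
      (T ×ˢ T).image (fun z => -u z.1 z.2 / v z.1 z.2) ∪
      (T ×ˢ T).image (fun z => i z.2.1.1 / i z.1.1.1)))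
  simp only [Finset.mem_insert, Finset.mem_union, not_or] at hτ
  obtain ⟨hτ0, ⟨hτ1, hτ2⟩, hτ3⟩ := hτ
  have himg : ∀ g : ((ZMod p × ZMod p) × ZMod p) × ((ZMod p × ZMod p) × ZMod p) → K,
      τ ∉ (T ×ˢ T).image g → ∀ s ∈ T, ∀ t ∈ T, g (s, t) ≠ τ := fun g hg s hs t ht h =>
    hg (Finset.mem_image.2 ⟨(s, t), Finset.mem_product.2 ⟨hs, ht⟩, h⟩)
  have hv0 : ∀ s t, s.1 ≠ t.1 → v s t ≠ 0 := by
    intro s t hst h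
    by_cases hm : s.1.1 = t.1.1
    · apply hst
      refine Prod.ext hm (ii ?_)
      simp only [hv, hm] at h
      linear_combination h
    · apply ha0' ((s.1.2 - t.1.2) / (s.1.1 - t.1.1))
      have : i s.1.1 - i t.1.1 ≠ 0 := sub_ne_zero.2 fun h => hm (ii h)
      rw [map_div₀, map_sub, map_sub]
      field_simp
      simp only [hv] at h
      linear_combination -h
  have huv : ∀ s ∈ T, ∀ t ∈ T, s ≠ t → u s t ≠ 0 ∨ v s t ≠ 0 := by
    intro s hs t ht hst
    by_cases h1 : s.1 = t.1
    · left
      have h2 : s.2 ≠ t.2 := fun h => hst (Prod.ext h1 h)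
      have : u s t = i s.1.1 * (i t.2 - i s.2) := by simp only [hu, h1]; ring
      rw [this]
      refine mul_ne_zero ?_ (sub_ne_zero.2 fun h => h2 (ii h.symm))
      rw [Ne, map_eq_zero]
      exact hL _ (Finset.mem_product.1 hs).1
    · exact Or.inr (hv0 s t h1)
  set X : (ZMod p × ZMod p) × ZMod p → K × K × K :=
    fun t => (τ * i t.1.1, i t.2 + a0, i t.1.2 - i t.1.1 * a0) with hX
  set Y : (ZMod p × ZMod p) × ZMod p → K × K × K :=
    fun t => (i t.1.1, (i t.2 + a0) / τ, i t.1.2 - i t.1.1 * a0) with hY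
  have hm0 : ∀ s ∈ T, i s.1.1 ≠ 0 := fun s hs => by
    rw [Ne, map_eq_zero]
    exact hL _ (Finset.mem_product.1 hs).1
  have Xinj : Function.Injective X := by
    rintro ⟨⟨m, c⟩, a⟩ ⟨⟨m', c'⟩, a'⟩ h
    simp only [hX, Prod.mk.injEq] at h
    obtain ⟨h1, h2, h3⟩ := h
    have e1 := ii (mul_left_cancel₀ hτ0 h1)
    have e2 := ii (add_right_cancel h2)
    subst e1 e2
    have e3 := ii (sub_left_inj.1 h3)
    subst e3
    rfl
  have Yinj : Function.Injective Y := by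
    rintro ⟨⟨m, c⟩, a⟩ ⟨⟨m', c'⟩, a'⟩ h
    simp only [hY, Prod.mk.injEq] at h
    obtain ⟨h1, h2, h3⟩ := h
    have e1 := ii h1
    have e2 := ii (add_right_cancel ((div_left_inj' hτ0).1 h2))
    subst e1 e2
    have e3 := ii (sub_left_inj.1 h3)
    subst e3
    rfl
  have hne : ∀ s ∈ T, ∀ t ∈ T, (X s).1 ≠ (Y t).1 := by
    rintro ⟨⟨m, c⟩, a⟩ hs ⟨⟨m', c'⟩, a'⟩ ht h
    refine himg _ hτ3 _ hs _ ht ?_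
    simp only [hX, hY] at h
    have := hm0 _ hs
    simp only at this ⊢
    rw [← h]
    field_simp
  have hmeet : ∀ s ∈ T, ∀ t ∈ T, (meets (X s) (Y t) ↔
      s.1.1 * t.2 + s.1.2 = t.1.1 * s.2 + t.1.2) := by
    intro s hs t ht
    rw [meets_iff (hne s hs t ht), ← ii.eq_iff]
    simp only [hX, hY, map_add, map_mul]
    have : τ * i s.1.1 * ((i t.2 + a0) / τ) = i s.1.1 * (i t.2 + a0) := by field_simp
    rw [this]
    constructor <;> intro h <;> linear_combination h
  have hcfg : Cfg κ (T.image X) (T.image Y) := by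
    constructor
    · intro x hx x' hx' hxx hm
      obtain ⟨s, hs, rfl⟩ := Finset.mem_image.1 hx
      obtain ⟨t, ht, rfl⟩ := Finset.mem_image.1 hx'
      have hω := omega_of_meets hm
      have h1 : τ * u s t + v s t = 0 := by
        simp only [hX] at hω
        simp only [hu, hv]
        linear_combination hω
      have hst : s ≠ t := fun h => hxx (by rw [h])
      by_cases hu0 : u s t = 0
      · rcases huv s hs t ht hst with h | h
        · exact h hu0
        · exact h (by rw [hu0] at h1; linear_combination h1)
      · exact himg _ hτ1 s hs t ht
          (by change -v s t / u s t = τ; field_simp; linear_combination -h1)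
    · intro x hx x' hx' hxx hm
      obtain ⟨s, hs, rfl⟩ := Finset.mem_image.1 hx
      obtain ⟨t, ht, rfl⟩ := Finset.mem_image.1 hx'
      have hω := omega_of_meets hm
      have h1 : u s t + τ * v s t = 0 := by
        simp only [hY] at hω
        simp only [hu, hv]
        field_simp at hω
        linear_combination hω
      have hst : s ≠ t := fun h => hxx (by rw [h])
      by_cases hu0 : v s t = 0
      · rcases huv s hs t ht hst with h | h
        · exact h (by rw [hu0] at h1; linear_combination h1)
        · exact h hu0
      · exact himg _ hτ2 s hs t ht
          (by change -u s t / v s t = τ; field_simp; linear_combination -h1)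
    · intro x hx x' hx'
      obtain ⟨s, hs, rfl⟩ := Finset.mem_image.1 hx
      obtain ⟨t, ht, rfl⟩ := Finset.mem_image.1 hx'
      exact hne s hs t ht
    · intro x hx x' hx' hxx
      obtain ⟨s, hs, rfl⟩ := Finset.mem_image.1 hx
      obtain ⟨t, ht, rfl⟩ := Finset.mem_image.1 hx'
      rw [Finset.filter_image]
      refine Finset.card_image_le.trans ?_
      have hsub : (T.filter fun z => meets (X s) (Y z) ∧ meets (X t) (Y z)) ⊆
          T.filter fun z => s.1.1 * z.2 + s.1.2 = z.1.1 * s.2 + z.1.2 ∧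
            t.1.1 * z.2 + t.1.2 = z.1.1 * t.2 + z.1.2 := by
        intro z hz
        rw [Finset.mem_filter] at hz ⊢
        rw [hmeet s hs z hz.1, hmeet t ht z hz.1] at hz
        exact hz
      refine (Finset.card_le_card hsub).trans ?_
      by_cases h2 : s.2 = t.2
      · -- the two lines of the plane differ, and a common partner passes through a fixed point
        by_cases h1 : s.1.1 = t.1.1
        · rw [Finset.card_eq_zero.2]
          · exact Nat.zero_le _
          refine Finset.filter_eq_empty_iff.2 fun z _ hz => hxx ?_
          congr 1
          refine Prod.ext (Prod.ext h1 ?_) h2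
          obtain ⟨h3, h4⟩ := hz
          rw [h1, h2] at h3
          linear_combination h3 - h4
        · set a := (t.1.2 - s.1.2) / (s.1.1 - t.1.1) with ha
          refine le_trans (Finset.card_le_card_of_injOn Prod.fst (fun z hz => ?_) ?_)
            (hκ s.2 (s.1.1 * a + s.1.2))
          · rw [Finset.mem_coe, Finset.mem_filter] at hz ⊢
            obtain ⟨hzT, h3, h4⟩ := hz
            have hz2 : z.2 = a := by
              have : s.1.1 - t.1.1 ≠ 0 := sub_ne_zero.2 h1
              rw [ha]
              field_simp
              rw [← h2] at h4
              linear_combination h3 - h4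
            refine ⟨(Finset.mem_product.1 hzT).1, ?_⟩
            rw [← hz2, h3]
          · intro z hz w hw hzw
            rw [Finset.mem_coe, Finset.mem_filter] at hz hw
            obtain ⟨-, h3, h4⟩ := hz
            obtain ⟨-, h5, h6⟩ := hw
            refine Prod.ext hzw ?_
            have : s.1.1 - t.1.1 ≠ 0 := sub_ne_zero.2 h1
            apply mul_left_cancel₀ this
            rw [← h2] at h4 h6
            rw [hzw] at h3 h4
            linear_combination h3 - h4 - h5 + h6
      · refine le_trans (Finset.card_le_card_of_injOn Prod.snd (fun z hz => ?_) ?_) hA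
        · rw [Finset.mem_coe, Finset.mem_filter] at hz
          exact (Finset.mem_product.1 hz.1).2
        · intro z hz w hw hzw
          rw [Finset.mem_coe, Finset.mem_filter] at hz hw
          obtain ⟨-, h3, h4⟩ := hz
          obtain ⟨-, h5, h6⟩ := hw
          rw [hzw] at h3 h4
          have e1 : z.1.1 = w.1.1 := by
            apply mul_left_cancel₀ (sub_ne_zero.2 h2)
            linear_combination -h3 + h4 + h5 - h6
          refine Prod.ext (Prod.ext e1 ?_) hzw
          rw [e1] at h3
          linear_combination -h3 + h5
  have hcX : (T.image X).card = L.card * A.card := by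
    rw [Finset.card_image_of_injective _ Xinj, hT, Finset.card_product]
  have hcY : (T.image Y).card = L.card * A.card := by
    rw [Finset.card_image_of_injective _ Yinj, hT, Finset.card_product]
  have hb := inc_bound (p := p) n hnp (Nat.Prime.pos Fact.out) _ _ hcfg (by rw [hcX]; exact hn)
    (by rw [hcY]; exact hn)
  rw [hcX] at hb
  refine le_trans ?_ hb
  rw [inc]
  refine Finset.card_le_card_of_injOn
    (fun z => (X (z.1.1, z.2.2), Y (z.2.1, z.1.2))) (fun z hz => ?_) ?_
  · rw [Finset.mem_coe, Finset.mem_filter, Finset.mem_product, hT, Finset.mem_product,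
      Finset.mem_product] at hz
    obtain ⟨⟨⟨h1, h2⟩, h3, h4⟩, h5⟩ := hz
    have m1 : (z.1.1, z.2.2) ∈ T := Finset.mem_product.2 ⟨h1, h4⟩
    have m2 : (z.2.1, z.1.2) ∈ T := Finset.mem_product.2 ⟨h3, h2⟩
    rw [Finset.mem_coe, Finset.mem_filter]
    exact ⟨Finset.mem_product.2 ⟨Finset.mem_image_of_mem _ m1, Finset.mem_image_of_mem _ m2⟩,
      (hmeet _ m1 _ m2).2 h5⟩
  · rintro ⟨⟨l, a⟩, l', a'⟩ _ ⟨⟨k, b⟩, k', b'⟩ _ h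
    simp only [Prod.mk.injEq] at h
    have e1 := Xinj h.1
    have e2 := Yinj h.2
    simp only [Prod.mk.injEq] at e1 e2
    simp [e1, e2]

/-- Incidences of the lines `b = m a + c`, `(m, c) ∈ L`, with a Cartesian product `A × B`: a
coincidence `m a + c = m' a' + c'` is read as a meeting of the line in space attached to
`(m, c, a')` with the one attached to `(m', c', a)`. -/
theorem cartesian (L : Finset (ZMod p × ZMod p)) (A B : Finset (ZMod p)) (hL : ∀ l ∈ L, l.1 ≠ 0)
    (κ n : ℕ) (hA : A.card ≤ κ) (hκ : ∀ u v, (L.filter fun l => l.1 * u + l.2 = v).card ≤ κ)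
    (hnp : n ≤ p) (hn : L.card * A.card ≤ n ^ 2) :
    ((L ×ˢ A).filter fun t => t.1.1 * t.2 + t.1.2 ∈ B).card ^ 2 ≤
      B.card * (1000000 * n ^ 3 + κ * (L.card * A.card)) :=
  cartesian_aux (algebraMap (ZMod p) (AlgebraicClosure (ZMod p))) L A B hL κ n hA hκ hnp hn

end Cartesian

/-! ### Partial linear spaces -/

section PartialLinear

variable {α β : Type*}

/-- Two distinct points of `Q` lie on at most one line of `Λ`, for the incidence relation `I`. -/
def PartialLinear (Q : Finset α) (Λ : Finset β) (I : α → β → Prop) : Prop :=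
  ∀ q ∈ Q, ∀ q' ∈ Q, q ≠ q' → ∀ w ∈ Λ, ∀ w' ∈ Λ, I q w → I q w' → I q' w → I q' w' → w = w'

theorem flags_eq (Q : Finset α) (Λ : Finset β) (I : α → β → Prop) :
    ∑ q ∈ Q, (Λ.filter fun w => I q w).card = ∑ w ∈ Λ, (Q.filter fun q => I q w).card :=
  Finset.sum_card_bipartiteAbove_eq_sum_card_bipartiteBelow I

theorem flags_ge {Q : Finset α} {Λ : Finset β} {I : α → β → Prop} {k : ℕ}
    (hk : ∀ w ∈ Λ, k ≤ (Q.filter fun q => I q w).card) :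
    Λ.card * k ≤ ∑ q ∈ Q, (Λ.filter fun w => I q w).card := by
  rw [flags_eq, ← smul_eq_mul]
  exact Finset.card_nsmul_le_sum _ _ _ hk

/-- Counting pairs of points on lines. -/
theorem pairs_bound {Q : Finset α} {Λ : Finset β} {I : α → β → Prop} {k : ℕ}
    (hl : PartialLinear Q Λ I) (hk : ∀ w ∈ Λ, k ≤ (Q.filter fun q => I q w).card) :
    Λ.card * (k * (k - 1)) ≤ Q.card ^ 2 := by
  have h1 : (Λ.biUnion fun w => (Q.filter fun q => I q w).offDiag).card
      = ∑ w ∈ Λ, (Q.filter fun q => I q w).offDiag.card := by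
    refine Finset.card_biUnion fun w hw w' hw' hne => Finset.disjoint_left.2 fun z hz hz' => hne ?_
    simp only [Finset.mem_offDiag, Finset.mem_filter] at hz hz'
    exact hl _ hz.1.1 _ hz.2.1.1 hz.2.2 w hw w' hw' hz.1.2 hz'.1.2 hz.2.1.2 hz'.2.1.2
  have h2 : (Λ.biUnion fun w => (Q.filter fun q => I q w).offDiag) ⊆ Q ×ˢ Q := by
    intro z hz
    simp only [Finset.mem_biUnion, Finset.mem_offDiag, Finset.mem_filter] at hz
    obtain ⟨w, -, h, h', -⟩ := hz
    exact Finset.mem_product.2 ⟨h.1, h'.1⟩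
  have h3 := Finset.card_le_card h2
  rw [h1, Finset.card_product, ← sq] at h3
  refine le_trans ?_ h3
  rw [← smul_eq_mul]
  refine Finset.card_nsmul_le_sum _ _ _ fun w hw => ?_
  rw [Finset.offDiag_card, ← Nat.mul_sub_one]
  have := hk w hw
  exact Nat.mul_le_mul this (by omega)

/-- The Cauchy–Schwarz bound for very rich lines. -/
theorem very_rich_bound {Q : Finset α} {Λ : Finset β} {I : α → β → Prop} {k : ℕ}
    (hl : PartialLinear Q Λ I) (hk : ∀ w ∈ Λ, k ≤ (Q.filter fun q => I q w).card)
    (hk2 : 2 * Q.card ≤ k ^ 2) : Λ.card * k ≤ 2 * Q.card := by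
  set F := ∑ q ∈ Q, (Λ.filter fun w => I q w).card with hF
  have hF1 : Λ.card * k ≤ F := flags_ge hk
  have hsq : ∑ q ∈ Q, (Λ.filter fun w => I q w).card ^ 2 ≤ F + Λ.card ^ 2 := by
    calc ∑ q ∈ Q, (Λ.filter fun w => I q w).card ^ 2
        = ∑ q ∈ Q, ((Λ ×ˢ Λ).filter fun z => I q z.1 ∧ I q z.2).card := by
          refine Finset.sum_congr rfl fun q _ => ?_
          rw [sq, ← Finset.card_product, Finset.filter_product]
      _ = ∑ z ∈ Λ ×ˢ Λ, (Q.filter fun q => I q z.1 ∧ I q z.2).card := by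
          convert flags_eq Q (Λ ×ˢ Λ) fun q z => I q z.1 ∧ I q z.2
      _ ≤ ∑ z ∈ Λ ×ˢ Λ, ((if z.1 = z.2 then (Q.filter fun q => I q z.1).card else 0) + 1) := by
          refine Finset.sum_le_sum fun z hz => ?_
          split_ifs with h
          · rw [← h]
            simp only [and_self]
            omega
          · rw [zero_add]
            refine Finset.card_le_one.2 fun q hq q' hq' => ?_
            rw [Finset.mem_filter] at hq hq'
            rw [Finset.mem_product] at hz
            by_contra hne
            exact h (hl q hq.1 q' hq'.1 hne _ hz.1 _ hz.2 hq.2.1 hq.2.2 hq'.2.1 hq'.2.2)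
      _ = F + Λ.card ^ 2 := by
          rw [Finset.sum_add_distrib, Finset.sum_product, Finset.sum_const, Finset.card_product,
            hF, flags_eq, smul_eq_mul, mul_one, sq]
          congr 1
          refine Finset.sum_congr rfl fun w hw => ?_
          rw [Finset.sum_ite_eq, if_pos hw]
  have hcs : F ^ 2 ≤ Q.card * (F + Λ.card ^ 2) :=
    sq_sum_le_card_mul_sum_sq.trans (Nat.mul_le_mul_left _ hsq)
  have h1 : 2 * (Q.card * Λ.card ^ 2) ≤ F ^ 2 := by
    calc 2 * (Q.card * Λ.card ^ 2) = (2 * Q.card) * Λ.card ^ 2 := by ring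
      _ ≤ k ^ 2 * Λ.card ^ 2 := Nat.mul_le_mul_right _ hk2
      _ = (Λ.card * k) ^ 2 := by ring
      _ ≤ F ^ 2 := Nat.pow_le_pow_left hF1 2
  have h2 : F * F ≤ 2 * Q.card * F := by nlinarith
  rcases Nat.eq_zero_or_pos F with h0 | h0
  · omega
  · exact hF1.trans (Nat.le_of_mul_le_mul_right h2 h0)

/-- Two points `q₁`, `q₂` which are joined, by distinct lines, to many points of high degree. -/
theorem exists_projection_centers {Q : Finset α} {Λ : Finset β} {I : α → β → Prop} {k : ℕ}
    (hl : PartialLinear Q Λ I) (hk : ∀ w ∈ Λ, k ≤ (Q.filter fun q => I q w).card) (hk2 : 2 ≤ k)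
    (hr : 8 * Q.card ≤ Λ.card * k) (hn : 0 < Q.card) :
    ∃ q₁ ∈ Q, ∃ q₂ ∈ Q, ∃ G ⊆ Q, Λ.card ^ 2 * k ^ 4 ≤ 32 * Q.card ^ 3 * G.card ∧ ∀ q ∈ G,
      Λ.card * k ≤ 2 * Q.card * (Λ.filter fun w => I q w).card ∧ q₁ ≠ q ∧ q₂ ≠ q ∧
      ∃ w₁ ∈ Λ, ∃ w₂ ∈ Λ, w₁ ≠ w₂ ∧ I q₁ w₁ ∧ I q w₁ ∧ I q₂ w₂ ∧ I q w₂ := by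
  set d : α → ℕ := fun q => (Λ.filter fun w => I q w).card with hd
  set n := Q.card with hn'
  set M := Λ.card with hM
  set R : α → α × α → Prop := fun q z => Λ.card * k ≤ 2 * Q.card * d q ∧ z.1 ≠ q ∧ z.2 ≠ q ∧
    ∃ w₁ ∈ Λ, ∃ w₂ ∈ Λ, w₁ ≠ w₂ ∧ I z.1 w₁ ∧ I q w₁ ∧ I z.2 w₂ ∧ I q w₂ with hR
  by_contra hcon
  push Not at hcon
  have hG : ∀ z ∈ Q ×ˢ Q, 32 * n ^ 3 * (Q.filter fun q => R q z).card < M ^ 2 * k ^ 4 := by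
    intro z hz
    by_contra hlt
    rw [Finset.mem_product] at hz
    obtain ⟨q, hq, hq'⟩ := hcon z.1 hz.1 z.2 hz.2 (Q.filter fun q => R q z) (Finset.filter_subset _ _)
      (not_lt.1 hlt)
    obtain ⟨h1, h2, h3, w₁, hw₁, w₂, hw₂, h4, h5, h6, h7, h8⟩ := (Finset.mem_filter.1 hq).2
    exact hq' h1 h2 h3 w₁ hw₁ w₂ hw₂ h4 h5 h6 h7 h8
  set Qs := Q.filter fun q => M * k ≤ 2 * n * d q with hQs
  have hlow : ∀ q ∈ Qs, d q * (d q - 1) * (k - 1) ^ 2 ≤ ((Q ×ˢ Q).filter fun z => R q z).card := by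
    intro q hq
    rw [hQs, Finset.mem_filter] at hq
    set D := Λ.filter fun w => I q w with hD
    set s : β → Finset α := fun w => (Q.filter fun x => I x w).erase q with hs
    have h1 : (D.offDiag.biUnion fun z => s z.1 ×ˢ s z.2).card
        = ∑ z ∈ D.offDiag, (s z.1 ×ˢ s z.2).card := by
      have huniq : ∀ w ∈ D, ∀ w' ∈ D, ∀ x, x ∈ s w → x ∈ s w' → w = w' := by
        intro w hw w' hw' x hx hx'
        simp only [hs, Finset.mem_erase, Finset.mem_filter, hD] at hx hx' hw hw'
        exact hl x hx.2.1 q hq.1 hx.1 w hw.1 w' hw'.1 hx.2.2 hx'.2.2 hw.2 hw'.2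
      refine Finset.card_biUnion fun w hw w' hw' hne => Finset.disjoint_left.2 fun z hz hz' => hne ?_
      rw [Finset.mem_product] at hz hz'
      rw [Finset.mem_coe, Finset.mem_offDiag] at hw hw'
      exact Prod.ext (huniq _ hw.1 _ hw'.1 _ hz.1 hz'.1) (huniq _ hw.2.1 _ hw'.2.1 _ hz.2 hz'.2)
    have h2 : (D.offDiag.biUnion fun z => s z.1 ×ˢ s z.2) ⊆ (Q ×ˢ Q).filter fun z => R q z := by
      intro z hz
      simp only [Finset.mem_biUnion, Finset.mem_offDiag, Finset.mem_product, hs, Finset.mem_erase,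
        Finset.mem_filter, hD] at hz
      obtain ⟨⟨w, w'⟩, ⟨⟨a1, a2⟩, ⟨a3, a4⟩, a5⟩, ⟨b1, b2, b3⟩, b4, b5, b6⟩ := hz
      exact Finset.mem_filter.2 ⟨Finset.mem_product.2 ⟨b2, b5⟩, hq.2, b1, b4, w, a1, w', a3, a5,
        b3, a2, b6, a4⟩
    have h3 := Finset.card_le_card h2
    rw [h1] at h3
    refine le_trans ?_ h3
    have h4 : d q * (d q - 1) = D.offDiag.card := by
      rw [Finset.offDiag_card, ← Nat.mul_sub_one]
    rw [h4, ← smul_eq_mul]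
    have hsc : ∀ w ∈ D, k - 1 ≤ (s w).card := by
      intro w hw
      have := Finset.pred_card_le_card_erase (s := Q.filter fun x => I x w) (a := q)
      have := hk w (Finset.mem_filter.1 hw).1
      simp only [hs]
      omega
    refine Finset.card_nsmul_le_sum _ _ _ fun z hz => ?_
    rw [Finset.mem_offDiag] at hz
    rw [Finset.card_product, sq]
    exact Nat.mul_le_mul (hsc _ hz.1) (hsc _ hz.2.1)
  have hflag : M * k ≤ 2 * ∑ q ∈ Qs, d q := by
    have h1 : M * k ≤ ∑ q ∈ Q, d q := flags_ge hk
    have h2 : ∑ q ∈ Q, d q = ∑ q ∈ Qs, d q + ∑ q ∈ Q.filter (fun q => ¬ M * k ≤ 2 * n * d q), d q :=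
      (Finset.sum_filter_add_sum_filter_not Q _ _).symm
    have h3 : 2 * n * ∑ q ∈ Q.filter (fun q => ¬ M * k ≤ 2 * n * d q), d q ≤ n * (M * k) := by
      rw [Finset.mul_sum]
      refine (Finset.sum_le_card_nsmul _ _ (M * k) fun q hq => ?_).trans ?_
      · exact (not_le.1 (Finset.mem_filter.1 hq).2).le
      · rw [smul_eq_mul]
        exact Nat.mul_le_mul_right _ (Finset.card_filter_le _ _)
    refine Nat.le_of_mul_le_mul_left (?_ : n * _ ≤ n * _) hn
    nlinarith
  -- double counting of the triples `(q, q₁, q₂)`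
  have hsum : ∑ q ∈ Q, ((Q ×ˢ Q).filter fun z => R q z).card
      = ∑ z ∈ Q ×ˢ Q, (Q.filter fun q => R q z).card := by
    convert flags_eq Q (Q ×ˢ Q) R
  have hup : 32 * n ^ 3 * ∑ z ∈ Q ×ˢ Q, (Q.filter fun q => R q z).card < n ^ 2 * (M ^ 2 * k ^ 4) := by
    rw [Finset.mul_sum]
    have : n ^ 2 * (M ^ 2 * k ^ 4) = ∑ _z ∈ Q ×ˢ Q, M ^ 2 * k ^ 4 := by
      rw [Finset.sum_const, Finset.card_product, smul_eq_mul, sq n]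
    rw [this]
    refine Finset.sum_lt_sum_of_nonempty ?_ hG
    obtain ⟨q, hq⟩ := Finset.card_pos.1 hn
    exact ⟨(q, q), Finset.mem_product.2 ⟨hq, hq⟩⟩
  have hdown : ∀ q ∈ Qs, k ^ 3 * M * d q ≤ 16 * n * ((Q ×ˢ Q).filter fun z => R q z).card := by
    intro q hq
    have h1 := hlow q hq
    have h2 : M * k ≤ 2 * n * d q := (Finset.mem_filter.1 hq).2
    have h3 : 4 ≤ d q := by
      by_contra h
      have : d q ≤ 3 := by omega
      have : 2 * n * d q ≤ 2 * n * 3 := Nat.mul_le_mul_left _ this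
      omega
    have h4 : d q ≤ 2 * (d q - 1) := by omega
    have h5 : k ≤ 2 * (k - 1) := by omega
    calc k ^ 3 * M * d q = k ^ 2 * (M * k) * d q := by ring
      _ ≤ (2 * (k - 1)) ^ 2 * (2 * n * d q) * (2 * (d q - 1)) :=
          Nat.mul_le_mul (Nat.mul_le_mul (Nat.pow_le_pow_left h5 2) h2) h4
      _ = 16 * n * (d q * (d q - 1) * (k - 1) ^ 2) := by ring
      _ ≤ _ := Nat.mul_le_mul_left _ h1
  have hdown2 : k ^ 3 * M * (M * k) ≤ 32 * n * ∑ q ∈ Q, ((Q ×ˢ Q).filter fun z => R q z).card := by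
    calc k ^ 3 * M * (M * k) ≤ k ^ 3 * M * (2 * ∑ q ∈ Qs, d q) := Nat.mul_le_mul_left _ hflag
      _ = 2 * ∑ q ∈ Qs, k ^ 3 * M * d q := by rw [← Finset.mul_sum]; ring
      _ ≤ 2 * ∑ q ∈ Qs, 16 * n * ((Q ×ˢ Q).filter fun z => R q z).card :=
          Nat.mul_le_mul_left _ (Finset.sum_le_sum hdown)
      _ = 32 * n * ∑ q ∈ Qs, ((Q ×ˢ Q).filter fun z => R q z).card := by
          rw [← Finset.mul_sum]; ring
      _ ≤ _ := Nat.mul_le_mul_left _ (Finset.sum_le_sum_of_subset (Finset.filter_subset _ _))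
  rw [hsum] at hdown2
  set Tot := ∑ z ∈ Q ×ˢ Q, (Q.filter fun q => R q z).card
  have : n ^ 2 * (k ^ 3 * M * (M * k)) ≤ n ^ 2 * (32 * n * Tot) := Nat.mul_le_mul_left _ hdown2
  have e1 : n ^ 2 * (k ^ 3 * M * (M * k)) = n ^ 2 * (M ^ 2 * k ^ 4) := by ring
  have e2 : n ^ 2 * (32 * n * Tot) = 32 * n ^ 3 * Tot := by ring
  omega

end PartialLinear

/-! ### The projective plane of a three-dimensional space -/

section ProjectivePlane

variable {F W : Type*} [Field F] [AddCommGroup W] [Module F W]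

/-- Any two distinct members of the finite set `s` are linearly independent. -/
def PairwiseIndep (F : Type*) {V : Type*} [Field F] [AddCommGroup V] [Module F V]
    (s : Finset V) : Prop :=
  ∀ x ∈ s, ∀ y ∈ s, x ≠ y → LinearIndependent F ![x, y]

/-- Two independent functionals on a three-dimensional space are completed to a basis of the
dual space by a third one. -/
theorem exists_third (hW : Module.finrank F W = 3) {q₁ q₂ : Module.Dual F W}
    (h : LinearIndependent F ![q₁, q₂]) :
    ∃ e : Module.Dual F W, (∀ q, ∃ a b c : F, q = a • q₁ + b • q₂ + c • e) ∧
      (∀ w, q₁ w = 0 → q₂ w = 0 → e w = 0 → w = 0) ∧ ∀ u v : F, v • q₁ + u • q₂ + e ≠ 0 := by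
  have : FiniteDimensional F W := FiniteDimensional.of_finrank_pos (by omega)
  have hd : Module.finrank F (Module.Dual F W) = 3 := by rw [Subspace.dual_finrank_eq, hW]
  obtain ⟨e, he⟩ : ∃ e, e ∉ Submodule.span F (Set.range ![q₁, q₂]) := by
    by_contra hcon
    push Not at hcon
    have h1 : Submodule.span F (Set.range ![q₁, q₂]) = ⊤ := by
      rw [eq_top_iff]; exact fun x _ => hcon x
    have h2 := finrank_span_eq_card h
    rw [h1, finrank_top, hd] at h2
    simp at h2
  have hli : LinearIndependent F ![e, q₁, q₂] := linearIndependent_finCons.2 ⟨h, he⟩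
  have hspan : Submodule.span F (Set.range ![e, q₁, q₂]) = ⊤ :=
    hli.span_eq_top_of_card_eq_finrank (by rw [hd]; rfl)
  have hall : ∀ q, ∃ a b c : F, q = a • q₁ + b • q₂ + c • e := by
    intro q
    have hq : q ∈ Submodule.span F (Set.range ![e, q₁, q₂]) := by rw [hspan]; trivial
    obtain ⟨c, hc⟩ := (Submodule.mem_span_range_iff_exists_fun F).1 hq
    refine ⟨c 1, c 2, c 0, ?_⟩
    rw [← hc, Fin.sum_univ_three]
    simp only [Matrix.cons_val_zero, Matrix.cons_val_one, Matrix.cons_val]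
    abel
  refine ⟨e, hall, ?_, ?_⟩
  · intro w h1 h2 h3
    refine (Module.forall_dual_apply_eq_zero_iff F w).1 fun q => ?_
    obtain ⟨a, b, c, rfl⟩ := hall q
    simp [h1, h2, h3]
  · intro u v h0
    apply he
    have : e = (-v) • q₁ + (-u) • q₂ := by
      rw [← sub_eq_zero, ← h0]; module
    rw [this]
    exact Submodule.add_mem _ (Submodule.smul_mem _ _ (Submodule.subset_span ⟨0, rfl⟩))
      (Submodule.smul_mem _ _ (Submodule.subset_span ⟨1, rfl⟩))

/-- Two points of the projective plane lie on only one common line. -/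
theorem line_unique (hW : Module.finrank F W = 3) {q₁ q₂ : Module.Dual F W}
    (h : LinearIndependent F ![q₁, q₂]) {Λ : Finset W} (hΛ : PairwiseIndep F Λ) {w w' : W}
    (hw : w ∈ Λ) (hw' : w' ∈ Λ) (h1 : q₁ w = 0) (h2 : q₂ w = 0) (h1' : q₁ w' = 0)
    (h2' : q₂ w' = 0) : w = w' := by
  obtain ⟨e, -, he, -⟩ := exists_third hW h
  by_contra hne
  have hli := LinearIndependent.pair_iff.1 (hΛ w hw w' hw' hne)
  have h0 := hli (e w') (-e w) (he _ (by simp [h1, h1']) (by simp [h2, h2']) (by simp; ring))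
  have : w = 0 := he w h1 h2 (by simpa using h0.2)
  have := hli 1 0 (by simp [this])
  simp at this

theorem partialLinear_of_indep (hW : Module.finrank F W = 3) {Q : Finset (Module.Dual F W)}
    {Λ : Finset W} (hQ : PairwiseIndep F Q) (hΛ : PairwiseIndep F Λ)
    {I : Module.Dual F W → W → Prop} (hI : ∀ q w, I q w → q w = 0) : PartialLinear Q Λ I :=
  fun q hq q' hq' hne _ hw _ hw' h1 h2 h3 h4 =>
    line_unique hW (hQ q hq q' hq' hne) hΛ hw hw' (hI _ _ h1) (hI _ _ h3) (hI _ _ h2) (hI _ _ h4)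

/-- The lines through a fixed point `x`, which need not belong to `Q`, share no other point. -/
theorem pencil_bound (hW : Module.finrank F W = 3) {Q : Finset (Module.Dual F W)}
    {Λ : Finset W} (hQ : PairwiseIndep F Q) (hΛ : PairwiseIndep F Λ)
    {I : Module.Dual F W → W → Prop} (hI : ∀ q w, I q w → q w = 0) {k : ℕ}
    (hk : ∀ w ∈ Λ, k ≤ (Q.filter fun q => I q w).card) {x : Module.Dual F W} (hx : x ≠ 0)
    {D : Finset W} (hD : D ⊆ Λ) (hDx : ∀ w ∈ D, x w = 0) : D.card * (k - 1) ≤ Q.card := by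
  set s : W → Finset (Module.Dual F W) := fun w =>
    Q.filter fun q => I q w ∧ LinearIndependent F ![q, x] with hs
  have h1 : (D.biUnion s).card = ∑ w ∈ D, (s w).card := by
    refine Finset.card_biUnion fun w hw w' hw' hne => Finset.disjoint_left.2 fun z hz hz' => hne ?_
    simp only [hs, Finset.mem_filter] at hz hz'
    exact line_unique hW hz.2.2 hΛ (hD hw) (hD hw') (hI _ _ hz.2.1) (hDx w hw) (hI _ _ hz'.2.1)
      (hDx w' hw')
  have h2 : D.biUnion s ⊆ Q := Finset.biUnion_subset.2 fun w _ => Finset.filter_subset _ _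
  refine le_trans ?_ (h1 ▸ Finset.card_le_card h2)
  rw [← smul_eq_mul]
  refine Finset.card_nsmul_le_sum _ _ _ fun w hw => ?_
  have h3 : (Q.filter fun q => I q w ∧ ¬ LinearIndependent F ![q, x]).card ≤ 1 := by
    refine Finset.card_le_one.2 fun q hq q' hq' => ?_
    rw [Finset.mem_filter] at hq hq'
    by_contra hne
    have hli := LinearIndependent.pair_iff.1 (hQ q hq.1 q' hq'.1 hne)
    have key : ∀ y : Module.Dual F W, y ≠ 0 → ¬ LinearIndependent F ![y, x] → ∃ c : F, c ≠ 0 ∧ y = c • x := by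
      intro y hy hyx
      rw [LinearIndependent.pair_iff] at hyx
      push Not at hyx
      obtain ⟨a, b, hab, h⟩ := hyx
      have ha : a ≠ 0 := by
        rintro rfl
        have hb := h rfl
        rw [zero_smul, zero_add] at hab
        exact (smul_ne_zero hb hx) hab
      have hyy : y = (-a⁻¹ * b) • x := by
        have : a⁻¹ • (a • y + b • x) = 0 := by rw [hab, smul_zero]
        rw [smul_add, inv_smul_smul₀ ha, smul_smul] at this
        rw [eq_neg_of_add_eq_zero_left this]; module
      refine ⟨_, ?_, hyy⟩
      intro h0
      rw [h0, zero_smul] at hyy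
      exact hy hyy
    have hq0 : q ≠ 0 := by
      rintro rfl
      have := hli 1 0 (by simp)
      simp at this
    have hq0' : q' ≠ 0 := by
      rintro rfl
      have := hli 0 1 (by simp)
      simp at this
    obtain ⟨c, hc, rfl⟩ := key q hq0 hq.2.2
    obtain ⟨c', hc', rfl⟩ := key q' hq0' hq'.2.2
    exact hc' (hli c' (-c) (by rw [smul_smul, smul_smul, neg_mul, mul_comm c', neg_smul,
      add_neg_cancel])).1
  have h4 : (Q.filter fun q => I q w).card = (s w).card
      + (Q.filter fun q => I q w ∧ ¬ LinearIndependent F ![q, x]).card := by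
    rw [← Finset.card_filter_add_card_filter_not (s := Q.filter fun q => I q w)
      (fun q => LinearIndependent F ![q, x]), Finset.filter_filter, Finset.filter_filter]
  have := hk w (hD hw)
  omega

end ProjectivePlane

/-! ### Projection to a Cartesian product -/

section Core

/-- The arithmetic of `core_bound`: `g` points in a Cartesian product of sets of size at most `Δ` have
`J` incidences, which are bounded from below by `hJ` and from above by `hJ2`. -/
theorem core_arith {M k n J g Δ κ n₀ : ℕ} (hM : 0 < M) (hk : 0 < k) (hn : 0 < n)
    (hg : M ^ 2 * k ^ 4 ≤ 32 * n ^ 3 * g) (hJ : g * (M * k) ≤ 4 * n * J)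
    (hΔ : Δ * n ≤ 16 * M * k) (hκ : κ * k ≤ 2 * n) (hn₀ : n₀ ^ 2 ≤ 4 * (M * Δ))
    (hJ2 : J ^ 2 ≤ Δ * (1000000 * n₀ ^ 3 + κ * (M * Δ))) :
    M ^ 4 * k ^ 15 ≤ 10 ^ 30 * n ^ 11 ∨ M ^ 3 * k ^ 9 ≤ 10 ^ 30 * n ^ 7 := by
  have h1 : M ^ 3 * k ^ 5 ≤ 128 * n ^ 4 * J := by
    calc M ^ 3 * k ^ 5 = M ^ 2 * k ^ 4 * (M * k) := by ring
      _ ≤ 32 * n ^ 3 * g * (M * k) := Nat.mul_le_mul_right _ hg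
      _ = 32 * n ^ 3 * (g * (M * k)) := by ring
      _ ≤ 32 * n ^ 3 * (4 * n * J) := Nat.mul_le_mul_left _ hJ
      _ = _ := by ring
  rcases le_total (κ * (M * Δ)) (1000000 * n₀ ^ 3) with h | h
  · left
    have h2 : J ^ 2 ≤ 2000000 * (Δ * n₀ ^ 3) := by
      refine hJ2.trans ((Nat.mul_le_mul_left Δ (Nat.add_le_add_left h _)).trans (le_of_eq ?_))
      ring
    have h3 : J ^ 4 * n ^ 5 ≤ 256 * 10 ^ 12 * 16 ^ 5 * (M ^ 8 * k ^ 5) := by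
      calc J ^ 4 * n ^ 5 = (J ^ 2) ^ 2 * n ^ 5 := by ring
        _ ≤ (2000000 * (Δ * n₀ ^ 3)) ^ 2 * n ^ 5 :=
            Nat.mul_le_mul_right _ (Nat.pow_le_pow_left h2 2)
        _ = 4 * 10 ^ 12 * Δ ^ 2 * (n₀ ^ 2) ^ 3 * n ^ 5 := by ring
        _ ≤ 4 * 10 ^ 12 * Δ ^ 2 * (4 * (M * Δ)) ^ 3 * n ^ 5 := by gcongr
        _ = 256 * 10 ^ 12 * M ^ 3 * (Δ * n) ^ 5 := by ring
        _ ≤ 256 * 10 ^ 12 * M ^ 3 * (16 * M * k) ^ 5 := by gcongr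
        _ = _ := by ring
    have h4 : (M ^ 8 * k ^ 5) * (M ^ 4 * k ^ 15) ≤ (M ^ 8 * k ^ 5) * (10 ^ 30 * n ^ 11) := by
      calc (M ^ 8 * k ^ 5) * (M ^ 4 * k ^ 15) = (M ^ 3 * k ^ 5) ^ 4 := by ring
        _ ≤ (128 * n ^ 4 * J) ^ 4 := Nat.pow_le_pow_left h1 4
        _ = 128 ^ 4 * n ^ 11 * (J ^ 4 * n ^ 5) := by ring
        _ ≤ 128 ^ 4 * n ^ 11 * (256 * 10 ^ 12 * 16 ^ 5 * (M ^ 8 * k ^ 5)) :=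
            Nat.mul_le_mul_left _ h3
        _ = (M ^ 8 * k ^ 5) * ((128 ^ 4 * 256 * 10 ^ 12 * 16 ^ 5) * n ^ 11) := by ring
        _ ≤ _ := by gcongr; norm_num
    exact Nat.le_of_mul_le_mul_left h4 (by positivity)
  · right
    have h2 : J ^ 2 ≤ 2 * (κ * M * Δ ^ 2) := by
      refine hJ2.trans ((Nat.mul_le_mul_left Δ (Nat.add_le_add_right h _)).trans (le_of_eq ?_))
      ring
    have h3 : n * (J ^ 2 * n * k) ≤ n * (1024 * (M ^ 3 * k ^ 2)) := by
      calc n * (J ^ 2 * n * k) = J ^ 2 * (n ^ 2 * k) := by ring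
        _ ≤ 2 * (κ * M * Δ ^ 2) * (n ^ 2 * k) := Nat.mul_le_mul_right _ h2
        _ = 2 * M * (κ * k) * (Δ * n) ^ 2 := by ring
        _ ≤ 2 * M * (2 * n) * (16 * M * k) ^ 2 := by gcongr
        _ = _ := by ring
    have h4 : J ^ 2 * n * k ≤ 1024 * (M ^ 3 * k ^ 2) := Nat.le_of_mul_le_mul_left h3 hn
    have h5 : (M ^ 3 * k ^ 2) * (M ^ 3 * k ^ 9) ≤ (M ^ 3 * k ^ 2) * (10 ^ 30 * n ^ 7) := by
      calc (M ^ 3 * k ^ 2) * (M ^ 3 * k ^ 9) = (M ^ 3 * k ^ 5) ^ 2 * k := by ring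
        _ ≤ (128 * n ^ 4 * J) ^ 2 * k := Nat.mul_le_mul_right _ (Nat.pow_le_pow_left h1 2)
        _ = 128 ^ 2 * n ^ 7 * (J ^ 2 * n * k) := by ring
        _ ≤ 128 ^ 2 * n ^ 7 * (1024 * (M ^ 3 * k ^ 2)) := Nat.mul_le_mul_left _ h4
        _ = (M ^ 3 * k ^ 2) * ((128 ^ 2 * 1024) * n ^ 7) := by ring
        _ ≤ _ := by gcongr; norm_num
    exact Nat.le_of_mul_le_mul_left h5 (by positivity)

variable {p : ℕ} [Fact p.Prime] {W : Type*} [AddCommGroup W] [Module (ZMod p) W]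

/-- The incidence bound under the assumption that no point has much more than the average degree.
Projecting from the two centres `q₁` and `q₂` of `exists_projection_centers` places a large subset
of `Q` in a Cartesian product, where `cartesian` applies. -/
theorem core_bound (hW : Module.finrank (ZMod p) W = 3) {Q : Finset (Module.Dual (ZMod p) W)}
    {Λ : Finset W} (hQ : PairwiseIndep (ZMod p) Q) (hΛ : PairwiseIndep (ZMod p) Λ)
    {I : Module.Dual (ZMod p) W → W → Prop} (hI : ∀ q w, I q w → q w = 0) {k : ℕ}
    (hk : ∀ w ∈ Λ, k ≤ (Q.filter fun q => I q w).card) (hk2 : 2 ≤ k)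
    (hr : 8 * Q.card ≤ Λ.card * k) (hn : 0 < Q.card)
    (hdeg : ∀ q ∈ Q, (Λ.filter fun w => I q w).card * Q.card ≤ 16 * Λ.card * k)
    (hp : 64 * Λ.card ^ 2 * k ≤ Q.card * p ^ 2) :
    Λ.card ^ 4 * k ^ 15 ≤ 10 ^ 30 * Q.card ^ 11 ∨ Λ.card ^ 3 * k ^ 9 ≤ 10 ^ 30 * Q.card ^ 7 := by
  have hpl := partialLinear_of_indep hW hQ hΛ hI
  obtain ⟨q₁, hq₁, q₂, hq₂, G, hGQ, hGc, hG⟩ := exists_projection_centers hpl hk hk2 hr hn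
  set n := Q.card with hn'
  set M := Λ.card with hM'
  have hM : 0 < M := by
    rcases Nat.eq_zero_or_pos M with h | h
    · rw [h] at hr; omega
    · exact h
  have hGne : G.Nonempty := by
    rw [Finset.nonempty_iff_ne_empty]
    rintro rfl
    have : 0 < M ^ 2 * k ^ 4 := by positivity
    simp at hGc
    omega
  have hq12 : q₁ ≠ q₂ := by
    rintro rfl
    obtain ⟨q, hq⟩ := hGne
    obtain ⟨-, h1, -, w₁, hw₁, w₂, hw₂, hne, a1, a2, a3, a4⟩ := hG q hq
    exact hne (hpl q₁ hq₁ q (hGQ hq) h1 w₁ hw₁ w₂ hw₂ a1 a3 a2 a4)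
  obtain ⟨e, hspan, hzero, hxne⟩ := exists_third hW (hQ q₁ hq₁ q₂ hq₂ hq12)
  choose α β γ hq using hspan
  have hev : ∀ q w, q w = α q * q₁ w + β q * q₂ w + γ q * e w := by
    intro q w
    conv_lhs => rw [hq q]
    simp
  have hne0 : ∀ w ∈ Λ, ∀ w' ∈ Λ, w ≠ w' → w ≠ 0 := by
    rintro w hw w' hw' hne rfl
    have := (LinearIndependent.pair_iff.1 (hΛ _ hw _ hw' hne)) 1 0 (by simp)
    simp at this
  -- no point of `G` lies on the line through `q₁` and `q₂`
  have hγ : ∀ q ∈ G, γ q ≠ 0 := by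
    intro q hqG h0
    obtain ⟨-, h1, h2, w₁, hw₁, w₂, hw₂, hne, a1, a2, a3, a4⟩ := hG q hqG
    have hβ : β q ≠ 0 := by
      intro hb
      have := (LinearIndependent.pair_iff.1 (hQ q₁ hq₁ q (hGQ hqG) h1)) (α q) (-1)
        (LinearMap.ext fun w => by
          simp only [LinearMap.add_apply, LinearMap.smul_apply, smul_eq_mul, LinearMap.zero_apply]
          rw [hev q w, h0, hb]
          ring)
      simp at this
    have hα : α q ≠ 0 := by
      intro hb
      have := (LinearIndependent.pair_iff.1 (hQ q₂ hq₂ q (hGQ hqG) h2)) (β q) (-1)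
        (LinearMap.ext fun w => by
          simp only [LinearMap.add_apply, LinearMap.smul_apply, smul_eq_mul, LinearMap.zero_apply]
          rw [hev q w, h0, hb]
          ring)
      simp at this
    have b1 := hI _ _ a1
    have b2 := hI _ _ a2
    have b3 := hI _ _ a3
    have b4 := hI _ _ a4
    rw [hev, h0, b1] at b2
    rw [hev, h0, b3] at b4
    have c1 : q₂ w₁ = 0 := by simpa [hβ] using b2
    have c2 : q₁ w₂ = 0 := by simpa [hα] using b4
    exact hne (line_unique hW (hQ q₁ hq₁ q₂ hq₂ hq12) hΛ hw₁ hw₂ b1 c1 c2 b3)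
  -- With `q₁` and `q₂` at infinity, `(β q / γ q, α q / γ q)` are affine coordinates of the point `q`.
  -- The lines through `q₁` and `q₂` become parallel to the axes, at the places `A` and `B`, and `φ`
  -- gives the slope and the intercept of all other lines.
  set A : Finset (ZMod p) := (Λ.filter fun w => I q₁ w).image fun w => -(e w / q₂ w) with hA
  set B : Finset (ZMod p) := (Λ.filter fun w => I q₂ w).image fun w => -(e w / q₁ w) with hB
  set Λ' := Λ.filter fun w => q₁ w ≠ 0 ∧ q₂ w ≠ 0 with hΛ'
  set φ : W → ZMod p × ZMod p := fun w => (-(q₂ w / q₁ w), -(e w / q₁ w)) with hφ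
  set L := Λ'.image φ with hL
  have hqA : ∀ q ∈ G, β q / γ q ∈ A := by
    intro q hqG
    obtain ⟨-, h1, h2, w₁, hw₁, w₂, hw₂, hne, a1, a2, a3, a4⟩ := hG q hqG
    refine Finset.mem_image.2 ⟨w₁, Finset.mem_filter.2 ⟨hw₁, a1⟩, ?_⟩
    have b1 := hI _ _ a1
    have b2 := hI _ _ a2
    rw [hev, b1, mul_zero, zero_add] at b2
    have hg := hγ q hqG
    have c1 : q₂ w₁ ≠ 0 := by
      intro h0
      rw [h0, mul_zero, zero_add] at b2
      exact hne0 w₁ hw₁ w₂ hw₂ hne (hzero w₁ b1 h0 (by simpa [hg] using b2))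
    field_simp
    linear_combination -b2
  have hqB : ∀ q ∈ G, α q / γ q ∈ B := by
    intro q hqG
    obtain ⟨-, h1, h2, w₁, hw₁, w₂, hw₂, hne, a1, a2, a3, a4⟩ := hG q hqG
    refine Finset.mem_image.2 ⟨w₂, Finset.mem_filter.2 ⟨hw₂, a3⟩, ?_⟩
    have b1 := hI _ _ a3
    have b2 := hI _ _ a4
    rw [hev, b1, mul_zero, add_zero] at b2
    have hg := hγ q hqG
    have c1 : q₁ w₂ ≠ 0 := by
      intro h0
      rw [h0, mul_zero, zero_add] at b2
      exact hne0 w₂ hw₂ w₁ hw₁ hne.symm (hzero w₂ h0 b1 (by simpa [hg] using b2))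
    field_simp
    linear_combination -b2
  have hφinj : ∀ w ∈ Λ', ∀ w' ∈ Λ', φ w = φ w' → w = w' := by
    intro w hw w' hw' h
    rw [hΛ', Finset.mem_filter] at hw hw'
    simp only [hφ, Prod.mk.injEq, neg_inj] at h
    obtain ⟨h1, h2⟩ := h
    by_contra hne
    have g1 := hw.2.1
    have g2 := hw'.2.1
    rw [div_eq_div_iff g1 g2] at h1 h2
    have := (LinearIndependent.pair_iff.1 (hΛ _ hw.1 _ hw'.1 hne)) (q₁ w') (-q₁ w)
      (hzero _ (by simp; ring) (by simp; linear_combination h1) (by simp; linear_combination h2))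
    exact g2 this.1
  have hκ : ∀ x : Module.Dual (ZMod p) W, x ≠ 0 → ∀ D ⊆ Λ, (∀ w ∈ D, x w = 0) →
      D.card ≤ n / (k - 1) := by
    intro x hx D hD hDx
    rw [Nat.le_div_iff_mul_le (by omega)]
    exact pencil_bound hW hQ hΛ hI hk hx hD hDx
  set κ := n / (k - 1) with hκ'
  have hq₁0 : q₁ ≠ 0 := by
    rintro rfl
    have := (LinearIndependent.pair_iff.1 (hQ _ hq₁ _ hq₂ hq12)) 1 0 (by simp)
    simp at this
  have hAκ : A.card ≤ κ := by
    refine Finset.card_image_le.trans (hκ q₁ hq₁0 _ (Finset.filter_subset _ _) fun w hw => ?_)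
    exact hI _ _ (Finset.mem_filter.1 hw).2
  have hLκ : ∀ u v, (L.filter fun l => l.1 * u + l.2 = v).card ≤ κ := by
    intro u v
    have h1 : (L.filter fun l => l.1 * u + l.2 = v)
        ⊆ (Λ'.filter fun w => (v • q₁ + u • q₂ + e) w = 0).image φ := by
      intro l hl
      rw [Finset.mem_filter, hL, Finset.mem_image] at hl
      obtain ⟨⟨w, hw, rfl⟩, hl⟩ := hl
      refine Finset.mem_image.2 ⟨w, Finset.mem_filter.2 ⟨hw, ?_⟩, rfl⟩
      have g1 := (Finset.mem_filter.1 hw).2.1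
      simp only [hφ] at hl
      field_simp at hl
      simp only [LinearMap.add_apply, LinearMap.smul_apply, smul_eq_mul]
      linear_combination -hl
    refine (Finset.card_le_card h1).trans (Finset.card_image_le.trans
      (hκ _ (hxne u v) _ (fun w hw => ?_) fun w hw => (Finset.mem_filter.1 hw).2))
    exact (Finset.mem_filter.1 (Finset.mem_filter.1 hw).1).1
  have hL0 : ∀ l ∈ L, l.1 ≠ 0 := by
    intro l hl
    obtain ⟨w, hw, rfl⟩ := Finset.mem_image.1 hl
    have := (Finset.mem_filter.1 hw).2
    simp only [hφ]
    exact neg_ne_zero.2 (div_ne_zero this.2 this.1)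
  set Δ := 16 * M * k / n with hΔ
  have hΔn : Δ * n ≤ 16 * M * k := Nat.div_mul_le_self _ _
  have hAΔ : A.card ≤ Δ := Finset.card_image_le.trans
    ((Nat.le_div_iff_mul_le hn).2 (hdeg q₁ hq₁))
  have hBΔ : B.card ≤ Δ := Finset.card_image_le.trans
    ((Nat.le_div_iff_mul_le hn).2 (hdeg q₂ hq₂))
  have hΔ1 : 1 ≤ Δ := (Nat.le_div_iff_mul_le hn).2 (by nlinarith)
  have hLM : L.card ≤ M := Finset.card_image_le.trans (Finset.card_filter_le _ _)
  set n₀ := Nat.sqrt (M * Δ) + 1 with hn₀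
  have hs1 : 1 ≤ Nat.sqrt (M * Δ) := by
    rw [Nat.le_sqrt]; have := Nat.mul_pos hM hΔ1; omega
  have hs2 : Nat.sqrt (M * Δ) * Nat.sqrt (M * Δ) ≤ M * Δ := Nat.sqrt_le _
  have hn₀2 : n₀ ^ 2 ≤ 4 * (M * Δ) := by rw [hn₀]; nlinarith
  have hn₀p : n₀ ≤ p := by
    have h1 : n * n₀ ^ 2 ≤ n * p ^ 2 := by
      calc n * n₀ ^ 2 ≤ n * (4 * (M * Δ)) := Nat.mul_le_mul_left _ hn₀2
        _ = 4 * M * (Δ * n) := by ring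
        _ ≤ 4 * M * (16 * M * k) := Nat.mul_le_mul_left _ hΔn
        _ = 64 * M ^ 2 * k := by ring
        _ ≤ _ := hp
    exact (Nat.pow_le_pow_iff_left (by norm_num)).1 (Nat.le_of_mul_le_mul_left h1 hn)
  have hcart := cartesian L A B hL0 κ n₀ hAκ (by intro u v; convert hLκ u v) hn₀p (by
    calc L.card * A.card ≤ M * Δ := Nat.mul_le_mul hLM hAΔ
      _ ≤ n₀ ^ 2 := by rw [sq]; exact (Nat.lt_succ_sqrt _).le)
  set J := ((L ×ˢ A).filter fun t => t.1.1 * t.2 + t.1.2 ∈ B).card with hJ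
  have hJ2 : J ^ 2 ≤ Δ * (1000000 * n₀ ^ 3 + κ * (M * Δ)) := by
    have hcart' : J ^ 2 ≤ B.card * (1000000 * n₀ ^ 3 + κ * (L.card * A.card)) := by
      convert hcart
    exact hcart'.trans (Nat.mul_le_mul hBΔ (Nat.add_le_add_left
      (Nat.mul_le_mul_left _ (Nat.mul_le_mul hLM hAΔ)) _))
  -- incidences between `G` and `Λ'` inject into the incidences of the Cartesian product
  have hJlow : ∑ q ∈ G, (Λ'.filter fun w => I q w).card ≤ J := by
    rw [← Finset.card_sigma]
    refine Finset.card_le_card_of_injOn (fun z => (φ z.2, β z.1 / γ z.1)) ?_ ?_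
    · rintro ⟨q, w⟩ hz
      simp only [Finset.coe_sigma, Set.mem_sigma_iff, Finset.mem_coe, Finset.mem_filter] at hz
      obtain ⟨hqG, hw, hqw⟩ := hz
      have hg := hγ q hqG
      have h0 := hI _ _ hqw
      rw [hev] at h0
      have g1 := (Finset.mem_filter.1 hw).2.1
      refine Finset.mem_coe.2 (Finset.mem_filter.2 ⟨Finset.mem_product.2
        ⟨Finset.mem_image_of_mem _ hw, hqA q hqG⟩, ?_⟩)
      have : (φ w).1 * (β q / γ q) + (φ w).2 = α q / γ q := by
        simp only [hφ]
        field_simp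
        linear_combination -h0
      simp only [this]
      exact hqB q hqG
    · rintro ⟨q, w⟩ hz ⟨q', w'⟩ hz' h
      simp only [Finset.coe_sigma, Set.mem_sigma_iff, Finset.mem_coe, Finset.mem_filter] at hz hz'
      obtain ⟨hqG, hw, hqw⟩ := hz
      obtain ⟨hqG', hw', hqw'⟩ := hz'
      simp only [Prod.mk.injEq] at h
      obtain rfl := hφinj w hw w' hw' h.1
      have h2 := h.2
      have hg := hγ q hqG
      have hg' := hγ q' hqG'
      have g1 := (Finset.mem_filter.1 hw).2.1
      have h0 := hI _ _ hqw
      have h0' := hI _ _ hqw'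
      rw [hev] at h0 h0'
      rw [div_eq_div_iff hg hg'] at h2
      have h3 : α q * γ q' = α q' * γ q := by
        refine mul_right_cancel₀ g1 ?_
        linear_combination γ q' * h0 - γ q * h0' - q₂ w * h2
      have : q = q' := by
        by_contra hne
        refine hg' ((LinearIndependent.pair_iff.1 (hQ _ (hGQ hqG) _ (hGQ hqG') hne)) (γ q') (-γ q)
          ?_).1
        have e1 : γ q' • q + -γ q • q' = (α q * γ q' - α q' * γ q) • q₁
            + (β q * γ q' - β q' * γ q) • q₂ := by
          refine LinearMap.ext fun x => ?_
          simp only [LinearMap.add_apply, LinearMap.smul_apply, smul_eq_mul]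
          rw [hev q x, hev q' x]
          ring
        rw [e1, h3, h2, sub_self, sub_self, zero_smul, zero_smul, add_zero]
      subst this
      rfl
  have hJg : G.card * (M * k) ≤ 4 * n * J := by
    refine le_trans ?_ (Nat.mul_le_mul_left _ hJlow)
    rw [Finset.mul_sum, ← smul_eq_mul]
    refine Finset.card_nsmul_le_sum _ _ _ fun q hqG => ?_
    obtain ⟨hd, h1, h2, -⟩ := hG q hqG
    set d := (Λ.filter fun w => I q w).card with hd'
    have key : ∀ x ∈ Q, x ≠ q → (Λ.filter fun w => I q w ∧ x w = 0).card ≤ 1 := by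
      intro x hx hne
      refine Finset.card_le_one.2 fun w hw w' hw' => ?_
      rw [Finset.mem_filter] at hw hw'
      exact line_unique hW (hQ x hx q (hGQ hqG) hne) hΛ hw.1 hw'.1 hw.2.2 (hI _ _ hw.2.1) hw'.2.2
        (hI _ _ hw'.2.1)
    have hcov : (Λ.filter fun w => I q w) ⊆ (Λ'.filter fun w => I q w) ∪
        ((Λ.filter fun w => I q w ∧ q₁ w = 0) ∪ (Λ.filter fun w => I q w ∧ q₂ w = 0)) := by
      intro w hw
      simp only [hΛ', Finset.mem_union, Finset.mem_filter] at hw ⊢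
      tauto
    have hc1 := Finset.card_le_card hcov
    have hc2 := Finset.card_union_le (Λ'.filter fun w => I q w)
      ((Λ.filter fun w => I q w ∧ q₁ w = 0) ∪ (Λ.filter fun w => I q w ∧ q₂ w = 0))
    have hc3 := Finset.card_union_le (Λ.filter fun w => I q w ∧ q₁ w = 0)
      (Λ.filter fun w => I q w ∧ q₂ w = 0)
    have hk1 := key q₁ hq₁ h1
    have hk2 := key q₂ hq₂ h2
    have hd4 : 4 ≤ d := by
      by_contra h
      have : d ≤ 3 := by omega
      have : 2 * n * d ≤ 2 * n * 3 := Nat.mul_le_mul_left _ this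
      omega
    have : d ≤ 2 * (Λ'.filter fun w => I q w).card := by omega
    calc M * k ≤ 2 * n * d := hd
      _ ≤ 2 * n * (2 * (Λ'.filter fun w => I q w).card) := Nat.mul_le_mul_left _ this
      _ = _ := by ring
  have hκk : κ * k ≤ 2 * n := by
    calc κ * k ≤ κ * (2 * (k - 1)) := Nat.mul_le_mul_left _ (by omega)
      _ = 2 * (n / (k - 1) * (k - 1)) := by rw [hκ']; ring
      _ ≤ 2 * n := Nat.mul_le_mul_left _ (Nat.div_mul_le_self _ _)
  exact core_arith hM (by omega) hn hGc hJg hΔn hκk hn₀2 hJ2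

end Core

/-! ### Rich lines -/

section RichLines

/-- The size condition of `core_bound` for a minimal violation of the bound, once `p` is large. -/
theorem size_condition {C p n m k : ℕ} (hp : (2 ^ 112 * C ^ 7) ^ 13 ≤ p) (hp1 : 1 ≤ p)
    (hk1 : 1 ≤ k) (hC : 1 ≤ C) (hnp : n ^ 13 ≤ p ^ 15) (hk : n ^ 3 ≤ k ^ 7)
    (hm : m * k ≤ 2 * C * n ∨ m ^ 4 * k ^ 15 ≤ 16 * C * n ^ 11) :
    64 * m ^ 2 * k ≤ n * p ^ 2 := by
  rcases hm with hm | hm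
  · have h1 : 256 * C ^ 2 * n ≤ p ^ 2 := by
      refine (Nat.pow_le_pow_iff_left (n := 13) (by norm_num)).1 ?_
      calc (256 * C ^ 2 * n) ^ 13 = 2 ^ 104 * C ^ 26 * n ^ 13 := by ring
        _ ≤ 2 ^ 1456 * C ^ 91 * p ^ 15 := by
            refine Nat.mul_le_mul (Nat.mul_le_mul ?_ ?_) hnp
            · exact pow_le_pow_right₀ one_le_two (by norm_num)
            · exact Nat.pow_le_pow_right hC (by norm_num)
        _ = (2 ^ 112 * C ^ 7) ^ 13 * p ^ 15 := by
            rw [mul_pow, ← pow_mul, ← pow_mul]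
        _ ≤ p * p ^ 15 := Nat.mul_le_mul_right _ hp
        _ = p ^ 16 := by ring
        _ ≤ p ^ 26 := Nat.pow_le_pow_right hp1 (by norm_num)
        _ = (p ^ 2) ^ 13 := by ring
    have h2 : k * (64 * m ^ 2 * k) ≤ k * (n * p ^ 2) := by
      calc k * (64 * m ^ 2 * k) = 64 * (m * k) ^ 2 := by ring
        _ ≤ 64 * (2 * C * n) ^ 2 := by gcongr
        _ = 256 * C ^ 2 * n * n := by ring
        _ ≤ p ^ 2 * n := Nat.mul_le_mul_right _ h1
        _ = 1 * (n * p ^ 2) := by ring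
        _ ≤ _ := Nat.mul_le_mul_right _ hk1
    exact Nat.le_of_mul_le_mul_left h2 hk1
  · have h1 : 2 ^ 16 * C * n ^ 9 ≤ p ^ 4 * k ^ 13 := by
      refine (Nat.pow_le_pow_iff_left (n := 91) (by norm_num)).1 ?_
      calc (2 ^ 16 * C * n ^ 9) ^ 91
          = (2 ^ 112 * C ^ 7) ^ 13 * (n ^ 13) ^ 24 * (n ^ 3) ^ 169 := by
            simp only [mul_pow, ← pow_mul]
            rw [mul_assoc _ (n ^ _), ← pow_add]
        _ ≤ p * (p ^ 15) ^ 24 * (k ^ 7) ^ 169 := by gcongr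
        _ = p ^ 361 * k ^ 1183 := by simp only [← pow_mul]; rw [← pow_succ']
        _ ≤ p ^ 364 * k ^ 1183 :=
            Nat.mul_le_mul_right _ (Nat.pow_le_pow_right hp1 (by norm_num))
        _ = (p ^ 4 * k ^ 13) ^ 91 := by rw [mul_pow, ← pow_mul, ← pow_mul]
    have h2 : k ^ 13 * (64 * m ^ 2 * k) ^ 2 ≤ k ^ 13 * (n * p ^ 2) ^ 2 := by
      calc k ^ 13 * (64 * m ^ 2 * k) ^ 2 = 4096 * (m ^ 4 * k ^ 15) := by ring
        _ ≤ 4096 * (16 * C * n ^ 11) := Nat.mul_le_mul_left _ hm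
        _ = 2 ^ 16 * C * n ^ 9 * n ^ 2 := by ring
        _ ≤ p ^ 4 * k ^ 13 * n ^ 2 := Nat.mul_le_mul_right _ h1
        _ = _ := by ring
    exact (Nat.pow_le_pow_iff_left (by norm_num)).1
      (Nat.le_of_mul_le_mul_left h2 (by positivity))

/-- The second alternative of `core_bound` is stronger than the first when `k ^ 2 < 2 * n`. -/
theorem second_alternative {C n m k : ℕ} (hn : 1 ≤ n)
    (hC : (2 ^ 12 * 10 ^ 30) ^ 8 * 2 ^ 9 ≤ C ^ 6) (hk : k ^ 2 ≤ 2 * n)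
    (h : m ^ 3 * k ^ 9 ≤ 2 ^ 12 * 10 ^ 30 * n ^ 7) : m ^ 4 * k ^ 15 ≤ C * n ^ 11 := by
  refine (Nat.pow_le_pow_iff_left (n := 6) (by norm_num)).1 ?_
  calc (m ^ 4 * k ^ 15) ^ 6 = (m ^ 3 * k ^ 9) ^ 8 * (k ^ 2) ^ 9 := by ring
    _ ≤ (2 ^ 12 * 10 ^ 30 * n ^ 7) ^ 8 * (2 * n) ^ 9 := by gcongr
    _ = (2 ^ 12 * 10 ^ 30) ^ 8 * 2 ^ 9 * n ^ 65 := by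
        rw [mul_pow _ (n ^ 7), mul_pow 2 n, ← pow_mul]; ring
    _ ≤ C ^ 6 * n ^ 66 := Nat.mul_le_mul hC (Nat.pow_le_pow_right hn (by norm_num))
    _ = _ := by ring

variable {p : ℕ} [Fact p.Prime] {W : Type*} [AddCommGroup W] [Module (ZMod p) W]

/-- The bound for rich lines, when `p` is large. The induction is on the number of points: points
of degree far above the average are few, so that either half of the lines keep about half of their
points after these are removed, and `core_bound` applies, or the induction hypothesis applies to the
removed points. -/
theorem rich_lines_large {C : ℕ} (hC1 : 2 ^ 19 * 10 ^ 30 ≤ C)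
    (hC2 : (2 ^ 12 * 10 ^ 30) ^ 8 * 2 ^ 9 ≤ C ^ 6) (hp : (2 ^ 112 * C ^ 7) ^ 13 ≤ p)
    (hW : Module.finrank (ZMod p) W = 3) (n : ℕ) : ∀ {Q : Finset (Module.Dual (ZMod p) W)}
    {Λ : Finset W} (_ : Q.card = n) (_ : PairwiseIndep (ZMod p) Q) (_ : PairwiseIndep (ZMod p) Λ)
    {I : Module.Dual (ZMod p) W → W → Prop} (_ : ∀ q w, I q w → q w = 0) {k : ℕ}
    (_ : ∀ w ∈ Λ, k ≤ (Q.filter fun q => I q w).card) (_ : 2 ≤ k) (_ : n ^ 13 ≤ p ^ 15),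
    Λ.card * k ≤ C * n ∨ Λ.card ^ 4 * k ^ 15 ≤ C * n ^ 11 := by
  induction n using Nat.strong_induction_on with
  | _ n ih =>
  intro Q Λ hQn hQ hΛ I hI k hk hk2 hnp
  by_contra hcon
  push Not at hcon
  have hp1 : 1 ≤ p := (Fact.out : p.Prime).one_lt.le
  have hC32 : 32 ≤ C := le_trans (by norm_num) hC1
  have hkn : Λ.Nonempty → k ≤ n := by
    rintro ⟨w, hw⟩
    exact (hk w hw).trans (hQn ▸ Finset.card_filter_le _ _)
  have hΛne : Λ.Nonempty := by
    rw [Finset.nonempty_iff_ne_empty]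
    rintro rfl
    simp at hcon
  have hkn := hkn hΛne
  have hn : 1 ≤ n := by omega
  have hpl := partialLinear_of_indep hW hQ hΛ hI
  -- counting pairs of points settles the range `k ^ 7 < n ^ 3`
  have hpb := pairs_bound hpl hk
  rw [hQn] at hpb
  have hMk : Λ.card * k ^ 2 ≤ 2 * n ^ 2 := by
    calc Λ.card * k ^ 2 = Λ.card * (k * k) := by ring
      _ ≤ Λ.card * (k * (2 * (k - 1))) := by gcongr; omega
      _ = 2 * (Λ.card * (k * (k - 1))) := by ring
      _ ≤ _ := Nat.mul_le_mul_left _ hpb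
  have hk7 : n ^ 3 ≤ k ^ 7 := by
    by_contra hlt
    refine absurd hcon.2 (not_lt.2 ?_)
    calc Λ.card ^ 4 * k ^ 15 = (Λ.card * k ^ 2) ^ 4 * k ^ 7 := by ring
      _ ≤ (2 * n ^ 2) ^ 4 * n ^ 3 := Nat.mul_le_mul (Nat.pow_le_pow_left hMk 4) (by omega)
      _ = 16 * n ^ 11 := by ring
      _ ≤ _ := Nat.mul_le_mul_right _ (by omega)
  have hk3 : 3 ≤ k := by
    by_contra hlt
    have hk' : k = 2 := by omega
    subst hk'
    refine absurd hcon.2 (not_lt.2 ?_)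
    have h1 : Λ.card ≤ n ^ 2 := by omega
    calc Λ.card ^ 4 * 2 ^ 15 ≤ (n ^ 2) ^ 4 * 2 ^ 15 := by gcongr
      _ = 2 ^ 15 * n ^ 8 := by ring
      _ ≤ _ := Nat.mul_le_mul (le_trans (by norm_num) hC1) (Nat.pow_le_pow_right hn (by norm_num))
  have hk2n : k ^ 2 < 2 * n := by
    by_contra hlt
    have := very_rich_bound hpl hk (by omega)
    rw [hQn] at this
    have : 2 * n ≤ C * n := Nat.mul_le_mul_right _ (by omega)
    omega
  -- a minimal number `m` of lines violating the bound is also bounded from above, which makes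
  -- `size_condition` applicable
  have hex : ∃ m, C * n < m * k ∧ C * n ^ 11 < m ^ 4 * k ^ 15 := ⟨_, hcon⟩
  set m := Nat.find hex with hm
  have hmspec := Nat.find_spec hex
  rw [← hm] at hmspec
  have hmM : m ≤ Λ.card := Nat.find_min' hex hcon
  have hm2 : 2 ≤ m := by
    by_contra hlt
    have h1 : m * k ≤ 1 * k := Nat.mul_le_mul_right _ (by omega)
    have h2 : 1 * n ≤ C * n := Nat.mul_le_mul_right _ (by omega)
    omega
  have hmup : m * k ≤ 2 * C * n ∨ m ^ 4 * k ^ 15 ≤ 16 * C * n ^ 11 := by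
    have h1 : ¬ (C * n < (m - 1) * k ∧ C * n ^ 11 < (m - 1) ^ 4 * k ^ 15) :=
      Nat.find_min hex (by omega)
    rw [not_and_or, not_lt, not_lt] at h1
    have h2 : m ≤ 2 * (m - 1) := by omega
    rcases h1 with h1 | h1
    · left
      calc m * k ≤ 2 * (m - 1) * k := Nat.mul_le_mul_right _ h2
        _ = 2 * ((m - 1) * k) := by ring
        _ ≤ 2 * (C * n) := Nat.mul_le_mul_left _ h1
        _ = _ := by ring
    · right
      calc m ^ 4 * k ^ 15 ≤ (2 * (m - 1)) ^ 4 * k ^ 15 :=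
            Nat.mul_le_mul_right _ (Nat.pow_le_pow_left h2 4)
        _ = 16 * ((m - 1) ^ 4 * k ^ 15) := by ring
        _ ≤ 16 * (C * n ^ 11) := Nat.mul_le_mul_left _ h1
        _ = _ := by ring
  have hsize := size_condition hp hp1 (by omega) (by omega) hnp hk7 hmup
  obtain ⟨Λ₁, hΛ₁, hΛ₁m⟩ := Finset.exists_subset_card_eq hmM
  have hind : ∀ {s t : Finset W}, s ⊆ t → PairwiseIndep (ZMod p) t → PairwiseIndep (ZMod p) s :=
    fun hst ht x hx y hy => ht x (hst hx) y (hst hy)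
  -- select exactly `k` points on each line
  have hsel : ∀ w, ∃ s : Finset (Module.Dual (ZMod p) W), w ∈ Λ₁ →
      s ⊆ (Q.filter fun q => I q w) ∧ s.card = k := by
    intro w
    by_cases hw : w ∈ Λ₁
    · obtain ⟨s, hs, hsk⟩ := Finset.exists_subset_card_eq (hk w (hΛ₁ hw))
      exact ⟨s, fun _ => ⟨hs, hsk⟩⟩
    · exact ⟨∅, fun h => absurd h hw⟩
  choose s hs using hsel
  obtain ⟨I₁, hI₁⟩ : ∃ I₁ : Module.Dual (ZMod p) W → W → Prop,
      ∀ q w, I₁ q w ↔ w ∈ Λ₁ ∧ q ∈ s w := ⟨_, fun _ _ => Iff.rfl⟩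
  have hI₁0 : ∀ q w, I₁ q w → q w = 0 := fun q w h =>
    hI q w (Finset.mem_filter.1 ((hs w ((hI₁ q w).1 h).1).1 ((hI₁ q w).1 h).2)).2
  have hI₁k : ∀ w ∈ Λ₁, (Q.filter fun q => I₁ q w).card = k := by
    intro w hw
    rw [← (hs w hw).2]
    congr 1
    ext q
    simp only [Finset.mem_filter, hI₁]
    constructor
    · exact fun h => h.2.2
    · exact fun h => ⟨(Finset.mem_filter.1 ((hs w hw).1 h)).1, hw, h⟩
  set d : Module.Dual (ZMod p) W → ℕ := fun q => (Λ₁.filter fun w => I₁ q w).card with hd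
  have hdsum : ∑ q ∈ Q, d q = m * k := by
    rw [hd]
    simp only
    rw [flags_eq, Finset.sum_congr rfl hI₁k, Finset.sum_const, hΛ₁m, smul_eq_mul]
  -- the points of degree more than four times the average
  set H := Q.filter fun q => 4 * (m * k) < d q * n with hH
  have hH4 : 4 * H.card ≤ n := by
    have hmk : 0 < m * k := by positivity
    refine Nat.le_of_mul_le_mul_right (?_ : _ * (m * k) ≤ _ * (m * k)) hmk
    calc 4 * H.card * (m * k) = H.card • (4 * (m * k)) := by rw [smul_eq_mul]; ring
      _ ≤ ∑ q ∈ H, d q * n :=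
          Finset.card_nsmul_le_sum _ _ _ fun q hq => (Finset.mem_filter.1 hq).2.le
      _ ≤ ∑ q ∈ Q, d q * n := Finset.sum_le_sum_of_subset (Finset.filter_subset _ _)
      _ = n * (m * k) := by rw [← Finset.sum_mul, hdsum]; ring
  set k₂ := (k + 1) / 2 with hk₂
  have hk₂k : k ≤ 2 * k₂ := by omega
  have hk₂2 : 2 ≤ k₂ := by omega
  set ΛH := Λ₁.filter fun w => k₂ ≤ (H.filter fun q => I₁ q w).card with hΛH
  have hQH : PairwiseIndep (ZMod p) H := fun x hx y hy =>
    hQ x (Finset.filter_subset _ _ hx) y (Finset.filter_subset _ _ hy)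
  rcases le_total m (2 * ΛH.card) with hcase | hcase
  · -- half of the lines are rich with respect to `H`, which has at most `n / 4` points
    have hH' := ih H.card (by omega) rfl hQH
      (hind ((Finset.filter_subset _ _).trans hΛ₁) hΛ : PairwiseIndep (ZMod p) ΛH) hI₁0
      (fun w hw => (Finset.mem_filter.1 hw).2) hk₂2
      (le_trans (Nat.pow_le_pow_left (by omega) 13) hnp)
    rcases hH' with h | h
    · refine absurd hmspec.1 (not_lt.2 ?_)
      calc m * k ≤ (2 * ΛH.card) * (2 * k₂) := Nat.mul_le_mul hcase hk₂k
        _ = 4 * (ΛH.card * k₂) := by ring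
        _ ≤ 4 * (C * H.card) := Nat.mul_le_mul_left _ h
        _ = C * (4 * H.card) := by ring
        _ ≤ _ := Nat.mul_le_mul_left _ hH4
    · refine absurd hmspec.2 (not_lt.2 ?_)
      calc m ^ 4 * k ^ 15 ≤ (2 * ΛH.card) ^ 4 * (2 * k₂) ^ 15 := by gcongr
        _ = 2 ^ 19 * (ΛH.card ^ 4 * k₂ ^ 15) := by ring
        _ ≤ 2 ^ 22 * (C * H.card ^ 11) := Nat.mul_le_mul (by norm_num) h
        _ = C * (4 * H.card) ^ 11 := by ring
        _ ≤ _ := by gcongr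
  · -- half of the lines have about half of their selected points outside `H`
    set ΛL := Λ₁.filter fun w => ¬ k₂ ≤ (H.filter fun q => I₁ q w).card with hΛL
    have hsplit : ΛH.card + ΛL.card = m := by
      rw [← hΛ₁m]; exact Finset.card_filter_add_card_filter_not _
    have hcase' : m ≤ 2 * ΛL.card := by omega
    obtain ⟨I₂, hI₂⟩ : ∃ I₂ : Module.Dual (ZMod p) W → W → Prop,
        ∀ q w, I₂ q w ↔ I₁ q w ∧ q ∉ H := ⟨_, fun _ _ => Iff.rfl⟩
    have hI₂k : ∀ w ∈ ΛL, k₂ ≤ (Q.filter fun q => I₂ q w).card := by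
      intro w hw
      rw [hΛL, Finset.mem_filter] at hw
      have h1 := hI₁k w hw.1
      have h2 : (Q.filter fun q => I₁ q w).card
          = (H.filter fun q => I₁ q w).card + (Q.filter fun q => I₂ q w).card := by
        rw [← Finset.card_filter_add_card_filter_not (s := Q.filter fun q => I₁ q w)
          (fun q => q ∈ H), Finset.filter_filter, Finset.filter_filter]
        simp only [hI₂]
        congr 2
        ext q
        simp only [Finset.mem_filter, hH]
        tauto
      omega
    have hmk4 : m * k ≤ 4 * (ΛL.card * k₂) := by
      calc m * k ≤ (2 * ΛL.card) * (2 * k₂) := Nat.mul_le_mul hcase' hk₂k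
        _ = _ := by ring
    have hLm : ΛL.card ≤ m := by omega
    have hcore := core_bound hW hQ
      (hind ((Finset.filter_subset _ _).trans hΛ₁) hΛ : PairwiseIndep (ZMod p) ΛL)
      (fun q w h => hI₁0 q w ((hI₂ q w).1 h).1) hI₂k hk₂2
      (by
        rw [hQn]
        have : 32 * n ≤ C * n := Nat.mul_le_mul_right _ hC32
        omega) (by omega)
      (by
        intro q hq
        rw [hQn]
        by_cases hqH : q ∈ H
        · have : (ΛL.filter fun w => I₂ q w) = ∅ := by
            refine Finset.filter_eq_empty_iff.2 fun w _ h => ((hI₂ q w).1 h).2 hqH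
          rw [this]
          simp
        · have h1 : d q * n ≤ 4 * (m * k) := by
            by_contra hlt
            exact hqH (Finset.mem_filter.2 ⟨hq, not_le.1 hlt⟩)
          have h2 : (ΛL.filter fun w => I₂ q w).card ≤ d q := by
            refine Finset.card_le_card fun w hw => ?_
            rw [Finset.mem_filter] at hw ⊢
            exact ⟨(Finset.mem_filter.1 hw.1).1, ((hI₂ q w).1 hw.2).1⟩
          calc _ ≤ d q * n := Nat.mul_le_mul_right _ h2
            _ ≤ 4 * (m * k) := h1
            _ ≤ 4 * (4 * (ΛL.card * k₂)) := Nat.mul_le_mul_left _ hmk4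
            _ = _ := by ring)
      (by
        rw [hQn]
        refine le_trans ?_ hsize
        have : k₂ ≤ k := by omega
        gcongr)
    rw [hQn] at hcore
    refine absurd hmspec.2 (not_lt.2 ?_)
    rcases hcore with h | h
    · calc m ^ 4 * k ^ 15 ≤ (2 * ΛL.card) ^ 4 * (2 * k₂) ^ 15 := by gcongr
        _ = 2 ^ 19 * (ΛL.card ^ 4 * k₂ ^ 15) := by ring
        _ ≤ 2 ^ 19 * (10 ^ 30 * n ^ 11) := Nat.mul_le_mul_left _ h
        _ = 2 ^ 19 * 10 ^ 30 * n ^ 11 := by ring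
        _ ≤ _ := Nat.mul_le_mul_right _ hC1
    · refine second_alternative hn hC2 hk2n.le ?_
      calc m ^ 3 * k ^ 9 ≤ (2 * ΛL.card) ^ 3 * (2 * k₂) ^ 9 := by gcongr
        _ = 2 ^ 12 * (ΛL.card ^ 3 * k₂ ^ 9) := by ring
        _ ≤ 2 ^ 12 * (10 ^ 30 * n ^ 7) := Nat.mul_le_mul_left _ h
        _ = _ := by ring

end RichLines

/-- The bound for the number of `k`-rich lines in a projective plane over `ZMod p`. -/
theorem rich_lines : ∃ C : ℕ, ∀ (p : ℕ) [Fact p.Prime] (W : Type) [AddCommGroup W]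
    [Module (ZMod p) W], Module.finrank (ZMod p) W = 3 →
    ∀ (Q : Finset (Module.Dual (ZMod p) W)) (Λ : Finset W), PairwiseIndep (ZMod p) Q →
    PairwiseIndep (ZMod p) Λ → ∀ k : ℕ, 2 ≤ k →
    (∀ w ∈ Λ, k ≤ (Q.filter fun q => q w = 0).card) → Q.card ^ 13 ≤ p ^ 15 →
    Λ.card * k ≤ C * Q.card ∨ Λ.card ^ 4 * k ^ 15 ≤ C * Q.card ^ 11 := by
  obtain ⟨C, hC1, hC2⟩ : ∃ C : ℕ, 2 ^ 19 * 10 ^ 30 ≤ C ∧ (2 ^ 12 * 10 ^ 30) ^ 8 * 2 ^ 9 ≤ C ^ 6 :=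
    ⟨10 ^ 50, by norm_num, by norm_num⟩
  set T := (2 ^ 112 * C ^ 7) ^ 13 with hT
  refine ⟨C + T ^ 3, fun p _ W _ _ hW Q Λ hQ hΛ k hk2 hk hnp => ?_⟩
  rcases le_total T p with h | h
  · have hmain := rich_lines_large hC1 hC2 h hW Q.card rfl hQ hΛ (I := fun q w => q w = 0)
      (fun _ _ h => h) (by intro w hw; convert hk w hw) hk2 hnp
    rcases hmain with h | h
    · exact Or.inl (h.trans (Nat.mul_le_mul_right _ (Nat.le_add_right _ _)))
    · exact Or.inr (h.trans (Nat.mul_le_mul_right _ (Nat.le_add_right _ _)))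
  · -- for bounded `p` the whole plane has boundedly many lines
    left
    have : FiniteDimensional (ZMod p) W := FiniteDimensional.of_finrank_pos (by omega)
    have : Finite W := Module.finite_of_finite (ZMod p)
    have hcard : Λ.card ≤ T ^ 3 := by
      have h1 : Nat.card W = p ^ 3 := by
        rw [Module.natCard_eq_pow_finrank (K := ZMod p), hW, Nat.card_zmod]
      have h2 : Λ.card ≤ Nat.card W := by
        have := Fintype.ofFinite W
        rw [Nat.card_eq_fintype_card]
        exact Finset.card_le_univ _
      rw [h1] at h2
      exact h2.trans (Nat.pow_le_pow_left h 3)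
    rcases Λ.eq_empty_or_nonempty with rfl | ⟨w, hw⟩
    · simp
    · have : k ≤ Q.card := (hk w hw).trans (Finset.card_filter_le _ _)
      exact Nat.mul_le_mul (hcard.trans (Nat.le_add_left _ _)) this

/-! ### Cubics through seven points -/

section SevenPoints

/-- Six points have a perfect matching which avoids a given partial matching `R`. -/
theorem exists_good_matching {α : Type*} {T : Finset α} (hT : T.card = 6) {R : α → α → Prop}
    (hsymm : ∀ a b, R a b → R b a)
    (hone : ∀ a ∈ T, ∀ b ∈ T, ∀ c ∈ T, a ≠ b → a ≠ c → b ≠ c → R a b → ¬ R a c) :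
    ∃ a b c d e f, T = {a, b, c, d, e, f} ∧ ¬ R a b ∧ ¬ R c d ∧ ¬ R e f := by
  have four : ∀ w ∈ T, ∀ x ∈ T, ∀ y ∈ T, ∀ z ∈ T, w ≠ x → w ≠ y → w ≠ z → x ≠ y → x ≠ z → y ≠ z →
      (¬ R w x ∧ ¬ R y z) ∨ (¬ R w y ∧ ¬ R x z) := by
    intro w hw x hx y hy z hz h1 h2 h3 h4 h5 h6
    by_contra hcon
    rw [not_or, not_and_or, not_and_or, not_not, not_not, not_not, not_not] at hcon
    obtain ⟨h | h, h' | h'⟩ := hcon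
    · exact hone w hw x hx y hy h1 h2 h4 h h'
    · exact hone x hx w hw z hz h1.symm h5 h3 (hsymm _ _ h) h'
    · exact hone y hy z hz w hw h6 h2.symm h3.symm h (hsymm _ _ h')
    · exact hone z hz y hy x hx h6.symm h5.symm h4.symm (hsymm _ _ h) (hsymm _ _ h')
  have six : ∀ a b w x y z, T = {a, b, w, x, y, z} → w ≠ x → w ≠ y → w ≠ z → x ≠ y → x ≠ z →
      y ≠ z → ¬ R a b → ∃ a b c d e f, T = {a, b, c, d, e, f} ∧ ¬ R a b ∧ ¬ R c d ∧ ¬ R e f := by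
    intro a b w x y z hTe h1 h2 h3 h4 h5 h6 hab
    have hw : w ∈ T := by simp [hTe]
    have hx : x ∈ T := by simp [hTe]
    have hy : y ∈ T := by simp [hTe]
    have hz : z ∈ T := by simp [hTe]
    rcases four w hw x hx y hy z hz h1 h2 h3 h4 h5 h6 with h | h
    · exact ⟨a, b, w, x, y, z, hTe, hab, h.1, h.2⟩
    · exact ⟨a, b, w, y, x, z, by rw [hTe, Finset.insert_comm x y], hab, h.1, h.2⟩
  obtain ⟨a, T₁, ha, rfl, hT₁⟩ := Finset.card_eq_succ.1 hT
  obtain ⟨b, T₂, hb, rfl, hT₂⟩ := Finset.card_eq_succ.1 hT₁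
  obtain ⟨c, T₃, hc, rfl, hT₃⟩ := Finset.card_eq_succ.1 hT₂
  obtain ⟨d, e, f, hde, hdf, hef, rfl⟩ := Finset.card_eq_three.1 hT₃
  simp only [Finset.mem_insert, Finset.mem_singleton, not_or] at ha hb hc
  by_cases hab : R a b
  · have hac : ¬ R a c := hone a (by simp) b (by simp) c (by simp) ha.1 ha.2.1 hb.1 hab
    exact six a c b d e f (by rw [Finset.insert_comm b c]) hb.2.1 hb.2.2.1 hb.2.2.2 hde hdf hef hac
  · exact six a b c d e f rfl hc.1 hc.2.1 hc.2.2 hde hdf hef hab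

variable {K : Type*} [Field K]

/-- The equation of the line through `a` and `b`. -/
def lineForm (a b : Fin 2 → K) : MvPolynomial (Fin 2) K :=
  C (b 1 - a 1) * (X 0 - C (a 0)) - C (b 0 - a 0) * (X 1 - C (a 1))

theorem eval_lineForm (a b x : Fin 2 → K) :
    eval x (lineForm a b) = (b 1 - a 1) * (x 0 - a 0) - (b 0 - a 0) * (x 1 - a 1) := by
  simp [lineForm]

theorem totalDegree_lineForm (a b : Fin 2 → K) : (lineForm a b).totalDegree ≤ 1 := by
  have h : ∀ (c d : K) (i : Fin 2),
      (C c * (X i - C d) : MvPolynomial (Fin 2) K).totalDegree ≤ 1 := by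
    intro c d i
    refine (totalDegree_mul _ _).trans ?_
    rw [totalDegree_C, zero_add]
    exact (totalDegree_sub_C_le _ _).trans (totalDegree_X i).le
  exact (totalDegree_sub _ _).trans (max_le (h _ _ _) (h _ _ _))

theorem lineForm_ne_zero {a b : Fin 2 → K} (h : a ≠ b) : lineForm a b ≠ 0 := by
  intro h0
  apply h
  have h1 := eval_lineForm a b ![a 0 + 1, a 1]
  have h2 := eval_lineForm a b ![a 0, a 1 + 1]
  rw [h0, map_zero] at h1 h2
  simp at h1 h2
  ext i
  fin_cases i
  · change a 0 = b 0
    linear_combination -h2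
  · change a 1 = b 1
    linear_combination h1

theorem not_dvd_of_totalDegree_lt {f g : MvPolynomial (Fin 2) K} (hg : g ≠ 0)
    (h : g.totalDegree < f.totalDegree) : ¬ f ∣ g := by
  rintro ⟨r, rfl⟩
  have hf := left_ne_zero_of_mul hg
  have hr := right_ne_zero_of_mul hg
  rw [totalDegree_mul_of_isDomain hf hr] at h
  omega

/-- At most three points of an irreducible cubic lie on a line. -/
theorem not_four_collinear {f : MvPolynomial (Fin 2) K} (hf : Prime f) (hf3 : f.totalDegree = 3)
    {s t u v : Fin 2 → K} (hs : eval s f = 0) (ht : eval t f = 0) (hu : eval u f = 0)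
    (hv : eval v f = 0) (hst : s ≠ t) (hsu : s ≠ u) (hsv : s ≠ v) (htu : t ≠ u) (htv : t ≠ v)
    (huv : u ≠ v) (h1 : eval s (lineForm t u) = 0) : eval s (lineForm t v) ≠ 0 := by
  intro h2
  have h := bezout_plane hf (not_dvd_of_totalDegree_lt (lineForm_ne_zero hst)
    (by have := totalDegree_lineForm s t; omega)) (totalDegree_lineForm s t) {s, t, u, v}
    (by simp [hs, ht, hu, hv]) (by
      rw [eval_lineForm] at h1 h2
      simp only [Finset.mem_insert, Finset.mem_singleton]
      rintro x (rfl | rfl | rfl | rfl) <;> rw [eval_lineForm]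
      · ring
      · ring
      · linear_combination h1
      · linear_combination h2)
  rw [Finset.card_eq_of_equiv_fin (n := 4) (by
    exact Fintype.equivFinOfCardEq (by simp [hst, hsu, hsv, htu, htv, huv]))] at h
  omega

/-- A cubic through six of seven points of an irreducible cubic, avoiding the seventh one. -/
theorem exists_separating_cubic {f : MvPolynomial (Fin 2) K} (hf : Prime f)
    (hf3 : f.totalDegree = 3) {S : Finset (Fin 2 → K)} (hS : S.card = 7)
    (hSf : ∀ s ∈ S, eval s f = 0) {s : Fin 2 → K} (hs : s ∈ S) :
    ∃ g : MvPolynomial (Fin 2) K, g.totalDegree ≤ 3 ∧ eval s g ≠ 0 ∧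
      ∀ t ∈ S, t ≠ s → eval t g = 0 := by
  have hc : (S.erase s).card = 6 := by rw [Finset.card_erase_of_mem hs, hS]
  obtain ⟨a, b, c, d, e, r, hT, h1, h2, h3⟩ := exists_good_matching hc
    (R := fun a b => eval s (lineForm a b) = 0)
    (by
      intro a b h
      rw [eval_lineForm] at h ⊢
      linear_combination -h)
    (by
      intro a ha b hb c hc hab hac hbc h
      rw [Finset.mem_erase] at ha hb hc
      exact not_four_collinear hf hf3 (hSf s hs) (hSf a ha.2) (hSf b hb.2) (hSf c hc.2) ha.1.symm
        hb.1.symm hc.1.symm hab hac hbc h)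
  refine ⟨lineForm a b * lineForm c d * lineForm e r, ?_, ?_, ?_⟩
  · have g1 := totalDegree_mul (lineForm a b * lineForm c d) (lineForm e r)
    have g2 := totalDegree_mul (lineForm a b) (lineForm c d)
    have := totalDegree_lineForm a b
    have := totalDegree_lineForm c d
    have := totalDegree_lineForm e r
    omega
  · rw [map_mul, map_mul]
    exact mul_ne_zero (mul_ne_zero h1 h2) h3
  · intro t ht hts
    have : t ∈ S.erase s := Finset.mem_erase.2 ⟨hts, ht⟩
    rw [hT] at this
    simp only [Finset.mem_insert, Finset.mem_singleton] at this
    simp only [map_mul, eval_lineForm]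
    rcases this with rfl | rfl | rfl | rfl | rfl | rfl <;> ring

/-- Evaluation of the polynomials of degree at most three at the points of `S`. -/
def cubicEval (S : Finset (Fin 2 → K)) : restrictTotalDegree (Fin 2) K 3 →ₗ[K] (S → K) :=
  LinearMap.pi fun s => (aeval s.1 : MvPolynomial (Fin 2) K →ₐ[K] K).toLinearMap ∘ₗ
    (restrictTotalDegree (Fin 2) K 3).subtype

/-- The space of the polynomials of degree at most three which vanish on `S`. -/
abbrev cubicsThrough (S : Finset (Fin 2 → K)) : Submodule K (restrictTotalDegree (Fin 2) K 3) :=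
  LinearMap.ker (cubicEval S)

theorem mem_cubicsThrough {S : Finset (Fin 2 → K)} {g : restrictTotalDegree (Fin 2) K 3} :
    g ∈ cubicsThrough S ↔ ∀ s ∈ S, eval s g.1 = 0 := by
  rw [LinearMap.mem_ker, funext_iff]
  simp [cubicEval, aeval_eq_eval]

/-- Seven points of an irreducible cubic impose independent conditions on cubics. -/
theorem finrank_cubicsThrough {f : MvPolynomial (Fin 2) K} (hf : Prime f)
    (hf3 : f.totalDegree = 3) {S : Finset (Fin 2 → K)} (hS : S.card = 7)
    (hSf : ∀ s ∈ S, eval s f = 0) : Module.finrank K (cubicsThrough S) = 3 := by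
  have hdim : Module.finrank K (restrictTotalDegree (Fin 2) K 3) = 10 :=
    finrank_restrictTotalDegree 2 3
  have : FiniteDimensional K (restrictTotalDegree (Fin 2) K 3) :=
    FiniteDimensional.of_finrank_pos (by omega)
  have hsurj : LinearMap.range (cubicEval S) = ⊤ := by
    rw [LinearMap.range_eq_top]
    choose g hg1 hg2 hg3 using fun s : S => exists_separating_cubic hf hf3 hS hSf s.2
    intro v
    refine ⟨∑ s, (v s / eval s.1 (g s)) • ⟨g s, (mem_restrictTotalDegree _ _ _).2 (hg1 s)⟩, ?_⟩
    ext t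
    rw [map_sum, Finset.sum_apply, Finset.sum_eq_single t]
    · simp [cubicEval, aeval_eq_eval, hg2 t]
    · intro s _ hst
      have := hg3 s t.1 t.2 (fun h => hst (Subtype.ext h.symm))
      simp [cubicEval, aeval_eq_eval, this]
    · simp
  have h := LinearMap.finrank_range_add_finrank_ker (cubicEval S)
  rw [hsurj, finrank_top, hdim, Module.finrank_fintype_fun_eq_card, Fintype.card_coe, hS] at h
  change Module.finrank K (LinearMap.ker (cubicEval S)) = 3
  omega

end SevenPoints

/-! ### The net of cubics through seven points -/

section Net

variable {K : Type*} [Field K]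

/-- The evaluation at `x`, as a functional on the cubics through `S`. -/
def pointEval (S : Finset (Fin 2 → K)) (x : Fin 2 → K) : Module.Dual K (cubicsThrough S) :=
  (aeval x : MvPolynomial (Fin 2) K →ₐ[K] K).toLinearMap ∘ₗ
    (restrictTotalDegree (Fin 2) K 3).subtype ∘ₗ (cubicsThrough S).subtype

theorem pointEval_apply (S : Finset (Fin 2 → K)) (x : Fin 2 → K) (w : cubicsThrough S) :
    pointEval S x w = eval x w.1.1 := by
  simp [pointEval, aeval_eq_eval]

theorem finrank_le_finrank_ker_add_one {V : Type*} [AddCommGroup V] [Module K V]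
    [FiniteDimensional K V] (φ : V →ₗ[K] K) :
    Module.finrank K V ≤ Module.finrank K (LinearMap.ker φ) + 1 := by
  have h3 := LinearMap.finrank_range_add_finrank_ker φ
  have h4 := Submodule.finrank_le (LinearMap.range φ)
  rw [Module.finrank_self] at h4
  omega

/-- At most two further points of the cubic `w` have proportional evaluation functionals: a cubic
through `S`, independent of `w`, on which the functional `φ` vanishes, would meet `w` in too many
points. -/
theorem fiber_le_two {S : Finset (Fin 2 → K)} (hS : S.card = 7) (w : cubicsThrough S)
    (hf : Prime w.1.1) (hf3 : w.1.1.totalDegree = 3) {φ : Module.Dual K (cubicsThrough S)}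
    {Z : Finset (Fin 2 → K)} (hZS : Disjoint S Z) (hZ : ∀ x ∈ Z, eval x w.1.1 = 0)
    (hφ : ∀ x ∈ Z, ∃ c : K, pointEval S x = c • φ) : Z.card ≤ 2 := by
  have hSf := mem_cubicsThrough.1 w.2
  have hW := finrank_cubicsThrough hf hf3 hS hSf
  have : FiniteDimensional K (cubicsThrough S) := FiniteDimensional.of_finrank_pos (by omega)
  obtain ⟨g, hgφ, hgw⟩ : ∃ g ∈ LinearMap.ker φ, g ∉ Submodule.span K {w} := by
    by_contra hcon
    push Not at hcon
    have h1 := Submodule.finrank_mono (show LinearMap.ker φ ≤ Submodule.span K {w} from hcon)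
    have h2 := finrank_span_le_card (R := K) ({w} : Set (cubicsThrough S))
    simp only [Set.toFinset_singleton, Finset.card_singleton] at h2
    have h3 := finrank_le_finrank_ker_add_one (K := K) (V := cubicsThrough S) φ
    omega
  have hg3 : g.1.1.totalDegree ≤ 3 := (mem_restrictTotalDegree _ _ _).1 g.1.2
  have hdvd : ¬ w.1.1 ∣ g.1.1 := by
    rintro ⟨r, hr⟩
    apply hgw
    have hg0 : g.1.1 ≠ 0 := by
      intro h0
      apply hgw
      have : g = 0 := Subtype.ext (Subtype.ext h0)
      rw [this]
      exact Submodule.zero_mem _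
    rw [hr] at hg0 hg3
    rw [totalDegree_mul_of_isDomain (left_ne_zero_of_mul hg0) (right_ne_zero_of_mul hg0)] at hg3
    have hr0 := totalDegree_eq_zero_iff_eq_C.1 (show r.totalDegree = 0 by omega)
    refine Submodule.mem_span_singleton.2 ⟨coeff 0 r, Subtype.ext (Subtype.ext ?_)⟩
    rw [hr, hr0]
    simp [smul_eq_C_mul, mul_comm]
  have h := bezout_plane hf hdvd hg3 (S ∪ Z)
    (by
      intro t ht
      rcases Finset.mem_union.1 ht with ht | ht
      · exact hSf t ht
      · exact hZ t ht)
    (by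
      intro t ht
      rcases Finset.mem_union.1 ht with ht | ht
      · exact mem_cubicsThrough.1 g.2 t ht
      · obtain ⟨c, hc⟩ := hφ t ht
        rw [← pointEval_apply, hc, LinearMap.smul_apply, LinearMap.mem_ker.1 hgφ, smul_zero])
  rw [Finset.card_union_of_disjoint hZS, hS, hf3] at h
  omega

/-- The points of the dual projective plane given by the evaluations at the points of `P`. -/
def evalClasses (S P : Finset (Fin 2 → K)) : Finset (Projectivization K (Module.Dual K (cubicsThrough S))) :=
  (P.filter fun x => pointEval S x ≠ 0).attach.image fun x =>
    Projectivization.mk K (pointEval S x.1)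
      (by have h := x.2; rw [Finset.mem_filter] at h; exact h.2)

/-- Representatives of the members of `evalClasses`. -/
def evalReps (S P : Finset (Fin 2 → K)) : Finset (Module.Dual K (cubicsThrough S)) :=
  (evalClasses S P).image Projectivization.rep

theorem card_evalReps_le (S P : Finset (Fin 2 → K)) : (evalReps S P).card ≤ P.card := by
  unfold evalReps
  refine Finset.card_image_le.trans ?_
  unfold evalClasses
  refine Finset.card_image_le.trans ?_
  rw [Finset.card_attach]
  exact Finset.card_filter_le _ _

theorem pairwiseIndep_evalReps (S P : Finset (Fin 2 → K)) : PairwiseIndep K (evalReps S P) := by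
  intro x hx y hy hne
  obtain ⟨u, -, rfl⟩ := Finset.mem_image.1 hx
  obtain ⟨v, -, rfl⟩ := Finset.mem_image.1 hy
  have huv : u ≠ v := fun h => hne (by rw [h])
  have h := Projectivization.independent_iff.1 ((Projectivization.independent_pair_iff_ne u v).2 huv)
  convert h using 1
  ext i
  fin_cases i <;> rfl

theorem exists_rep {S P : Finset (Fin 2 → K)} {x : Fin 2 → K} (hx : x ∈ P)
    (h0 : pointEval S x ≠ 0) : ∃ q ∈ evalReps S P, ∃ c : K, c ≠ 0 ∧ pointEval S x = c • q := by
  refine ⟨(Projectivization.mk K (pointEval S x) h0).rep, ?_, ?_⟩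
  · refine Finset.mem_image_of_mem _ (Finset.mem_image.2
      ⟨⟨x, by rw [Finset.mem_filter]; exact ⟨hx, h0⟩⟩, Finset.mem_attach _ _, rfl⟩)
  · obtain ⟨a, ha⟩ := Projectivization.exists_smul_eq_mk_rep K (pointEval S x) h0
    refine ⟨(a⁻¹ : Kˣ), Units.ne_zero _, ?_⟩
    rw [← ha, ← Units.smul_def, inv_smul_smul]

/-- A cubic through `S` which contains many points of `P` is a rich line of the dual plane. -/
theorem rich_of_rich {S P : Finset (Fin 2 → K)} (hS : S.card = 7) (w : cubicsThrough S)
    (hf : Prime w.1.1) (hf3 : w.1.1.totalDegree = 3) {k : ℕ} (hk : 11 ≤ k)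
    (hP : k ≤ (P.filter fun x => eval x w.1.1 = 0).card) :
    (k - 6) / 2 ≤ ((evalReps S P).filter fun q => q w = 0).card := by
  set Z := (P.filter fun x => eval x w.1.1 = 0) \ S with hZ
  have hZc : k - 7 ≤ Z.card := by
    have : (P.filter fun x => eval x w.1.1 = 0).card - S.card ≤ Z.card := by
      convert Finset.le_card_sdiff S (P.filter fun x => eval x w.1.1 = 0)
    omega
  have hZm : ∀ x ∈ Z, x ∈ P ∧ eval x w.1.1 = 0 ∧ x ∉ S := by
    intro x hx
    rw [hZ, Finset.mem_sdiff, Finset.mem_filter] at hx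
    exact ⟨hx.1.1, hx.1.2, hx.2⟩
  have hfib : ∀ (φ : Module.Dual K (cubicsThrough S)) (Z' : Finset (Fin 2 → K)), Z' ⊆ Z →
      (∀ x ∈ Z', ∃ c : K, pointEval S x = c • φ) → Z'.card ≤ 2 := by
    intro φ Z' hZ' h
    refine fiber_le_two hS w hf hf3 ?_ (fun x hx => (hZm x (hZ' hx)).2.1) h
    exact Finset.disjoint_right.2 fun x hx => (hZm x (hZ' hx)).2.2
  set Qw := (evalReps S P).filter fun q => q w = 0 with hQw
  have hrep : ∀ x ∈ Z, pointEval S x ≠ 0 → ∃ q ∈ Qw, ∃ c : K, pointEval S x = c • q := by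
    intro x hx h0
    obtain ⟨q, hq, c, hc, hxc⟩ := exists_rep (hZm x hx).1 h0
    refine ⟨q, Finset.mem_filter.2 ⟨hq, ?_⟩, c, hxc⟩
    have h1 := (hZm x hx).2.1
    rw [← pointEval_apply, hxc, LinearMap.smul_apply, smul_eq_mul] at h1
    exact (mul_eq_zero.1 h1).resolve_left hc
  -- some point of `Z` is not a common zero of the cubics through `S`
  obtain ⟨q₀, hq₀⟩ : Qw.Nonempty := by
    by_contra hcon
    rw [Finset.not_nonempty_iff_eq_empty] at hcon
    have : Z.card ≤ 2 := hfib 0 Z le_rfl fun x hx => by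
      by_contra h
      have h0 : pointEval S x ≠ 0 := fun h0 => h ⟨0, by rw [h0, zero_smul]⟩
      obtain ⟨q, hq, -⟩ := hrep x hx h0
      rw [hcon] at hq
      simp at hq
    omega
  -- the common zeros are attached to the arbitrary representative `q₀`
  have hr : ∀ x, ∃ q, x ∈ Z → q ∈ Qw ∧ ∃ c : K, pointEval S x = c • q := by
    intro x
    by_cases hx : x ∈ Z
    · by_cases h0 : pointEval S x = 0
      · exact ⟨q₀, fun _ => ⟨hq₀, 0, by rw [h0, zero_smul]⟩⟩
      · obtain ⟨q, hq, h⟩ := hrep x hx h0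
        exact ⟨q, fun _ => ⟨hq, h⟩⟩
    · exact ⟨0, fun h => absurd h hx⟩
  choose r hr using hr
  have := Finset.card_le_mul_card_image_of_maps_to (f := r) (s := Z) (t := Qw)
    (fun x hx => (hr x hx).1) 2 (fun q _ => hfib q _ (Finset.filter_subset _ _) fun x hx => by
      rw [Finset.mem_filter] at hx
      rw [← hx.2]
      exact (hr x hx.1).2)
  omega

end Net

/-- The bound for rich cubics through seven points, free of real exponents. -/
theorem rich_cubics : ∃ C : ℕ, ∀ p : ℕ, p.Prime →
    ∀ (P : Finset (Fin 2 → ZMod p)) (𝒞 : Finset (Set (Fin 2 → ZMod p))), P.card ^ 13 ≤ p ^ 15 →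
    (∀ γ ∈ 𝒞, IsIrredCubic γ) → ∀ k : ℕ, 11 ≤ k → ∀ S ⊆ P, S.card = 7 →
    (richCurvesThrough P 𝒞 k S).card * k ≤ C * P.card ∨
      (richCurvesThrough P 𝒞 k S).card ^ 4 * k ^ 15 ≤ C * P.card ^ 11 := by
  obtain ⟨C, hC⟩ := rich_lines
  refine ⟨6 ^ 15 * C, fun p hp P 𝒞 hP h𝒞 k hk S hSP hS => ?_⟩
  have : Fact p.Prime := ⟨hp⟩
  set R := richCurvesThrough P 𝒞 k S with hR
  have hRm : ∀ γ ∈ R, IsIrredCubic γ ∧ k ≤ (P.filter fun q => q ∈ γ).card ∧ ∀ q ∈ S, q ∈ γ := by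
    intro γ hγ
    simp only [hR, richCurvesThrough, richCurves, Finset.mem_filter] at hγ
    exact ⟨h𝒞 γ hγ.1.1, hγ.1.2.1, hγ.2⟩
  rcases R.eq_empty_or_nonempty with h0 | ⟨γ₀, hγ₀⟩
  · left
    simp [h0]
  have hex : ∀ γ, ∃ w : cubicsThrough S, γ ∈ R →
      Prime w.1.1 ∧ w.1.1.totalDegree = 3 ∧ γ = zeroSet w.1.1 := by
    intro γ
    by_cases hγ : γ ∈ R
    · obtain ⟨⟨f, hf, hf3, hγf⟩, -, hS'⟩ := hRm γ hγ
      refine ⟨⟨⟨f, (mem_restrictTotalDegree _ _ _).2 hf3.le⟩, mem_cubicsThrough.2 fun s hs => ?_⟩,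
        fun _ => ⟨hf.prime, hf3, hγf⟩⟩
      have := hS' s hs
      rw [hγf] at this
      exact this
    · exact ⟨0, fun h => absurd h hγ⟩
  choose w hw using hex
  have hW := finrank_cubicsThrough (hw γ₀ hγ₀).1 (hw γ₀ hγ₀).2.1 hS (mem_cubicsThrough.1 (w γ₀).2)
  have hindep : ∀ γ ∈ R, ∀ γ' ∈ R, γ ≠ γ' → LinearIndependent (ZMod p) ![w γ, w γ'] := by
    intro γ hγ γ' hγ' hne
    obtain ⟨hf, -, hγf⟩ := hw γ hγ
    obtain ⟨hf', -, hγf'⟩ := hw γ' hγ'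
    rw [LinearIndependent.pair_iff]
    intro a b hab
    have hab' : a • (w γ).1.1 + b • (w γ').1.1 = 0 := congrArg (fun z => z.1.1) hab
    have hiff : a = 0 ↔ b = 0 := by
      constructor
      · rintro rfl
        rw [zero_smul, zero_add] at hab'
        exact (smul_eq_zero.1 hab').resolve_right hf'.ne_zero
      · rintro rfl
        rw [zero_smul, add_zero] at hab'
        exact (smul_eq_zero.1 hab').resolve_right hf.ne_zero
    by_cases ha : a = 0
    · exact ⟨ha, hiff.1 ha⟩
    · have hb : b ≠ 0 := fun h => ha (hiff.2 h)
      refine absurd ?_ hne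
      rw [hγf, hγf']
      ext x
      have hx := congrArg (eval x) hab'
      rw [map_add, smul_eval, smul_eval, map_zero] at hx
      change eval x (w γ).1.1 = 0 ↔ eval x (w γ').1.1 = 0
      constructor
      · intro h
        rw [h, mul_zero, zero_add] at hx
        exact (mul_eq_zero.1 hx).resolve_left hb
      · intro h
        rw [h, mul_zero, add_zero] at hx
        exact (mul_eq_zero.1 hx).resolve_left ha
  have hinj : Set.InjOn w R := by
    intro γ hγ γ' hγ' h
    by_contra hne
    have := LinearIndependent.pair_iff.1 (hindep γ hγ γ' hγ' hne) 1 (-1) (by rw [h]; module)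
    simp at this
  have hcard : (R.image w).card = R.card := Finset.card_image_of_injOn hinj
  have hΛ : PairwiseIndep (ZMod p) (R.image w) := by
    intro x hx y hy hne
    obtain ⟨γ, hγ, rfl⟩ := Finset.mem_image.1 hx
    obtain ⟨γ', hγ', rfl⟩ := Finset.mem_image.1 hy
    exact hindep γ hγ γ' hγ' fun h => hne (by rw [h])
  have hQP := card_evalReps_le S P
  have hmain := hC p (cubicsThrough S) hW (evalReps S P) (R.image w) (pairwiseIndep_evalReps S P) hΛ
    ((k - 6) / 2) (by omega)
    (by
      intro x hx
      obtain ⟨γ, hγ, rfl⟩ := Finset.mem_image.1 hx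
      obtain ⟨hf, hf3, hγf⟩ := hw γ hγ
      convert rich_of_rich hS (w γ) hf hf3 hk ?_
      have h1 := (hRm γ hγ).2.1
      rw [hγf] at h1
      convert h1
      exact Iff.rfl) ((Nat.pow_le_pow_left hQP 13).trans hP)
  rw [hcard] at hmain
  set k' := (k - 6) / 2 with hk'
  have hkk : k ≤ 6 * k' := by omega
  rcases hmain with h | h
  · left
    calc R.card * k ≤ R.card * (6 * k') := Nat.mul_le_mul_left _ hkk
      _ = 6 * (R.card * k') := by ring
      _ ≤ 6 ^ 15 * (C * P.card) :=
          Nat.mul_le_mul (by norm_num) (h.trans (Nat.mul_le_mul_left _ hQP))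
      _ = _ := by ring
  · right
    calc R.card ^ 4 * k ^ 15 ≤ R.card ^ 4 * (6 * k') ^ 15 := by gcongr
      _ = 6 ^ 15 * (R.card ^ 4 * k' ^ 15) := by ring
      _ ≤ 6 ^ 15 * (C * P.card ^ 11) :=
          Nat.mul_le_mul_left _ (h.trans (Nat.mul_le_mul_left _ (Nat.pow_le_pow_left hQP 11)))
      _ = _ := by ring

theorem rich_curves_through_seven_points_bound :
    ∃ c : ℝ, 0 < c ∧ ∀ p : ℕ, p.Prime →
      ∀ (P : Finset (Fin 2 → ZMod p)) (C : Finset (Set (Fin 2 → ZMod p))),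
        (P.card : ℝ) ≤ (p : ℝ) ^ ((15 : ℝ) / 13) →
        (∀ γ ∈ C, IsIrredCubic γ) →
        ∀ k : ℕ, 11 ≤ k →
          ∀ S ⊆ P, S.card = 7 →
            ((richCurvesThrough P C k S).card : ℝ) ≤
              c * ((P.card : ℝ) ^ ((11 : ℝ) / 4) / (k : ℝ) ^ ((15 : ℝ) / 4)
                + (P.card : ℝ) / (k : ℝ)) := by
  obtain ⟨D, hD⟩ := rich_cubics
  refine ⟨D + 1, by positivity, fun p hp P C hP hC k hk S hSP hS => ?_⟩
  have hP' : P.card ^ 13 ≤ p ^ 15 := by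
    have h1 : (P.card : ℝ) ^ 13 ≤ ((p : ℝ) ^ ((15 : ℝ) / 13)) ^ 13 :=
      pow_le_pow_left₀ (by positivity) hP 13
    rw [← Real.rpow_natCast ((p : ℝ) ^ ((15 : ℝ) / 13)) 13,
      ← Real.rpow_mul (by positivity)] at h1
    have h2 : (15 : ℝ) / 13 * ((13 : ℕ) : ℝ) = ((15 : ℕ) : ℝ) := by norm_num
    rw [h2, Real.rpow_natCast] at h1
    exact_mod_cast h1
  set N : ℝ := ((richCurvesThrough P C k S).card : ℝ) with hN
  have hk0 : (0 : ℝ) < k := by exact_mod_cast (by omega : 0 < k)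
  set a : ℝ := (P.card : ℝ) ^ ((11 : ℝ) / 4) with ha
  set b : ℝ := (k : ℝ) ^ ((15 : ℝ) / 4) with hb
  have hb0 : 0 < b := Real.rpow_pos_of_pos hk0 _
  have ha0 : 0 ≤ a := by positivity
  have ha4 : a ^ 4 = (P.card : ℝ) ^ 11 := by
    rw [ha, ← Real.rpow_natCast, ← Real.rpow_mul (by positivity), ← Real.rpow_natCast]
    norm_num
  have hb4 : b ^ 4 = (k : ℝ) ^ 15 := by
    rw [hb, ← Real.rpow_natCast, ← Real.rpow_mul (by positivity), ← Real.rpow_natCast]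
    norm_num
  have hx : 0 ≤ a / b := by positivity
  have hy : 0 ≤ (P.card : ℝ) / k := by positivity
  have hD0 : (0 : ℝ) ≤ D := by positivity
  rcases hD p hp P C hP' hC k hk S hSP hS with h | h
  · have h' : N * k ≤ D * P.card := by rw [hN]; exact_mod_cast h
    have h1 : N ≤ D * ((P.card : ℝ) / k) := by
      rw [← mul_div_assoc, le_div_iff₀ hk0]; exact h'
    nlinarith
  · have h' : N ^ 4 * (k : ℝ) ^ 15 ≤ D * (P.card : ℝ) ^ 11 := by rw [hN]; exact_mod_cast h
    rw [← ha4, ← hb4] at h'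
    have h1 : N ≤ (D + 1) * (a / b) := by
      refine (pow_le_pow_iff_left₀ (by positivity) (by positivity) (n := 4) (by norm_num)).1 ?_
      rw [mul_pow, div_pow, ← mul_div_assoc, le_div_iff₀ (by positivity)]
      refine h'.trans (mul_le_mul_of_nonneg_right ?_ (by positivity))
      -- `D ≤ D + 1 ≤ (D + 1) ^ 4`
      exact (by linarith : (D : ℝ) ≤ D + 1).trans (le_self_pow₀ (by linarith) (by norm_num))
    nlinarith
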